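/- (Statistical error of the stochastic gradient Euler–Maruyama integrator, strong order p = 1, q = 1.) Assume A1, A2', A3 and A4. Consider the stochastic gradient Euler–Maruyama chain (X̃_n,Ṽ_n) with time step h and damping rate γ, started from initial data with E(|X̃₀|+|Ṽ₀|+1)⁴ < ∞. There exists γ₀ > 0 such that whenever γ ≥ γ₀, there exist constants C, h₀ > 0 depending on γ such that for every 0 < h ≤ h₀ and every integer N ≥ 1: E[((1/N)·Σ_{n=0}^{N−1} f(X̃_n,Ṽ_n) − π(f))²] ≤ C·(h² + 1/(Nh))·E(|X̃₀|+|Ṽ₀|+1)⁴. -/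

import Mathlib

open MeasureTheory ProbabilityTheory RealInnerProductSpace
open scoped ENNReal

namespace SGEM

section Alg
variable {E : Type*} [NormedAddCommGroup E] [InnerProductSpace ℝ E]

/-- squared twisted norm -/
noncomputable def Nsq (c : ℝ) (z : E × E) : ℝ := ‖z.1‖ ^ 2 + ‖z.1 + c • z.2‖ ^ 2

/-- twisted norm -/
noncomputable def Nn (c : ℝ) (z : E × E) : ℝ := Real.sqrt (Nsq c z)

lemma Nsq_nonneg (c : ℝ) (z : E × E) : 0 ≤ Nsq c z := by unfold Nsq; positivity
lemma Nn_nonneg (c : ℝ) (z : E × E) : 0 ≤ Nn c z := Real.sqrt_nonneg _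
lemma Nn_sq (c : ℝ) (z : E × E) : Nn c z ^ 2 = Nsq c z := Real.sq_sqrt (Nsq_nonneg c z)

lemma fst_le_Nn (c : ℝ) (z : E × E) : ‖z.1‖ ≤ Nn c z := by
  apply Real.le_sqrt_of_sq_le
  unfold Nsq
  nlinarith [sq_nonneg ‖z.1 + c • z.2‖]

lemma snd_le_Nn (c : ℝ) (z : E × E) : ‖z.1 + c • z.2‖ ≤ Nn c z := by
  apply Real.le_sqrt_of_sq_le
  unfold Nsq
  nlinarith [sq_nonneg ‖z.1‖]

lemma Nn_zero_left (c : ℝ) (hc : 0 < c) (v : E) : Nn c ((0 : E), v) = c * ‖v‖ := by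
  unfold Nn Nsq
  simp only [norm_zero, zero_add, norm_smul, Real.norm_eq_abs, abs_of_pos hc]
  rw [show (0:ℝ)^2 + (c * ‖v‖)^2 = (c * ‖v‖)^2 by ring]
  exact Real.sqrt_sq (by positivity)

lemma norm_le_Nn (c : ℝ) (hc : 0 < c) (z : E × E) : ‖z‖ ≤ (1 + 2 / c) * Nn c z := by
  have h1 := fst_le_Nn c z
  have h2 := snd_le_Nn c z
  have h0 := Nn_nonneg c z
  have h3 : c * ‖z.2‖ ≤ 2 * Nn c z := by
    have : ‖c • z.2‖ = c * ‖z.2‖ := by rw [norm_smul, Real.norm_eq_abs, abs_of_pos hc]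
    rw [← this]
    have h4 : c • z.2 = (z.1 + c • z.2) - z.1 := by abel
    rw [h4]
    exact (norm_sub_le _ _).trans (by linarith)
  have h5 : ‖z.2‖ ≤ 2 / c * Nn c z := by
    rw [div_mul_eq_mul_div, le_div_iff₀ hc]; linarith
  have h6 : 0 ≤ 2 / c * Nn c z := by positivity
  rw [Prod.norm_def]
  refine max_le ?_ ?_ <;> nlinarith

lemma Nn_le_norm (c : ℝ) (hc : 0 < c) (z : E × E) : Nn c z ≤ (2 + c) * ‖z‖ := by
  have h1 : ‖z.1‖ ≤ ‖z‖ := norm_fst_le z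
  have h2 : ‖z.2‖ ≤ ‖z‖ := norm_snd_le z
  have h3 : ‖z.1 + c • z.2‖ ≤ (1 + c) * ‖z‖ := by
    refine (norm_add_le _ _).trans ?_
    rw [norm_smul, Real.norm_eq_abs, abs_of_pos hc]; nlinarith
  have h0 := norm_nonneg z
  apply Real.sqrt_le_iff.2
  refine ⟨by positivity, ?_⟩
  unfold Nsq
  have h4 := mul_self_le_mul_self (norm_nonneg _) h3
  have h5 := mul_self_le_mul_self (norm_nonneg _) h1
  have : 0 ≤ c * (‖z‖ * ‖z‖) := by positivity
  nlinarith

set_option maxHeartbeats 1000000 in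
/-- The basic algebraic contraction. -/
lemma contract_alg (γ m C₁ h : ℝ) (hγ : 0 < γ) (hm : 0 < m) (hC : 0 < C₁) (hh : 0 < h)
    (hγ2 : 32 * C₁ ^ 2 ≤ m * γ ^ 2) (h1 : γ * h ≤ 1 / 2) (h2 : 8 * h * C₁ ^ 2 ≤ m * γ)
    (hm2 : m ≤ γ ^ 2)
    (u p g0 : E) (hg1 : m * ‖u + h • p‖ ^ 2 ≤ ⟪u + h • p, g0⟫)
    (hg2 : ‖g0‖ ≤ C₁ * ‖u + h • p‖) :
    Nsq (2 / γ) (u + h • p, (1 - γ * h) • (p - h • g0)) ≤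
      (1 - (m / (16 * γ)) * h) * Nsq (2 / γ) (u, p) := by
  obtain ⟨c, hc⟩ : ∃ c, c = 2 / γ := ⟨_, rfl⟩
  rw [← hc]
  obtain ⟨q, hq⟩ : ∃ q, q = c • p := ⟨_, rfl⟩
  have hc0 : 0 < c := by rw [hc]; positivity
  have hcγ : c * γ = 2 := by rw [hc]; field_simp
  obtain ⟨τ, hτ⟩ : ∃ τ, τ = γ * h / 2 := ⟨_, rfl⟩
  have hτ0 : 0 < τ := by rw [hτ]; positivity
  have hτ1 : τ ≤ 1 / 4 := by rw [hτ]; linarith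
  have hp : h • p = τ • q := by
    rw [hq, smul_smul]; congr 1; rw [hτ, hc]; field_simp
  obtain ⟨u1, hu1⟩ : ∃ u1, u1 = u + h • p := ⟨_, rfl⟩
  rw [← hu1] at hg1 hg2 ⊢
  have hu1' : u1 = u + τ • q := by rw [hu1, hp]
  obtain ⟨w, hw⟩ : ∃ w, w = u1 + (1 - γ * h) • q := ⟨_, rfl⟩
  have e1 : u1 + c • (1 - γ * h) • (p - h • g0) = w - ((1 - γ * h) * h * c) • g0 := by
    rw [hw, hq]; module
  set η := 1 - γ * h with hη
  have hη1 : η ≤ 1 := by rw [hη]; nlinarith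
  have hη0 : 1 / 2 ≤ η := by rw [hη]; linarith
  have hητ : η = 1 - 2 * τ := by rw [hη, hτ]; ring
  unfold Nsq
  simp only
  rw [e1, ← hq, norm_sub_sq_real]
  have e2 : ‖u1‖ ^ 2 + ‖w‖ ^ 2 = ‖u‖ ^ 2 + ‖u + q‖ ^ 2 - 2 * τ * (1 - τ) * ‖q‖ ^ 2 := by
    have hw' : w = u + (1 - τ) • q := by rw [hw, hu1', hητ]; module
    rw [hw', hu1', norm_add_sq_real, norm_add_sq_real, norm_add_sq_real, inner_smul_right,
      inner_smul_right, norm_smul, norm_smul, mul_pow, mul_pow, Real.norm_eq_abs, Real.norm_eq_abs,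
      sq_abs, sq_abs]
    ring
  have e3 : ⟪w, (η * h * c) • g0⟫ = η * h * c * (⟪u1, g0⟫ + η * ⟪q, g0⟫) := by
    rw [hw, inner_smul_right, inner_add_left, inner_smul_left]; simp
  have e4 : ‖(η * h * c) • g0‖ = η * h * c * ‖g0‖ := by
    rw [norm_smul, Real.norm_eq_abs, abs_of_nonneg (by positivity)]
  rw [e3, e4]
  set a := ‖u1‖ with ha
  set Q := ‖q‖ with hQ
  have ha0 : 0 ≤ a := norm_nonneg _
  have hQ0 : 0 ≤ Q := norm_nonneg _
  have i1 : -(C₁ * Q * a) ≤ ⟪q, g0⟫ := by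
    have h5 := abs_real_inner_le_norm q g0
    have h3 := neg_abs_le ⟪q, g0⟫
    have h4 : ‖q‖ * ‖g0‖ ≤ Q * (C₁ * a) := by gcongr
    linarith only [h3, h4, h5]
  have i2 : (η * h * c * ‖g0‖) ^ 2 ≤ h ^ 2 * c ^ 2 * C₁ ^ 2 * a ^ 2 := by
    have : η * h * c * ‖g0‖ ≤ 1 * h * c * (C₁ * a) := by gcongr
    have h3 : 0 ≤ η * h * c * ‖g0‖ := by positivity
    calc _ ≤ (1 * h * c * (C₁ * a)) ^ 2 := by gcongr
      _ = _ := by ring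
  have i3 : η * h * c * (m * a ^ 2 - C₁ * Q * a) ≤ η * h * c * (⟪u1, g0⟫ + η * ⟪q, g0⟫) := by
    gcongr
    have h3 : η * -(C₁ * Q * a) ≤ η * ⟪q, g0⟫ := by gcongr
    have h4 : η * (C₁ * Q * a) ≤ 1 * (C₁ * Q * a) := by gcongr
    linarith only [h3, h4, hg1]
  have i4 : 1 / 2 * (h * c * (m * a ^ 2)) - h * c * (C₁ * Q * a) ≤
      η * h * c * (m * a ^ 2 - C₁ * Q * a) := by
    have h4 : η * (h * c * (C₁ * Q * a)) ≤ 1 * (h * c * (C₁ * Q * a)) := by gcongr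
    have h5 : 1 / 2 * (h * c * (m * a ^ 2)) ≤ η * (h * c * (m * a ^ 2)) := by gcongr
    linarith only [h4, h5]
  -- h c C1^2 ≤ m/4
  have i5 : h * c * C₁ ^ 2 ≤ m / 4 := by
    rw [hc]; rw [show h * (2 / γ) * C₁ ^ 2 = 2 * h * C₁ ^ 2 / γ by ring, div_le_iff₀ hγ]
    linarith
  have i6 : 4 * c * C₁ ^ 2 ≤ γ / 4 * m := by
    rw [hc, show 4 * (2 / γ) * C₁ ^ 2 = 8 * C₁ ^ 2 / γ by ring, div_le_iff₀ hγ]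
    linarith only [hγ2]
  have i7 : 2 * (C₁ * Q * a) * m ≤ m ^ 2 / 4 * a ^ 2 + 4 * C₁ ^ 2 * Q ^ 2 := by
    nlinarith only [sq_nonneg (m / 2 * a - 2 * C₁ * Q)]
  have i8 : 2 * (h * c * (C₁ * Q * a)) ≤ h * c * (m / 4) * a ^ 2 + h * (γ / 4) * Q ^ 2 := by
    have h3 : h * c * (2 * (C₁ * Q * a) * m) ≤ h * c * (m ^ 2 / 4 * a ^ 2 + 4 * C₁ ^ 2 * Q ^ 2) := by
      gcongr
    have h4 : h * Q ^ 2 * (4 * c * C₁ ^ 2) ≤ h * Q ^ 2 * (γ / 4 * m) := by gcongr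
    have h5 : m * (2 * (h * c * (C₁ * Q * a))) ≤
        m * (h * c * (m / 4) * a ^ 2 + h * (γ / 4) * Q ^ 2) := by linarith only [h3, h4]
    exact le_of_mul_le_mul_left h5 hm
  have i9 : h ^ 2 * c ^ 2 * C₁ ^ 2 * a ^ 2 ≤ h * c * (m / 4) * a ^ 2 := by
    have : h * c * a ^ 2 * (h * c * C₁ ^ 2) ≤ h * c * a ^ 2 * (m / 4) := by gcongr
    linarith only [this]
  have i10 : γ * h * (3 / 4) * Q ^ 2 ≤ 2 * τ * (1 - τ) * Q ^ 2 := by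
    have : γ * h = 2 * τ := by rw [hτ]; ring
    rw [this]
    have : 2 * τ * (3 / 4) ≤ 2 * τ * (1 - τ) := by gcongr; linarith
    gcongr
  -- total
  have tot : ‖u‖ ^ 2 + ‖u + q‖ ^ 2 - 2 * τ * (1 - τ) * Q ^ 2
      - 2 * (η * h * c * (⟪u1, g0⟫ + η * ⟪q, g0⟫)) + (η * h * c * ‖g0‖) ^ 2 ≤
      ‖u‖ ^ 2 + ‖u + q‖ ^ 2 - γ * h / 2 * Q ^ 2 - h * c * m / 2 * a ^ 2 := by
    linarith only [i2, i3, i4, i8, i9, i10]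
  have j1 : ‖u‖ ^ 2 ≤ 2 * a ^ 2 + 2 * (τ ^ 2 * Q ^ 2) := by
    have : u = u1 - τ • q := by rw [hu1']; abel
    have h3 : ‖u‖ ≤ a + τ * Q := by
      rw [this]; refine (norm_sub_le _ _).trans ?_
      rw [norm_smul, Real.norm_eq_abs, abs_of_pos hτ0]
    have h4 := mul_self_le_mul_self (norm_nonneg _) h3
    nlinarith only [h4, sq_nonneg (a - τ * Q)]
  have j2 : ‖u + q‖ ^ 2 ≤ 2 * ‖u‖ ^ 2 + 2 * Q ^ 2 := by
    have h3 := norm_add_le u q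
    have h4 := mul_self_le_mul_self (norm_nonneg _) h3
    nlinarith only [h4, sq_nonneg (‖u‖ - Q)]
  have j3 : τ ^ 2 * Q ^ 2 ≤ (1 / 4) ^ 2 * Q ^ 2 := by gcongr
  have j4 : m / (16 * γ) * (‖u‖ ^ 2 + ‖u + q‖ ^ 2) ≤ γ / 2 * Q ^ 2 + c * m / 2 * a ^ 2 := by
    have h3 : ‖u‖ ^ 2 + ‖u + q‖ ^ 2 ≤ 6 * a ^ 2 + 3 * Q ^ 2 := by
      have := sq_nonneg Q
      linarith only [j1, j2, j3, this]
    have h4 : m / (16 * γ) * (‖u‖ ^ 2 + ‖u + q‖ ^ 2) ≤ m / (16 * γ) * (6 * a ^ 2 + 3 * Q ^ 2) := by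
      gcongr
    refine h4.trans ?_
    rw [hc, div_mul_eq_mul_div, div_le_iff₀ (by positivity)]
    have : (γ / 2 * Q ^ 2 + 2 / γ * m / 2 * a ^ 2) * (16 * γ) = 8 * γ ^ 2 * Q ^ 2 + 16 * m * a ^ 2 := by
      field_simp; ring
    rw [this]
    have h5 : m * Q ^ 2 ≤ γ ^ 2 * Q ^ 2 := by gcongr
    have h6 : 0 ≤ m * a ^ 2 := by positivity
    have h7 : 0 ≤ γ ^ 2 * Q ^ 2 := by positivity
    clear * - h5 h6 h7
    nlinarith only [h5, h6, h7]
  have j5 := mul_le_mul_of_nonneg_left j4 hh.le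
  have e5 : a ^ 2 + (‖w‖ ^ 2 - 2 * (η * h * c * (⟪u1, g0⟫ + η * ⟪q, g0⟫)) + (η * h * c * ‖g0‖) ^ 2)
     = (‖u1‖ ^ 2 + ‖w‖ ^ 2) - 2 * (η * h * c * (⟪u1, g0⟫ + η * ⟪q, g0⟫)) + (η * h * c * ‖g0‖) ^ 2 := by
    rw [ha]; ring
  rw [e5, e2]
  linarith only [tot, j5]

lemma contract_Nn (γ m C₁ h : ℝ) (hγ : 0 < γ) (hm : 0 < m) (hC : 0 < C₁) (hh : 0 < h)
    (hγ2 : 32 * C₁ ^ 2 ≤ m * γ ^ 2) (h1 : γ * h ≤ 1 / 2) (h2 : 8 * h * C₁ ^ 2 ≤ m * γ)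
    (hm2 : m ≤ γ ^ 2)
    (u p g0 : E) (hg1 : m * ‖u + h • p‖ ^ 2 ≤ ⟪u + h • p, g0⟫)
    (hg2 : ‖g0‖ ≤ C₁ * ‖u + h • p‖) :
    Nn (2 / γ) (u + h • p, (1 - γ * h) • (p - h • g0)) ≤
      (1 - (m / (32 * γ)) * h) * Nn (2 / γ) (u, p) := by
  have key := contract_alg γ m C₁ h hγ hm hC hh hγ2 h1 h2 hm2 u p g0 hg1 hg2
  have hk : m / (32 * γ) * h ≤ 1 := by
    rw [div_mul_eq_mul_div, div_le_iff₀ (by positivity)]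
    nlinarith
  apply Real.sqrt_le_iff.2
  refine ⟨mul_nonneg (by linarith) (Nn_nonneg _ _), ?_⟩
  rw [mul_pow, Nn_sq]
  refine key.trans ?_
  gcongr
  · exact Nsq_nonneg _ _
  · have : m / (16 * γ) = 2 * (m / (32 * γ)) := by field_simp; norm_num
    rw [this]
    nlinarith [sq_nonneg (m / (32 * γ) * h)]

end Alg
end SGEM


open MeasureTheory ProbabilityTheory RealInnerProductSpace
open scoped ENNReal

namespace SGEM

section RegSec
variable {E : Type*} [NormedAddCommGroup E] [InnerProductSpace ℝ E]

/-- the functions with bounded and Lipschitz derivative, in the twisted norm -/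
structure Reg (c L M : ℝ) (g : E × E → ℝ) : Prop where
  diff : Differentiable ℝ g
  bd : ∀ z k, |fderiv ℝ g z k| ≤ L * Nn c k
  lip : ∀ z z' k, |fderiv ℝ g z k - fderiv ℝ g z' k| ≤ M * Nn c (z - z') * Nn c k

/-- the properties of the gradient that are used -/
structure GradHyp (m C₁ : ℝ) (G : E → E) (DG : E → E →L[ℝ] E) : Prop where
  der : ∀ x, HasFDerivAt G (DG x) x
  bd : ∀ x, ‖DG x‖ ≤ C₁
  coer : ∀ x k, m * ‖k‖ ^ 2 ≤ ⟪k, DG x k⟫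
  lip : ∀ x y, ‖DG x - DG y‖ ≤ C₁ * ‖x - y‖
  growth : ∀ x, ‖G x‖ ≤ C₁ * (‖x‖ + 1)

/-- parameter restrictions -/
structure Par (γ m C₁ h : ℝ) : Prop where
  γ0 : 0 < γ
  m0 : 0 < m
  C0 : 0 < C₁
  h0 : 0 < h
  hγ2 : 32 * C₁ ^ 2 ≤ m * γ ^ 2
  h1 : γ * h ≤ 1 / 2
  h2 : 8 * h * C₁ ^ 2 ≤ m * γ
  hm2 : m ≤ γ ^ 2
  h3 : h ≤ 1

/-- drift-kick map followed by the damping -/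
noncomputable def Smap (γ h : ℝ) (G : E → E) (z : E × E) : E × E :=
  (z.1 + h • z.2, (1 - γ * h) • (z.2 - h • G (z.1 + h • z.2)))

/-- derivative of `Smap` -/
noncomputable def DS (γ h : ℝ) (DG : E → E →L[ℝ] E) (z : E × E) : E × E →L[ℝ] E × E :=
  (ContinuousLinearMap.fst ℝ E E + h • ContinuousLinearMap.snd ℝ E E).prod
    ((1 - γ * h) • (ContinuousLinearMap.snd ℝ E E -
      h • (DG (z.1 + h • z.2)).comp
        (ContinuousLinearMap.fst ℝ E E + h • ContinuousLinearMap.snd ℝ E E)))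

lemma DS_apply (γ h : ℝ) (DG : E → E →L[ℝ] E) (z k : E × E) :
    DS γ h DG z k = (k.1 + h • k.2, (1 - γ * h) • (k.2 - h • DG (z.1 + h • z.2) (k.1 + h • k.2))) := by
  simp [DS]

lemma hasFDerivAt_Smap {m C₁ γ h : ℝ} {G : E → E} {DG : E → E →L[ℝ] E} (hG : GradHyp m C₁ G DG)
    (z : E × E) : HasFDerivAt (Smap γ h G) (DS γ h DG z) z := by
  have h1 : HasFDerivAt (fun z : E × E => z.1 + h • z.2)
      (ContinuousLinearMap.fst ℝ E E + h • ContinuousLinearMap.snd ℝ E E) z :=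
    (ContinuousLinearMap.fst ℝ E E + h • ContinuousLinearMap.snd ℝ E E).hasFDerivAt
  have h2 : HasFDerivAt (fun z : E × E => z.2) (ContinuousLinearMap.snd ℝ E E) z :=
    hasFDerivAt_snd
  have h3 := (hG.der (z.1 + h • z.2)).comp z h1
  exact h1.prodMk ((h2.sub (h3.const_smul h)).const_smul (1 - γ * h))

lemma GradHyp.lipG {m C₁ : ℝ} {G : E → E} {DG : E → E →L[ℝ] E} (hG : GradHyp m C₁ G DG) (x y : E) :
    ‖G x - G y‖ ≤ C₁ * ‖x - y‖ := by
  exact Convex.norm_image_sub_le_of_norm_hasFDerivWithin_le (s := Set.univ) (f := G) (f' := DG)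
    (fun x _ => (hG.der x).hasFDerivWithinAt) (fun x _ => hG.bd x) convex_univ trivial trivial

lemma GradHyp.mono {m C₁ : ℝ} {G : E → E} {DG : E → E →L[ℝ] E} (hG : GradHyp m C₁ G DG) (x y : E) :
    m * ‖x - y‖ ^ 2 ≤ ⟪x - y, G x - G y⟫ := by
  set k := x - y with hk
  have hd : ∀ t : ℝ, HasDerivAt (fun t : ℝ => ⟪k, G (y + t • k)⟫) ⟪k, DG (y + t • k) k⟫ t := by
    intro t
    have h1 : HasDerivAt (fun t : ℝ => y + t • k) k t := by
      simpa using ((hasDerivAt_id t).smul_const k).const_add y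
    have h2 := (hG.der (y + t • k)).comp_hasDerivAt t h1
    have := (hasDerivAt_const t k).inner ℝ h2
    simpa using this
  obtain ⟨t, -, ht⟩ := exists_hasDerivAt_eq_slope (fun t : ℝ => ⟪k, G (y + t • k)⟫)
    (fun t => ⟪k, DG (y + t • k) k⟫) (zero_lt_one)
    (fun t _ => (hd t).continuousAt.continuousWithinAt) (fun t _ => hd t)
  have h3 := hG.coer (y + t • k) k
  rw [ht] at h3
  simp only [one_smul, zero_smul, sub_zero, div_one, add_zero, ← inner_sub_right] at h3
  rwa [show y + k = x by rw [hk]; abel] at h3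

variable {γ m C₁ h : ℝ} {G : E → E} {DG : E → E →L[ℝ] E}

/-- the contraction rate -/
noncomputable def rate (γ m h : ℝ) : ℝ := 1 - (m / (32 * γ)) * h

lemma Par.rate_le_one (hp : Par γ m C₁ h) : rate γ m h < 1 := by
  have := hp.γ0; have := hp.m0; have := hp.h0
  unfold rate
  have : 0 < m / (32 * γ) * h := by positivity
  linarith

lemma Par.half_le_rate (hp : Par γ m C₁ h) : 1 / 2 ≤ rate γ m h := by
  have h1 := hp.γ0; have h2 := hp.m0; have h3 := hp.h0; have h4 := hp.hm2; have h5 := hp.h1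
  unfold rate
  have : m / (32 * γ) * h ≤ 1 / 2 := by
    rw [div_mul_eq_mul_div, div_le_iff₀ (by positivity)]
    nlinarith
  linarith

lemma Par.rate_nonneg (hp : Par γ m C₁ h) : 0 ≤ rate γ m h := by linarith [hp.half_le_rate]

lemma Nn_DS (hp : Par γ m C₁ h) (hG : GradHyp m C₁ G DG) (z k : E × E) :
    Nn (2 / γ) (DS γ h DG z k) ≤ rate γ m h * Nn (2 / γ) k := by
  rw [DS_apply]
  refine contract_Nn γ m C₁ h hp.γ0 hp.m0 hp.C0 hp.h0 hp.hγ2 hp.h1 hp.h2 hp.hm2 k.1 k.2 _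
    (hG.coer _ _) ?_
  exact (ContinuousLinearMap.le_opNorm _ _).trans
    (mul_le_mul_of_nonneg_right (hG.bd _) (norm_nonneg _))

lemma Nn_Smap_sub (hp : Par γ m C₁ h) (hG : GradHyp m C₁ G DG) (z z' : E × E) :
    Nn (2 / γ) (Smap γ h G z - Smap γ h G z') ≤ rate γ m h * Nn (2 / γ) (z - z') := by
  have e : (z.1 + h • z.2) - (z'.1 + h • z'.2) = (z.1 - z'.1) + h • (z.2 - z'.2) := by module
  have h1 := hG.mono (z.1 + h • z.2) (z'.1 + h • z'.2)
  have h2 := hG.lipG (z.1 + h • z.2) (z'.1 + h • z'.2)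
  rw [e] at h1 h2
  have := contract_Nn γ m C₁ h hp.γ0 hp.m0 hp.C0 hp.h0 hp.hγ2 hp.h1 hp.h2 hp.hm2
    (z.1 - z'.1) (z.2 - z'.2) _ h1 h2
  have e2 : Smap γ h G z - Smap γ h G z' = (z.1 - z'.1 + h • (z.2 - z'.2),
      (1 - γ * h) • (z.2 - z'.2 - h • (G (z.1 + h • z.2) - G (z'.1 + h • z'.2)))) := by
    ext1
    · simp only [Smap, Prod.fst_sub]; module
    · simp only [Smap, Prod.snd_sub]; module
  rw [e2]
  exact this

lemma Nn_DS_sub (hp : Par γ m C₁ h) (hG : GradHyp m C₁ G DG) (z z' k : E × E) :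
    Nn (2 / γ) (DS γ h DG z k - DS γ h DG z' k) ≤
      2 / γ * C₁ * h * (Nn (2 / γ) (z - z') * Nn (2 / γ) k) := by
  have hγ := hp.γ0; have hh := hp.h0; have hC := hp.C0
  set x1 := z.1 + h • z.2
  set x1' := z'.1 + h • z'.2
  set k1 := k.1 + h • k.2
  have e : DS γ h DG z k - DS γ h DG z' k = (0, -((1 - γ * h) * h) • ((DG x1 - DG x1') k1)) := by
    rw [DS_apply, DS_apply]
    ext1
    · simp
    · simp only [Prod.snd_sub, sub_apply]; module
  have hr0 := hp.rate_nonneg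
  have hr1 := hp.rate_le_one.le
  have b1 : ‖x1 - x1'‖ ≤ Nn (2 / γ) (z - z') := by
    have := (fst_le_Nn (2 / γ) (Smap γ h G z - Smap γ h G z')).trans (Nn_Smap_sub hp hG z z')
    refine le_trans this ?_
    exact mul_le_of_le_one_left (Nn_nonneg _ _) hr1
  have b2 : ‖k1‖ ≤ Nn (2 / γ) k := by
    have := (fst_le_Nn (2 / γ) (DS γ h DG z k)).trans (Nn_DS hp hG z k)
    rw [DS_apply] at this
    refine le_trans this ?_
    exact mul_le_of_le_one_left (Nn_nonneg _ _) hr1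
  have h1 := hp.h1
  rw [e, Nn_zero_left _ (by positivity), norm_smul, norm_neg, Real.norm_eq_abs,
    abs_of_nonneg (mul_nonneg (by linarith) hh.le)]
  have b3 : ‖(DG x1 - DG x1') k1‖ ≤ C₁ * Nn (2 / γ) (z - z') * Nn (2 / γ) k := by
    refine (ContinuousLinearMap.le_opNorm _ _).trans ?_
    refine mul_le_mul ((hG.lip x1 x1').trans ?_) b2 (norm_nonneg _)
      (mul_nonneg hC.le (Nn_nonneg _ _))
    gcongr
  have b4 : (1 - γ * h) * h ≤ 1 * h := by
    gcongr
    nlinarith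
  calc 2 / γ * ((1 - γ * h) * h * ‖(DG x1 - DG x1') k1‖)
      ≤ 2 / γ * (1 * h * (C₁ * Nn (2 / γ) (z - z') * Nn (2 / γ) k)) := by gcongr
    _ = _ := by ring

/-! ### Regular functions -/

variable {c L M : ℝ} {g : E × E → ℝ}

lemma Reg.norm_fderiv_le (hc : 0 < c) (hL : 0 ≤ L) (hg : Reg c L M g) (z : E × E) :
    ‖fderiv ℝ g z‖ ≤ L * (2 + c) := by
  refine ContinuousLinearMap.opNorm_le_bound _ (by positivity) fun k => ?_
  rw [Real.norm_eq_abs]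
  refine (hg.bd z k).trans ?_
  rw [mul_assoc]
  gcongr
  exact Nn_le_norm c hc k

lemma Reg.norm_fderiv_sub_le (hc : 0 < c) (hM : 0 ≤ M) (hg : Reg c L M g) (z z' : E × E) :
    ‖fderiv ℝ g z - fderiv ℝ g z'‖ ≤ M * (2 + c) ^ 2 * ‖z - z'‖ := by
  refine ContinuousLinearMap.opNorm_le_bound _ (by positivity) fun k => ?_
  rw [Real.norm_eq_abs, sub_apply]
  refine (hg.lip z z' k).trans ?_
  have h1 := Nn_le_norm c hc k
  have h2 := Nn_le_norm c hc (z - z')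
  have := Nn_nonneg c k
  calc _ ≤ M * ((2 + c) * ‖z - z'‖) * ((2 + c) * ‖k‖) := by gcongr
    _ = _ := by ring

lemma Reg.continuous_fderiv (hc : 0 < c) (hM : 0 ≤ M) (hg : Reg c L M g) :
    Continuous (fderiv ℝ g) := by
  have : LipschitzWith (Real.toNNReal (M * (2 + c) ^ 2)) (fderiv ℝ g) := by
    apply LipschitzWith.of_dist_le_mul
    intro x y
    rw [dist_eq_norm, dist_eq_norm, Real.coe_toNNReal _ (by positivity)]
    exact hg.norm_fderiv_sub_le hc hM x y
  exact this.continuous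

lemma Reg.lipschitz (hc : 0 < c) (hL : 0 ≤ L) (hg : Reg c L M g) (z z' : E × E) :
    |g z - g z'| ≤ L * (2 + c) * ‖z - z'‖ := by
  have := Convex.norm_image_sub_le_of_norm_fderiv_le (s := Set.univ) (f := g) (𝕜 := ℝ)
    (C := L * (2 + c)) (fun x _ => hg.diff x) (fun x _ => hg.norm_fderiv_le hc hL x)
    convex_univ (x := z') (y := z) trivial trivial
  simpa using this

lemma Reg.weaken (hg : Reg c L M g) {L' M' : ℝ} (h1 : L ≤ L') (h2 : M ≤ M') : Reg c L' M' g where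
  diff := hg.diff
  bd z k := (hg.bd z k).trans (mul_le_mul_of_nonneg_right h1 (Nn_nonneg _ _))
  lip z z' k := (hg.lip z z' k).trans (mul_le_mul_of_nonneg_right
    (mul_le_mul_of_nonneg_right h2 (Nn_nonneg _ _)) (Nn_nonneg _ _))

lemma Reg.zero : Reg c 0 0 (fun _ : E × E => (0:ℝ)) where
  diff := differentiable_const _
  bd z k := by simp
  lip z z' k := by simp

lemma Reg.add_smul {L' M' a : ℝ} {g' : E × E → ℝ} (ha : 0 ≤ a) (hg : Reg c L M g)
    (hg' : Reg c L' M' g') : Reg c (L + a * L') (M + a * M') (fun z => g z + a * g' z) := by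
  have hd : ∀ z, fderiv ℝ (fun z => g z + a * g' z) z = fderiv ℝ g z + a • fderiv ℝ g' z := by
    intro z
    exact ((hg.diff z).hasFDerivAt.add ((hg'.diff z).hasFDerivAt.const_mul a)).fderiv
  refine ⟨?_, ?_, ?_⟩
  · exact hg.diff.add (hg'.diff.const_mul a)
  · intro z k
    rw [hd]
    simp only [add_apply, smul_apply, smul_eq_mul]
    refine (abs_add_le _ _).trans ?_
    rw [abs_mul, abs_of_nonneg ha]
    have := mul_le_mul_of_nonneg_left (hg'.bd z k) ha
    linarith [hg.bd z k]
  · intro z z' k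
    rw [hd, hd]
    simp only [add_apply, smul_apply, smul_eq_mul]
    have h1 := mul_le_mul_of_nonneg_left (hg'.lip z z' k) ha
    rw [← abs_of_nonneg ha, ← abs_mul, abs_of_nonneg ha] at h1
    have h2 := hg.lip z z' k
    have e : fderiv ℝ g z k + a * fderiv ℝ g' z k - (fderiv ℝ g z' k + a * fderiv ℝ g' z' k) =
      (fderiv ℝ g z k - fderiv ℝ g z' k) + a * (fderiv ℝ g' z k - fderiv ℝ g' z' k) := by ring
    rw [e]
    refine (abs_add_le _ _).trans ?_
    linarith

end RegSec

section QSec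
variable {E : Type*} [NormedAddCommGroup E] [InnerProductSpace ℝ E] [FiniteDimensional ℝ E]
  [MeasurableSpace E] [BorelSpace E]

/-- moment hypotheses on the noise -/
structure NuHyp (ν : Measure E) : Prop where
  prob : IsProbabilityMeasure ν
  mom4 : Integrable (fun ξ : E => ‖ξ‖ ^ 4) ν
  mean : ∫ ξ, ξ ∂ν = 0

lemma NuHyp.mom2 {ν : Measure E} (hν : NuHyp ν) : Integrable (fun ξ : E => ‖ξ‖ ^ 2) ν := by
  have := hν.prob
  refine Integrable.mono' ((integrable_const (1:ℝ)).add hν.mom4) (by fun_prop) ?_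
  refine Filter.Eventually.of_forall fun ξ => ?_
  simp only [Pi.add_apply, norm_pow, norm_norm]
  nlinarith [sq_nonneg (‖ξ‖ ^ 2 - 1), sq_nonneg (‖ξ‖ ^ 2)]

lemma NuHyp.mom1 {ν : Measure E} (hν : NuHyp ν) : Integrable (fun ξ : E => ‖ξ‖) ν := by
  have := hν.prob
  refine Integrable.mono' ((integrable_const (1:ℝ)).add hν.mom2) (by fun_prop) ?_
  refine Filter.Eventually.of_forall fun ξ => ?_
  simp only [Pi.add_apply, norm_norm]
  nlinarith [sq_nonneg (‖ξ‖ - 1), sq_nonneg (‖ξ‖)]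

lemma NuHyp.mom1' {ν : Measure E} (hν : NuHyp ν) : Integrable (fun ξ : E => ξ) ν :=
  (integrable_norm_iff (by fun_prop)).1 hν.mom1

/-- the reference kernel acting on functions -/
noncomputable def Qop (ν : Measure E) (γ h σ : ℝ) (G : E → E) (g : E × E → ℝ) (z : E × E) : ℝ :=
  ∫ ξ, g (Smap γ h G z + (0, σ • ξ)) ∂ν

lemma integrable_lip {ν : Measure E} (hν : NuHyp ν) {g : E × E → ℝ} {K : ℝ}
    (hgc : Continuous g) (hg : ∀ z z', |g z - g z'| ≤ K * ‖z - z'‖) (y : E × E) (σ : ℝ) :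
    Integrable (fun ξ : E => g (y + (0, σ • ξ))) ν := by
  have := hν.prob
  refine Integrable.mono' ((integrable_const (|g y|)).add (hν.mom1.const_mul (K * |σ|))) ?_ ?_
  · exact (by fun_prop : Continuous (fun ξ : E => g (y + (0, σ • ξ)))).aestronglyMeasurable
  · refine Filter.Eventually.of_forall fun ξ => ?_
    have h1 := hg (y + (0, σ • ξ)) y
    rw [add_sub_cancel_left] at h1
    have h2 : ‖((0 : E), σ • ξ)‖ = |σ| * ‖ξ‖ := by
      rw [Prod.norm_def]; simp [norm_smul]; positivity
    rw [h2] at h1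
    rw [Real.norm_eq_abs]
    have h3 := abs_add_le (g (y + (0, σ • ξ)) - g y) (g y)
    simp only [sub_add_cancel] at h3
    simp only [Pi.add_apply]
    linarith

variable {γ m C₁ h σ : ℝ} {G : E → E} {DG : E → E →L[ℝ] E} {L M : ℝ} {g : E × E → ℝ}

lemma generic_hasFDerivAt {W : Type*} [NormedAddCommGroup W] [NormedSpace ℝ W]
    {α : Type*} [MeasurableSpace α] [TopologicalSpace α] [OpensMeasurableSpace α]
    [SecondCountableTopology α]
    (ν : Measure α) [IsProbabilityMeasure ν] (g : W → ℝ) (S : W → W) (DS : W → W →L[ℝ] W)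
    (n : α → W) (hn : Continuous n) (hS : ∀ z, HasFDerivAt S (DS z) z) (hg : Differentiable ℝ g)
    (hgc : Continuous (fderiv ℝ g)) (B : ℝ)
    (hB : ∀ z y, ‖(fderiv ℝ g y).comp (DS z)‖ ≤ B)
    (hint : ∀ z, Integrable (fun ξ => g (S z + n ξ)) ν) (z : W) :
    (∀ k, Integrable (fun ξ => fderiv ℝ g (S z + n ξ) (DS z k)) ν) ∧
    ∃ D : W →L[ℝ] ℝ, HasFDerivAt (fun z => ∫ ξ, g (S z + n ξ) ∂ν) D z ∧
      ∀ k, D k = ∫ ξ, fderiv ℝ g (S z + n ξ) (DS z k) ∂ν := by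
  have hmeas : ∀ z, AEStronglyMeasurable
      (fun ξ => (fderiv ℝ g (S z + n ξ)).comp (DS z)) ν := by
    intro z
    have h1 : Continuous (fun ξ => fderiv ℝ g (S z + n ξ)) := hgc.comp (by fun_prop)
    exact (h1.clm_comp continuous_const).aestronglyMeasurable
  have hI : Integrable (fun ξ => (fderiv ℝ g (S z + n ξ)).comp (DS z)) ν :=
    Integrable.mono' (integrable_const B) (hmeas z) (Filter.Eventually.of_forall fun ξ => hB z _)
  refine ⟨fun k => hI.apply_continuousLinearMap k,
    ∫ ξ, (fderiv ℝ g (S z + n ξ)).comp (DS z) ∂ν, ?_, fun k => ?_⟩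
  · refine hasFDerivAt_integral_of_dominated_of_fderiv_le (s := Set.univ)
      (F' := fun z ξ => (fderiv ℝ g (S z + n ξ)).comp (DS z)) (bound := fun _ => B) Filter.univ_mem
      (Filter.Eventually.of_forall fun z => (hint z).aestronglyMeasurable) (hint z) (hmeas z)
      (Filter.Eventually.of_forall fun ξ z _ => hB z _) (integrable_const _) ?_
    refine Filter.Eventually.of_forall fun ξ z _ => ?_
    have h1 : HasFDerivAt (fun z => S z + n ξ) (DS z) z := (hS z).add_const _
    exact (hg _).hasFDerivAt.comp z h1
  · rw [ContinuousLinearMap.integral_apply hI]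
    rfl

lemma Reg.hasFDerivAt_Qop {ν : Measure E} (hν : NuHyp ν) (hp : Par γ m C₁ h)
    (hG : GradHyp m C₁ G DG) (hL : 0 ≤ L) (hM : 0 ≤ M) (hg : Reg (2 / γ) L M g) (z : E × E) :
    (∀ k, Integrable (fun ξ => fderiv ℝ g (Smap γ h G z + (0, σ • ξ)) (DS γ h DG z k)) ν) ∧
    ∃ D : E × E →L[ℝ] ℝ, HasFDerivAt (Qop ν γ h σ G g) D z ∧
      ∀ k, D k = ∫ ξ, fderiv ℝ g (Smap γ h G z + (0, σ • ξ)) (DS γ h DG z k) ∂ν := by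
  have := hν.prob
  have hγ := hp.γ0
  have hc : 0 < 2 / γ := by positivity
  refine generic_hasFDerivAt ν g (Smap γ h G) (DS γ h DG) (fun ξ => ((0:E), σ • ξ)) (by fun_prop)
    (fun z => hasFDerivAt_Smap hG z) hg.diff (hg.continuous_fderiv hc hM) (L * (2 + 2 / γ)) ?_ ?_ z
  · intro z y
    refine ContinuousLinearMap.opNorm_le_bound _ (by positivity) fun k => ?_
    rw [Real.norm_eq_abs, ContinuousLinearMap.comp_apply]
    refine (hg.bd _ _).trans ?_
    rw [mul_assoc]
    gcongr
    refine (Nn_DS hp hG z k).trans ?_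
    refine le_trans ?_ (Nn_le_norm _ hc k)
    exact mul_le_of_le_one_left (Nn_nonneg _ _) hp.rate_le_one.le
  · intro z
    exact integrable_lip hν hg.diff.continuous (hg.lipschitz hc hL) _ σ

/-- propagation of regularity under the reference kernel -/
lemma Reg.Qop {ν : Measure E} (hν : NuHyp ν) (hp : Par γ m C₁ h)
    (hG : GradHyp m C₁ G DG) (hL : 0 ≤ L) (hM : 0 ≤ M) (hg : Reg (2 / γ) L M g) :
    Reg (2 / γ) (rate γ m h * L) (rate γ m h ^ 2 * M + 2 / γ * C₁ * h * L)
      (Qop ν γ h σ G g) := by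
  have := hν.prob
  have hr := hp.rate_nonneg
  have hda : ∀ z k, fderiv ℝ (SGEM.Qop ν γ h σ G g) z k =
      ∫ ξ, fderiv ℝ g (Smap γ h G z + (0, σ • ξ)) (DS γ h DG z k) ∂ν := by
    intro z k
    obtain ⟨D, hD, hDk⟩ := (hg.hasFDerivAt_Qop (σ := σ) hν hp hG hL hM z).2
    rw [hD.fderiv, hDk]
  have hint : ∀ z k, Integrable
      (fun ξ => fderiv ℝ g (Smap γ h G z + (0, σ • ξ)) (DS γ h DG z k)) ν :=
    fun z k => (hg.hasFDerivAt_Qop (σ := σ) hν hp hG hL hM z).1 k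
  refine ⟨fun z => (hg.hasFDerivAt_Qop hν hp hG hL hM z).2.choose_spec.1.differentiableAt, ?_, ?_⟩
  · intro z k
    rw [hda, ← Real.norm_eq_abs]
    have h1 := norm_integral_le_of_norm_le_const (μ := ν) (C := rate γ m h * L * Nn (2 / γ) k)
      (f := fun ξ => fderiv ℝ g (Smap γ h G z + (0, σ • ξ)) (DS γ h DG z k)) ?_
    · simpa using h1
    · refine Filter.Eventually.of_forall fun ξ => ?_
      rw [Real.norm_eq_abs]
      refine (hg.bd _ _).trans ?_
      have := mul_le_mul_of_nonneg_left (Nn_DS hp hG z k) hL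
      linarith
  · intro z z' k
    rw [hda, hda, ← integral_sub (hint z k) (hint z' k), ← Real.norm_eq_abs]
    have h1 := norm_integral_le_of_norm_le_const (μ := ν)
      (C := (rate γ m h ^ 2 * M + 2 / γ * C₁ * h * L) * Nn (2 / γ) (z - z') * Nn (2 / γ) k)
      (f := fun ξ => fderiv ℝ g (Smap γ h G z + (0, σ • ξ)) (DS γ h DG z k) -
        fderiv ℝ g (Smap γ h G z' + (0, σ • ξ)) (DS γ h DG z' k)) ?_
    · simpa using h1
    · refine Filter.Eventually.of_forall fun ξ => ?_
      rw [Real.norm_eq_abs]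
      have e : fderiv ℝ g (Smap γ h G z + (0, σ • ξ)) (DS γ h DG z k) -
        fderiv ℝ g (Smap γ h G z' + (0, σ • ξ)) (DS γ h DG z' k) =
        (fderiv ℝ g (Smap γ h G z + (0, σ • ξ)) (DS γ h DG z k) -
          fderiv ℝ g (Smap γ h G z' + (0, σ • ξ)) (DS γ h DG z k)) +
        fderiv ℝ g (Smap γ h G z' + (0, σ • ξ)) (DS γ h DG z k - DS γ h DG z' k) := by
        rw [map_sub]; ring
      rw [e]
      refine (abs_add_le _ _).trans ?_
      have b1 := hg.lip (Smap γ h G z + (0, σ • ξ)) (Smap γ h G z' + (0, σ • ξ)) (DS γ h DG z k)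
      rw [add_sub_add_right_eq_sub] at b1
      have b2 := hg.bd (Smap γ h G z' + (0, σ • ξ)) (DS γ h DG z k - DS γ h DG z' k)
      have b3 := mul_le_mul_of_nonneg_left (Nn_DS_sub hp hG z z' k) hL
      have b4 : M * Nn (2 / γ) (Smap γ h G z - Smap γ h G z') * Nn (2 / γ) (DS γ h DG z k) ≤
        M * (rate γ m h * Nn (2 / γ) (z - z')) * (rate γ m h * Nn (2 / γ) k) := by
        have a1 := Nn_Smap_sub hp hG z z'
        have a2 := Nn_DS hp hG z k
        have a3 := Nn_nonneg (2 / γ) (z - z')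
        have a4 := Nn_nonneg (2 / γ) (DS γ h DG z k)
        gcongr
      linarith

end QSec
end SGEM


open MeasureTheory ProbabilityTheory RealInnerProductSpace
open scoped ENNReal

namespace SGEM

section Poisson
variable {E : Type*} [NormedAddCommGroup E] [InnerProductSpace ℝ E] [FiniteDimensional ℝ E]
  [MeasurableSpace E] [BorelSpace E]

variable {γ m C₁ h σ : ℝ} {G : E → E} {DG : E → E →L[ℝ] E} {L M : ℝ} {f : E × E → ℝ}

/-- iterates of the reference kernel -/
noncomputable def gseq (ν : Measure E) (γ h σ : ℝ) (G : E → E) (f : E × E → ℝ) : ℕ → E × E → ℝ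
  | 0 => f
  | j + 1 => Qop ν γ h σ G (gseq ν γ h σ G f j)

/-- truncated solution of the Poisson equation -/
noncomputable def phi (ν : Measure E) (γ h σ : ℝ) (G : E → E) (f : E × E → ℝ) : ℕ → E × E → ℝ
  | 0 => fun _ => 0
  | j + 1 => fun z => phi ν γ h σ G f j z + h * gseq ν γ h σ G f j z

lemma gseq_reg {ν : Measure E} (hν : NuHyp ν) (hp : Par γ m C₁ h)
    (hG : GradHyp m C₁ G DG) (hL : 0 ≤ L) (hM : 0 ≤ M) (hf : Reg (2 / γ) L M f)
    (hLM : 2 * (2 / γ * C₁ * L) ≤ m / (32 * γ) * M) (j : ℕ) :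
    Reg (2 / γ) (rate γ m h ^ j * L) (rate γ m h ^ j * M) (gseq ν γ h σ G f j) := by
  have hr0 := hp.rate_nonneg
  induction j with
  | zero => simpa [gseq] using hf
  | succ j ih =>
    have h1 := ih.Qop (σ := σ) hν hp hG (by positivity) (by positivity)
    refine h1.weaken (le_of_eq (by ring)) ?_
    have hr1 := hp.half_le_rate
    have hh := hp.h0
    have hm := hp.m0
    have hγ := hp.γ0
    have key : rate γ m h ^ 2 * M + 2 / γ * C₁ * h * L ≤ rate γ m h * M := by
      have e : rate γ m h * M - rate γ m h ^ 2 * M = rate γ m h * (h * (m / (32 * γ) * M)) := by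
        unfold rate; ring
      have h2 : 1 / 2 * (h * (m / (32 * γ) * M)) ≤ rate γ m h * (h * (m / (32 * γ) * M)) := by gcongr
      have h3 := mul_le_mul_of_nonneg_left hLM hh.le
      linarith
    have := mul_le_mul_of_nonneg_left key (pow_nonneg hr0 j)
    calc _ = rate γ m h ^ j * (rate γ m h ^ 2 * M + 2 / γ * C₁ * h * L) := by ring
      _ ≤ _ := this
      _ = _ := by ring

lemma phi_reg {ν : Measure E} (hν : NuHyp ν) (hp : Par γ m C₁ h)
    (hG : GradHyp m C₁ G DG) (hL : 0 ≤ L) (hM : 0 ≤ M) (hf : Reg (2 / γ) L M f)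
    (hLM : 2 * (2 / γ * C₁ * L) ≤ m / (32 * γ) * M) (K : ℕ) :
    Reg (2 / γ) (32 * γ / m * L) (32 * γ / m * M) (phi ν γ h σ G f K) := by
  have hr0 := hp.rate_nonneg
  have hh := hp.h0
  have hm := hp.m0
  have hγ := hp.γ0
  have h1 : ∀ K, Reg (2 / γ) ((32 * γ / m) * (1 - rate γ m h ^ K) * L)
      ((32 * γ / m) * (1 - rate γ m h ^ K) * M) (phi ν γ h σ G f K) := by
    intro K
    induction K with
    | zero => simpa [phi] using Reg.zero
    | succ K ih =>
      have h2 := ih.add_smul hh.le (gseq_reg (σ := σ) hν hp hG hL hM hf hLM K)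
      have e : (32 * γ / m) * (1 - rate γ m h ^ (K + 1)) =
          (32 * γ / m) * (1 - rate γ m h ^ K) + h * rate γ m h ^ K := by
        have : rate γ m h ^ (K + 1) = rate γ m h ^ K * (1 - m / (32 * γ) * h) := by
          rw [pow_succ]; rfl
        rw [this]
        field_simp
        ring
      refine h2.weaken (le_of_eq ?_) (le_of_eq ?_) <;> rw [e] <;> ring
  have h2 : 32 * γ / m * (1 - rate γ m h ^ K) ≤ 32 * γ / m * 1 := by
    gcongr
    have : 0 ≤ rate γ m h ^ K := by positivity
    linarith
  rw [mul_one] at h2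
  refine (h1 K).weaken ?_ ?_ <;> gcongr

lemma phi_poisson {ν : Measure E} (hν : NuHyp ν) (hp : Par γ m C₁ h)
    (hG : GradHyp m C₁ G DG) (hL : 0 ≤ L) (hM : 0 ≤ M) (hf : Reg (2 / γ) L M f)
    (hLM : 2 * (2 / γ * C₁ * L) ≤ m / (32 * γ) * M) (K : ℕ) (z : E × E) :
    phi ν γ h σ G f K z - Qop ν γ h σ G (phi ν γ h σ G f K) z =
      h * (f z - gseq ν γ h σ G f K z) := by
  have hr0 := hp.rate_nonneg
  have hm := hp.m0
  have hγ := hp.γ0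
  have hc : 0 < 2 / γ := by positivity
  induction K with
  | zero => simp [phi, gseq, Qop]
  | succ K ih =>
    have r1 := gseq_reg (σ := σ) hν hp hG hL hM hf hLM K
    have r2 := phi_reg (σ := σ) hν hp hG hL hM hf hLM K
    have i1 := integrable_lip hν r1.diff.continuous (r1.lipschitz hc (by positivity))
      (Smap γ h G z) σ
    have i2 := integrable_lip hν r2.diff.continuous (r2.lipschitz hc (by positivity))
      (Smap γ h G z) σ
    have e : Qop ν γ h σ G (phi ν γ h σ G f (K + 1)) z =
        Qop ν γ h σ G (phi ν γ h σ G f K) z + h * gseq ν γ h σ G f (K + 1) z := by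
      simp only [Qop, phi, gseq]
      rw [integral_add i2 (i1.const_mul h), integral_const_mul]
    rw [e]
    simp only [phi] at ih ⊢
    linarith

end Poisson

section Compare
variable {F : Type*} [NormedAddCommGroup F] [NormedSpace ℝ F]

lemma taylor_two {ψ : F → ℝ} {Dψ : F → F →L[ℝ] ℝ} {M : ℝ} (hM : 0 ≤ M)
    (hψ : ∀ v, HasFDerivAt ψ (Dψ v) v) (hlip : ∀ v w, ‖Dψ v - Dψ w‖ ≤ M * ‖v - w‖) (x0 x y : F) :
    |ψ y - ψ x - Dψ x0 (y - x)| ≤ M * (‖x - x0‖ + ‖y - x0‖) * ‖y - x‖ := by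
  have h1 : segment ℝ x y ⊆ Metric.closedBall x0 (‖x - x0‖ + ‖y - x0‖) := by
    refine (convex_closedBall _ _).segment_subset ?_ ?_ <;>
      rw [mem_closedBall_iff_norm] <;> linarith [norm_nonneg (x - x0), norm_nonneg (y - x0)]
  have := Convex.norm_image_sub_le_of_norm_hasFDerivWithin_le' (s := segment ℝ x y) (f := ψ)
    (f' := Dψ) (φ := Dψ x0) (C := M * (‖x - x0‖ + ‖y - x0‖))
    (fun v _ => (hψ v).hasFDerivWithinAt) (fun v hv => by
      have h2 := h1 hv
      rw [mem_closedBall_iff_norm] at h2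
      exact (hlip v x0).trans (by gcongr)) (convex_segment x y)
      (left_mem_segment ℝ x y) (right_mem_segment ℝ x y)
  simpa using this

lemma taylor_one {ψ : F → ℝ} {Dψ : F → F →L[ℝ] ℝ} {L : ℝ}
    (hψ : ∀ v, HasFDerivAt ψ (Dψ v) v) (hb : ∀ v, ‖Dψ v‖ ≤ L) (x y : F) :
    |ψ y - ψ x| ≤ L * ‖y - x‖ := by
  simpa using Convex.norm_image_sub_le_of_norm_hasFDerivWithin_le (s := Set.univ) (f := ψ)
    (f' := Dψ) (C := L)
    (fun v _ => (hψ v).hasFDerivWithinAt) (fun v hv => hb v) convex_univ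
      (x := x) (y := y) trivial trivial

variable [CompleteSpace F] [MeasurableSpace F] [BorelSpace F] [SecondCountableTopology F]
  {Ω' : Type*} [MeasurableSpace Ω']

lemma compare_gen {ν : Measure F} [IsProbabilityMeasure ν] (hmom2 : Integrable (fun ξ : F => ‖ξ‖ ^ 2) ν)
    (hmom1 : Integrable (fun ξ : F => ξ) ν)
    (hmean : ∫ ξ, ξ ∂ν = 0) {μ : Measure Ω'} [IsProbabilityMeasure μ]
    {ψ : F → ℝ} {Dψ : F → F →L[ℝ] ℝ} {L M : ℝ} (hL : 0 ≤ L) (hM : 0 ≤ M)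
    (hψ : ∀ v, HasFDerivAt ψ (Dψ v) v) (hb : ∀ v, ‖Dψ v‖ ≤ L)
    (hlip : ∀ v w, ‖Dψ v - Dψ w‖ ≤ M * ‖v - w‖)
    {β : Ω' → F} (hβ : Measurable β) {B : ℝ} (hβB : ∀ ω, ‖β ω‖ ≤ B) (hβ0 : ∫ ω, β ω ∂μ = 0)
    (a a' : F) {s s' h : ℝ} (hs : 0 ≤ s) (hs' : 0 ≤ s') (hh : 0 ≤ h) :
    Integrable (fun p : F × Ω' => ψ (a + s • p.1 - h • β p.2)) (ν.prod μ) ∧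
    |(∫ p, ψ (a + s • p.1 - h • β p.2) ∂(ν.prod μ)) - ∫ ξ, ψ (a' + s' • ξ) ∂ν| ≤
      L * ‖a - a'‖ + M * |s ^ 2 - s' ^ 2| * (∫ ξ, ‖ξ‖ ^ 2 ∂ν) + M * h ^ 2 * B ^ 2 := by
  have hψc : Continuous ψ := continuous_iff_continuousAt.2 fun v => (hψ v).continuousAt
  have hβi : Integrable β μ := Integrable.mono' (integrable_const B) hβ.aestronglyMeasurable
    (Filter.Eventually.of_forall hβB)
  have hint1 : ∀ (y : F) (r : ℝ), Integrable (fun ξ => ψ (y + r • ξ)) ν := by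
    intro y r
    refine Integrable.mono' ((integrable_const (|ψ y|)).add (hmom1.norm.const_mul (L * |r|)))
      (by fun_prop) (Filter.Eventually.of_forall fun ξ => ?_)
    have h1 := taylor_one hψ hb y (y + r • ξ)
    rw [add_sub_cancel_left, norm_smul, Real.norm_eq_abs] at h1
    have h3 := abs_add_le (ψ (y + r • ξ) - ψ y) (ψ y)
    simp only [sub_add_cancel] at h3
    simp only [Pi.add_apply, Real.norm_eq_abs]
    linarith
  have hint2 : ∀ (y : F), Integrable (fun ω => ψ (y - h • β ω)) μ := by
    intro y
    refine Integrable.mono' (integrable_const (|ψ y| + L * (h * B)))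
      (hψc.measurable.comp (by fun_prop)).aestronglyMeasurable (Filter.Eventually.of_forall fun ω => ?_)
    have h1 := taylor_one hψ hb y (y - h • β ω)
    rw [sub_sub_cancel_left, norm_neg, norm_smul, Real.norm_eq_abs, abs_of_nonneg hh] at h1
    have h3 := abs_add_le (ψ (y - h • β ω) - ψ y) (ψ y)
    simp only [sub_add_cancel] at h3
    rw [Real.norm_eq_abs]
    have h4 : L * (h * ‖β ω‖) ≤ L * (h * B) := by gcongr; exact hβB ω
    linarith
  have hint : Integrable (fun p : F × Ω' => ψ (a + s • p.1 - h • β p.2)) (ν.prod μ) := by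
    have hn : Integrable (fun p : F × Ω' => ‖p.1‖) (ν.prod μ) := hmom1.norm.comp_fst μ
    refine Integrable.mono' ((integrable_const (|ψ a| + L * (h * B))).add (hn.const_mul (L * s)))
      (hψc.measurable.comp (by fun_prop)).aestronglyMeasurable (Filter.Eventually.of_forall fun p => ?_)
    have h1 := taylor_one hψ hb a (a + s • p.1 - h • β p.2)
    have e : a + s • p.1 - h • β p.2 - a = s • p.1 - h • β p.2 := by abel
    have h2 : ‖s • p.1 - h • β p.2‖ ≤ s * ‖p.1‖ + h * B := by
      refine (norm_sub_le _ _).trans ?_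
      rw [norm_smul, norm_smul, Real.norm_eq_abs, Real.norm_eq_abs, abs_of_nonneg hs,
        abs_of_nonneg hh]
      gcongr
      exact hβB _
    rw [e] at h1
    have h3 := abs_add_le (ψ (a + s • p.1 - h • β p.2) - ψ a) (ψ a)
    simp only [sub_add_cancel] at h3
    have h4 := mul_le_mul_of_nonneg_left h2 hL
    simp only [Pi.add_apply, Real.norm_eq_abs]
    linarith
  refine ⟨hint, ?_⟩
  -- step (i)
  have s1 : ∀ y, |(∫ ω, ψ (y - h • β ω) ∂μ) - ψ y| ≤ M * h ^ 2 * B ^ 2 := by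
    intro y
    have hi : Integrable (fun ω => h • β ω) μ := hβi.smul h
    have hlin : Integrable (fun ω => Dψ y (h • β ω)) μ := (Dψ y).integrable_comp hi
    have hlin0 : ∫ ω, Dψ y (h • β ω) ∂μ = 0 := by
      rw [(Dψ y).integral_comp_comm hi, integral_smul, hβ0]; simp
    have hd : Integrable (fun ω => ψ (y - h • β ω) - ψ y) μ := (hint2 y).sub (integrable_const _)
    have e : (∫ ω, ψ (y - h • β ω) ∂μ) - ψ y =
        ∫ ω, (ψ (y - h • β ω) - ψ y + Dψ y (h • β ω)) ∂μ := by
      rw [integral_add hd hlin, hlin0,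
        integral_sub (hint2 y) (integrable_const _)]
      simp
    rw [e, ← Real.norm_eq_abs]
    have h1 := norm_integral_le_of_norm_le_const (μ := μ) (C := M * h ^ 2 * B ^ 2)
      (f := fun ω => (ψ (y - h • β ω) - ψ y + Dψ y (h • β ω))) ?_
    · simpa using h1
    · refine Filter.Eventually.of_forall fun ω => ?_
      have h2 := taylor_two hM hψ hlip y y (y - h • β ω)
      rw [sub_sub_cancel_left, sub_self, norm_zero, norm_neg, map_neg, sub_neg_eq_add, norm_smul,
        Real.norm_eq_abs, abs_of_nonneg hh] at h2
      rw [Real.norm_eq_abs]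
      have h3 : h * ‖β ω‖ ≤ h * B := by gcongr; exact hβB ω
      have h4 : 0 ≤ h * ‖β ω‖ := by positivity
      have h5 : 0 ≤ M * (0 + h * B) := by rw [zero_add]; exact mul_nonneg hM (h4.trans h3)
      calc _ ≤ _ := h2
        _ ≤ M * (0 + h * B) * (h * B) := by gcongr
        _ = _ := by ring
  have s1' : |(∫ p, ψ (a + s • p.1 - h • β p.2) ∂(ν.prod μ)) - ∫ ξ, ψ (a + s • ξ) ∂ν| ≤
      M * h ^ 2 * B ^ 2 := by
    rw [integral_prod _ hint]
    have hi : Integrable (fun ξ => ∫ ω, ψ (a + s • ξ - h • β ω) ∂μ) ν := hint.integral_prod_left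
    rw [← integral_sub hi (hint1 a s), ← Real.norm_eq_abs]
    have h1 := norm_integral_le_of_norm_le_const (μ := ν) (C := M * h ^ 2 * B ^ 2)
      (f := fun ξ => (∫ ω, ψ (a + s • ξ - h • β ω) ∂μ) - ψ (a + s • ξ)) ?_
    · simpa using h1
    · exact Filter.Eventually.of_forall fun ξ => s1 _
  have s2 : |(∫ ξ, ψ (a + s • ξ) ∂ν) - ∫ ξ, ψ (a + s' • ξ) ∂ν| ≤
      M * |s ^ 2 - s' ^ 2| * ∫ ξ, ‖ξ‖ ^ 2 ∂ν := by
    have hi : Integrable (fun ξ => (s - s') • ξ) ν := hmom1.smul (s - s')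
    have hlin : Integrable (fun ξ => Dψ a ((s - s') • ξ)) ν := (Dψ a).integrable_comp hi
    have hlin0 : ∫ ξ, Dψ a ((s - s') • ξ) ∂ν = 0 := by
      rw [(Dψ a).integral_comp_comm hi, integral_smul, hmean]; simp
    have hd : Integrable (fun ξ => ψ (a + s • ξ) - ψ (a + s' • ξ)) ν := (hint1 a s).sub (hint1 a s')
    have e : (∫ ξ, ψ (a + s • ξ) ∂ν) - ∫ ξ, ψ (a + s' • ξ) ∂ν =
        ∫ ξ, (ψ (a + s • ξ) - ψ (a + s' • ξ) - Dψ a ((s - s') • ξ)) ∂ν := by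
      rw [integral_sub hd hlin, hlin0,
        integral_sub (hint1 a s) (hint1 a s')]
      simp
    rw [e, ← Real.norm_eq_abs, ← integral_const_mul]
    refine norm_integral_le_of_norm_le (hmom2.const_mul _) (Filter.Eventually.of_forall fun ξ => ?_)
    have h2 := taylor_two hM hψ hlip a (a + s' • ξ) (a + s • ξ)
    have e1 : a + s • ξ - (a + s' • ξ) = (s - s') • ξ := by module
    rw [e1, add_sub_cancel_left, add_sub_cancel_left, norm_smul, norm_smul, norm_smul,
      Real.norm_eq_abs, Real.norm_eq_abs, Real.norm_eq_abs, abs_of_nonneg hs, abs_of_nonneg hs'] at h2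
    rw [Real.norm_eq_abs]
    refine h2.trans (le_of_eq ?_)
    have : |s ^ 2 - s' ^ 2| = (s' + s) * |s - s'| := by
      rw [show s ^ 2 - s' ^ 2 = (s' + s) * (s - s') by ring, abs_mul,
        abs_of_nonneg (add_nonneg hs' hs)]
    rw [this]; ring
  have s3 : |(∫ ξ, ψ (a + s' • ξ) ∂ν) - ∫ ξ, ψ (a' + s' • ξ) ∂ν| ≤ L * ‖a - a'‖ := by
    rw [← integral_sub (hint1 a s') (hint1 a' s'), ← Real.norm_eq_abs]
    have h1 := norm_integral_le_of_norm_le_const (μ := ν) (C := L * ‖a - a'‖)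
      (f := fun ξ => ψ (a + s' • ξ) - ψ (a' + s' • ξ)) ?_
    · simpa using h1
    · refine Filter.Eventually.of_forall fun ξ => ?_
      have := taylor_one hψ hb (a' + s' • ξ) (a + s' • ξ)
      rwa [add_sub_add_right_eq_sub] at this
  have t1 := abs_sub_le (∫ p, ψ (a + s • p.1 - h • β p.2) ∂(ν.prod μ)) (∫ ξ, ψ (a + s • ξ) ∂ν)
    (∫ ξ, ψ (a' + s' • ξ) ∂ν)
  have t2 := abs_sub_le (∫ ξ, ψ (a + s • ξ) ∂ν) (∫ ξ, ψ (a + s' • ξ) ∂ν)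
    (∫ ξ, ψ (a' + s' • ξ) ∂ν)
  linarith

end Compare
end SGEM


open MeasureTheory ProbabilityTheory RealInnerProductSpace
open scoped ENNReal

namespace SGEM

section Step
variable {E : Type*} [NormedAddCommGroup E] [InnerProductSpace ℝ E] [FiniteDimensional ℝ E]
  [MeasurableSpace E] [BorelSpace E] {Ω' : Type*} [MeasurableSpace Ω']

lemma norm_inr_le' : ‖ContinuousLinearMap.inr ℝ E E‖ ≤ 1 := by
  refine ContinuousLinearMap.opNorm_le_bound _ zero_le_one fun v => ?_
  rw [ContinuousLinearMap.inr_apply, Prod.norm_def]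
  simp

/-- one step of the stochastic gradient chain -/
noncomputable def step (γ h : ℝ) (b : E → Ω' → E) (z : E × E) (p : E × Ω') : E × E :=
  (z.1 + h • z.2, z.2 - h • b z.1 p.2 - (γ * h) • z.2 + Real.sqrt (2 * γ * h) • p.1)

/-- the properties of the stochastic gradient that are used -/
structure BHyp (m C₀ C₁ : ℝ) (μ : Measure Ω') (G : E → E) (b : E → Ω' → E) : Prop where
  prob : IsProbabilityMeasure μ
  meas : Measurable (Function.uncurry b)
  growth : ∀ x ω, ‖b x ω‖ ≤ C₁ * (1 + ‖x‖)
  drift : ∀ x ω, m * ‖x‖ ^ 2 - C₀ ≤ ⟪x, b x ω⟫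
  mean : ∀ x, ∫ ω, b x ω ∂μ = G x

/-- the kernel of the chain acting on functions -/
noncomputable def Pop (ν : Measure E) (μ : Measure Ω') (γ h : ℝ) (b : E → Ω' → E)
    (g : E × E → ℝ) (z : E × E) : ℝ := ∫ p, g (step γ h b z p) ∂(ν.prod μ)

variable {γ m C₀ C₁ h σ : ℝ} {G : E → E} {DG : E → E →L[ℝ] E} {L M : ℝ} {g : E × E → ℝ}
  {ν : Measure E} {μ : Measure Ω'} {b : E → Ω' → E}

lemma step_eq (z : E × E) (p : E × Ω') : step γ h b z p = (z.1 + h • z.2,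
    ((1 - γ * h) • z.2 - h • G z.1) + Real.sqrt (2 * γ * h) • p.1 - h • (b z.1 p.2 - G z.1)) := by
  unfold step
  congr 1
  module

lemma measurable_step (hb : BHyp m C₀ C₁ μ G b) :
    Measurable (fun q : (E × E) × (E × Ω') => step γ h b q.1 q.2) := by
  have h1 : Measurable (fun q : (E × E) × (E × Ω') => b q.1.1 q.2.2) :=
    hb.meas.comp (by fun_prop : Measurable (fun q : (E × E) × (E × Ω') => (q.1.1, q.2.2)))
  have h2 : Measurable (fun q : (E × E) × (E × Ω') => h • b q.1.1 q.2.2) := h1.const_smul h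
  unfold step
  refine Measurable.prodMk (by fun_prop) ?_
  refine Measurable.add (Measurable.sub (Measurable.sub (by fun_prop) h2) (by fun_prop)) (by fun_prop)

lemma beta_bound (hG : GradHyp m C₁ G DG) (hb : BHyp m C₀ C₁ μ G b) (hC : 0 < C₁) (z : E × E) (ω : Ω') :
    ‖b z.1 ω - G z.1‖ ≤ 2 * C₁ * (1 + ‖z‖) := by
  have h1 := norm_sub_le (b z.1 ω) (G z.1)
  have h2 := hb.growth z.1 ω
  have h3 := hG.growth z.1
  have h4 : C₁ * ‖z.1‖ ≤ C₁ * ‖z‖ := by gcongr; exact norm_fst_le z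
  linarith

lemma compare_PQ (hν : NuHyp ν) (hp : Par γ m C₁ h) (hG : GradHyp m C₁ G DG)
    (hb : BHyp m C₀ C₁ μ G b) (hL : 0 ≤ L) (hM : 0 ≤ M) (hg : Reg (2 / γ) L M g)
    (hσ : 0 ≤ σ) (hσ2 : σ ^ 2 = 2 * γ * h - γ ^ 2 * h ^ 2) (z : E × E) :
    Integrable (fun p => g (step γ h b z p)) (ν.prod μ) ∧
    |Pop ν μ γ h b g z - Qop ν γ h σ G g z| ≤
      (L * (2 + 2 / γ) * (C₁ + 2 * γ * C₁) +
        M * (2 + 2 / γ) ^ 2 * (γ ^ 2 * (∫ ξ, ‖ξ‖ ^ 2 ∂ν) + 4 * C₁ ^ 2)) * h ^ 2 * (1 + ‖z‖) ^ 2 := by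
  have := hν.prob
  have := hb.prob
  have hγ := hp.γ0; have hh := hp.h0; have hC := hp.C0; have h31 := hp.h3
  have hc : 0 < 2 / γ := by positivity
  set x1 := z.1 + h • z.2 with hx1
  set a := (1 - γ * h) • z.2 - h • G z.1 with ha
  set a' := (1 - γ * h) • (z.2 - h • G x1) with ha'
  have hmb : Measurable (b z.1) := hb.meas.comp (by fun_prop : Measurable fun ω => (z.1, ω))
  have hbi : Integrable (b z.1) μ := Integrable.mono' (integrable_const (C₁ * (1 + ‖z.1‖)))
    hmb.aestronglyMeasurable (Filter.Eventually.of_forall fun ω => hb.growth _ _)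
  have key := compare_gen (ν := ν) hν.mom2 hν.mom1' hν.mean (μ := μ)
    (ψ := fun v => g (x1, v))
    (Dψ := fun v => (fderiv ℝ g (x1, v)).comp (ContinuousLinearMap.inr ℝ E E))
    (L := L * (2 + 2 / γ)) (M := M * (2 + 2 / γ) ^ 2) (by positivity) (by positivity)
    (fun v => by
      have h1 : HasFDerivAt (fun v : E => (x1, v)) (ContinuousLinearMap.inr ℝ E E) v :=
        hasFDerivAt_prodMk_right x1 v
      exact (hg.diff (x1, v)).hasFDerivAt.comp v h1)
    (fun v => by
      refine (ContinuousLinearMap.opNorm_comp_le _ _).trans ?_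
      have h1 := hg.norm_fderiv_le hc hL (x1, v)
      have h2 := norm_inr_le' (E := E)
      calc _ ≤ (L * (2 + 2 / γ)) * 1 := by gcongr
        _ = _ := by ring)
    (fun v w => by
      rw [← ContinuousLinearMap.sub_comp]
      refine (ContinuousLinearMap.opNorm_comp_le _ _).trans ?_
      have h1 := hg.norm_fderiv_sub_le hc hM (x1, v) (x1, w)
      have h2 := norm_inr_le' (E := E)
      have h3 : ‖((x1, v) : E × E) - (x1, w)‖ = ‖v - w‖ := by
        rw [Prod.norm_def]; simp
      rw [h3] at h1
      calc _ ≤ (M * (2 + 2 / γ) ^ 2 * ‖v - w‖) * 1 := by gcongr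
        _ = _ := by ring)
    (β := fun ω => b z.1 ω - G z.1) (by fun_prop) (B := 2 * C₁ * (1 + ‖z‖))
    (fun ω => beta_bound hG hb hC z ω)
    (by rw [integral_sub hbi (integrable_const _), hb.mean]; simp)
    a a' (s := Real.sqrt (2 * γ * h)) (s' := σ) (h := h) (Real.sqrt_nonneg _) hσ hh.le
  have e1 : ∀ p : E × Ω', g (step γ h b z p) =
      g (x1, a + Real.sqrt (2 * γ * h) • p.1 - h • (b z.1 p.2 - G z.1)) := fun p => by
    rw [step_eq (G := G)]
  have e2 : Qop ν γ h σ G g z = ∫ ξ, g (x1, a' + σ • ξ) ∂ν := by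
    unfold Qop Smap
    simp only [Prod.mk_add_mk, add_zero]
    rfl
  unfold Pop
  simp_rw [e1]
  refine ⟨key.1, ?_⟩
  rw [e2]
  refine key.2.trans ?_
  have hw : 1 ≤ 1 + ‖z‖ := by linarith [norm_nonneg z]
  have hz1 : ‖z.1‖ ≤ ‖z‖ := norm_fst_le z
  have hz2 : ‖z.2‖ ≤ ‖z‖ := norm_snd_le z
  have ea : ‖a - a'‖ ≤ (C₁ + 2 * γ * C₁) * h ^ 2 * (1 + ‖z‖) := by
    have e : a - a' = h • (G x1 - G z.1) - (γ * h ^ 2) • G x1 := by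
      rw [ha, ha']; module
    rw [e]
    refine (norm_sub_le _ _).trans ?_
    rw [norm_smul, norm_smul, Real.norm_of_nonneg hh.le, Real.norm_of_nonneg (by positivity)]
    have h1 := hG.lipG x1 z.1
    rw [hx1, add_sub_cancel_left, norm_smul, Real.norm_of_nonneg hh.le, ← hx1] at h1
    have h2 := hG.growth x1
    have h3 : ‖x1‖ ≤ ‖z.1‖ + h * ‖z.2‖ := by
      rw [hx1]; refine (norm_add_le _ _).trans ?_
      rw [norm_smul, Real.norm_of_nonneg hh.le]
    have h4 : h * ‖z.2‖ ≤ 1 * ‖z‖ := by gcongr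
    have h5 : ‖G x1‖ ≤ C₁ * (2 * (1 + ‖z‖)) := h2.trans (by gcongr; linarith)
    have h6 : ‖G x1 - G z.1‖ ≤ C₁ * (h * (1 + ‖z‖)) := h1.trans (by gcongr; linarith)
    calc _ ≤ h * (C₁ * (h * (1 + ‖z‖))) + γ * h ^ 2 * (C₁ * (2 * (1 + ‖z‖))) := by gcongr
      _ = _ := by ring
  have es : |Real.sqrt (2 * γ * h) ^ 2 - σ ^ 2| = γ ^ 2 * h ^ 2 := by
    rw [Real.sq_sqrt (by positivity), hσ2, abs_of_nonneg]
    · ring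
    · ring_nf; positivity
  rw [es]
  have hm2 : 0 ≤ ∫ ξ, ‖ξ‖ ^ 2 ∂ν := integral_nonneg fun _ => by positivity
  have hw2 : 1 + ‖z‖ ≤ (1 + ‖z‖) ^ 2 := by nlinarith
  have hw3 : 1 ≤ (1 + ‖z‖) ^ 2 := by nlinarith
  calc _ ≤ L * (2 + 2 / γ) * ((C₁ + 2 * γ * C₁) * h ^ 2 * (1 + ‖z‖) ^ 2) +
        M * (2 + 2 / γ) ^ 2 * (γ ^ 2 * h ^ 2) * ((∫ ξ, ‖ξ‖ ^ 2 ∂ν) * (1 + ‖z‖) ^ 2) +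
        M * (2 + 2 / γ) ^ 2 * h ^ 2 * (2 * C₁ * (1 + ‖z‖)) ^ 2 := by
        gcongr
        · exact ea.trans (by gcongr)
        · exact le_mul_of_one_le_right hm2 hw3
    _ = _ := by ring

lemma mart_incr (hν : NuHyp ν) (hp : Par γ m C₁ h) (hG : GradHyp m C₁ G DG)
    (hb : BHyp m C₀ C₁ μ G b) (hL : 0 ≤ L) (hg : Reg (2 / γ) L M g)
    (hint : ∀ z, Integrable (fun p => g (step γ h b z p)) (ν.prod μ)) (z : E × E) (t : ℝ) :
    ∫⁻ p, ENNReal.ofReal ((t + (g (step γ h b z p) - Pop ν μ γ h b g z)) ^ 2) ∂(ν.prod μ) ≤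
      ENNReal.ofReal (t ^ 2 + (L * (2 + 2 / γ)) ^ 2 *
        (4 * γ * (∫ ξ, ‖ξ‖ ^ 2 ∂ν) + 8 * C₁ ^ 2) * h * (1 + ‖z‖) ^ 2) := by
  have := hν.prob
  have := hb.prob
  have hγ := hp.γ0; have hh := hp.h0; have hC := hp.C0; have h31 := hp.h3
  have hc : 0 < 2 / γ := by positivity
  set a := ((z.1 + h • z.2, (1 - γ * h) • z.2 - h • G z.1) : E × E) with ha
  set L' := L * (2 + 2 / γ) with hL'
  have hL'0 : 0 ≤ L' := by positivity
  set y : E × Ω' → ℝ := fun p => g (step γ h b z p) - g a with hy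
  have hyi : Integrable y (ν.prod μ) := (hint z).sub (integrable_const _)
  set B := 2 * C₁ * (1 + ‖z‖) with hB
  have hyb : ∀ p, y p ^ 2 ≤ L' ^ 2 * (4 * γ * h * ‖p.1‖ ^ 2 + 2 * h ^ 2 * B ^ 2) := by
    intro p
    have h1 := hg.lipschitz hc hL (step γ h b z p) a
    have h2 : ‖step γ h b z p - a‖ ≤ Real.sqrt (2 * γ * h) * ‖p.1‖ + h * B := by
      rw [step_eq (G := G), ha, Prod.mk_sub_mk, sub_self, Prod.norm_def]
      refine max_le ?_ ?_
      · simp only [norm_zero]; positivity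
      · have e : (1 - γ * h) • z.2 - h • G z.1 + √(2 * γ * h) • p.1 - h • (b z.1 p.2 - G z.1) -
          ((1 - γ * h) • z.2 - h • G z.1) = √(2 * γ * h) • p.1 - h • (b z.1 p.2 - G z.1) := by abel
        simp only [e]
        refine (norm_sub_le _ _).trans ?_
        rw [norm_smul, norm_smul, Real.norm_of_nonneg hh.le, Real.norm_of_nonneg (by positivity)]
        gcongr
        exact beta_bound hG hb hC z p.2
    have h3 : y p ^ 2 ≤ (L' * (Real.sqrt (2 * γ * h) * ‖p.1‖ + h * B)) ^ 2 := by
      refine sq_le_sq' ?_ ?_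
      · have := neg_abs_le (y p)
        have h4 : |y p| ≤ _ := h1.trans (mul_le_mul_of_nonneg_left h2 hL'0)
        linarith
      · exact (le_abs_self _).trans (h1.trans (mul_le_mul_of_nonneg_left h2 hL'0))
    refine h3.trans ?_
    rw [mul_pow]
    gcongr
    have h5 : Real.sqrt (2 * γ * h) ^ 2 = 2 * γ * h := Real.sq_sqrt (by positivity)
    have h6 := add_sq_le (a := Real.sqrt (2 * γ * h) * ‖p.1‖) (b := h * B)
    rw [mul_pow, h5] at h6
    linarith
  have hn : Integrable (fun p : E × Ω' => ‖p.1‖ ^ 2) (ν.prod μ) := hν.mom2.comp_fst μ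
  have hbi : Integrable (fun p : E × Ω' => L' ^ 2 * (4 * γ * h * ‖p.1‖ ^ 2 + 2 * h ^ 2 * B ^ 2))
      (ν.prod μ) := ((hn.const_mul _).add (integrable_const _)).const_mul _
  have hy2 : Integrable (fun p => y p ^ 2) (ν.prod μ) := by
    refine hbi.mono' (hyi.aestronglyMeasurable.pow 2) (Filter.Eventually.of_forall fun p => ?_)
    rw [Real.norm_of_nonneg (by positivity)]
    exact hyb p
  have hP : Pop ν μ γ h b g z = (∫ p, y p ∂(ν.prod μ)) + g a := by
    rw [hy, integral_sub (hint z) (integrable_const _)]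
    simp [Pop]
  set yb := ∫ p, y p ∂(ν.prod μ) with hyb'
  have e1 : ∀ p, (t + (g (step γ h b z p) - Pop ν μ γ h b g z)) ^ 2 =
      y p ^ 2 + (2 * (t - yb) * y p + (t - yb) ^ 2) := by
    intro p
    rw [hP]
    have : g (step γ h b z p) = y p + g a := by simp [hy]
    rw [this]; ring
  have hi2 : Integrable (fun p => 2 * (t - yb) * y p) (ν.prod μ) := hyi.const_mul _
  have hi3 : Integrable (fun p => 2 * (t - yb) * y p + (t - yb) ^ 2) (ν.prod μ) :=
    hi2.add (integrable_const _)
  simp_rw [e1]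
  have hi4 : Integrable (fun p => y p ^ 2 + (2 * (t - yb) * y p + (t - yb) ^ 2)) (ν.prod μ) :=
    hy2.add hi3
  rw [← ofReal_integral_eq_lintegral_ofReal hi4
    (Filter.Eventually.of_forall fun p => by
      have := e1 p
      simp only [Pi.zero_apply]
      rw [← this]; positivity)]
  refine ENNReal.ofReal_le_ofReal ?_
  rw [integral_add hy2 hi3, integral_add hi2 (integrable_const _), integral_const_mul, ← hyb']
  simp only [integral_const, probReal_univ, one_smul]
  have h7 : ∫ p, y p ^ 2 ∂(ν.prod μ) ≤ L' ^ 2 * (4 * γ * h * (∫ ξ, ‖ξ‖ ^ 2 ∂ν) + 2 * h ^ 2 * B ^ 2) := by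
    refine (integral_mono hy2 hbi hyb).trans (le_of_eq ?_)
    rw [integral_const_mul, integral_add (hn.const_mul _) (integrable_const _), integral_const_mul]
    have : ∫ p : E × Ω', ‖p.1‖ ^ 2 ∂(ν.prod μ) = ∫ ξ, ‖ξ‖ ^ 2 ∂ν := by
      have := integral_fun_fst (μ := ν) (ν := μ) (f := fun ξ : E => ‖ξ‖ ^ 2)
      simpa using this
    rw [this]; simp
  have hm2 : 0 ≤ ∫ ξ, ‖ξ‖ ^ 2 ∂ν := integral_nonneg fun _ => by positivity
  have hw3 : 1 ≤ (1 + ‖z‖) ^ 2 := by nlinarith [norm_nonneg z]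
  have h8 : L' ^ 2 * (4 * γ * h * (∫ ξ, ‖ξ‖ ^ 2 ∂ν) + 2 * h ^ 2 * B ^ 2) ≤
      L' ^ 2 * (4 * γ * h * ((∫ ξ, ‖ξ‖ ^ 2 ∂ν) * (1 + ‖z‖) ^ 2) + 2 * (h * 1) * B ^ 2) := by
    gcongr
    · exact le_mul_of_one_le_right hm2 hw3
    · rw [sq]; gcongr
  have h9 : L' ^ 2 * (4 * γ * h * ((∫ ξ, ‖ξ‖ ^ 2 ∂ν) * (1 + ‖z‖) ^ 2) + 2 * (h * 1) * B ^ 2) =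
      L' ^ 2 * (4 * γ * (∫ ξ, ‖ξ‖ ^ 2 ∂ν) + 8 * C₁ ^ 2) * h * (1 + ‖z‖) ^ 2 := by
    rw [hB]; ring
  nlinarith only [h7, h8, h9, sq_nonneg yb]

end Step
end SGEM


open MeasureTheory ProbabilityTheory RealInnerProductSpace
open scoped ENNReal

namespace SGEM

section Lyap
variable {E : Type*} [NormedAddCommGroup E] [InnerProductSpace ℝ E]

lemma lyap_det {γ m C₀ C₁ h : ℝ} (hp : Par γ m C₁ h) (hC₀ : 0 < C₀) (x q b : E)
    (hgr : ‖b‖ ≤ C₁ * (1 + ‖x‖)) (hdr : m * ‖x‖ ^ 2 - C₀ ≤ ⟪x, b⟫) :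
    ‖x + (γ * h / 2) • q‖ ^ 2 + ‖x + (1 - γ * h / 2) • q - (h * (2 / γ)) • b‖ ^ 2 ≤
      (1 - m / (4 * γ) * h) * (‖x‖ ^ 2 + ‖x + q‖ ^ 2) + (4 * C₀ + 2 * m) / γ * h := by
  have hγ := hp.γ0; have hh := hp.h0; have hC := hp.C0; have hm := hp.m0
  set c := 2 / γ with hc
  set τ := γ * h / 2 with hτ
  have hc0 : 0 < c := by positivity
  have hτ0 : 0 < τ := by positivity
  have hτ1 : τ ≤ 1 / 4 := by rw [hτ]; linarith [hp.h1]
  have e1 : ‖x + τ • q‖ ^ 2 = ‖x‖ ^ 2 + 2 * τ * ⟪x, q⟫ + τ ^ 2 * ‖q‖ ^ 2 := by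
    rw [norm_add_sq_real, inner_smul_right, norm_smul, mul_pow, Real.norm_eq_abs, sq_abs]; ring
  have e2 : ‖x + q‖ ^ 2 = ‖x‖ ^ 2 + 2 * ⟪x, q⟫ + ‖q‖ ^ 2 := norm_add_sq_real x q
  have e3 : ‖x + (1 - τ) • q - (h * c) • b‖ ^ 2 = ‖x‖ ^ 2 + 2 * (1 - τ) * ⟪x, q⟫ +
      (1 - τ) ^ 2 * ‖q‖ ^ 2 - 2 * (h * c) * ⟪x, b⟫ - 2 * (h * c) * (1 - τ) * ⟪q, b⟫
      + (h * c) ^ 2 * ‖b‖ ^ 2 := by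
    rw [norm_sub_sq_real, norm_add_sq_real, inner_smul_right, inner_smul_right, norm_smul, norm_smul,
      mul_pow, mul_pow, Real.norm_eq_abs, sq_abs, Real.norm_eq_abs, sq_abs, inner_add_left,
      inner_smul_left]
    simp only [conj_trivial]
    ring
  rw [e1, e2, e3]
  have hb2 : ‖b‖ ^ 2 ≤ 2 * C₁ ^ 2 * (1 + ‖x‖ ^ 2) := by
    have h1 : ‖b‖ ^ 2 ≤ (C₁ * (1 + ‖x‖)) ^ 2 := by gcongr
    have h2 : (1 + ‖x‖) ^ 2 ≤ 2 * (1 + ‖x‖ ^ 2) := by nlinarith only [sq_nonneg (1 - ‖x‖)]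
    have h3 := mul_le_mul_of_nonneg_left h2 (sq_nonneg C₁)
    linarith
  have hqb : -(2 * (h * c) * (1 - τ) * ⟪q, b⟫) ≤ γ * h / 4 * ‖q‖ ^ 2 + 4 * h * c ^ 2 / γ * ‖b‖ ^ 2 := by
    have h1 : -⟪q, b⟫ ≤ ‖q‖ * ‖b‖ := by
      have := abs_real_inner_le_norm q b
      linarith [neg_abs_le ⟪q, b⟫]
    have h2 : -(2 * (h * c) * (1 - τ) * ⟪q, b⟫) ≤ 2 * (h * c) * 1 * (‖q‖ * ‖b‖) := by
      rw [show -(2 * (h * c) * (1 - τ) * ⟪q, b⟫) = 2 * (h * c) * (1 - τ) * -⟪q, b⟫ by ring]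
      calc _ ≤ 2 * (h * c) * (1 - τ) * (‖q‖ * ‖b‖) := by
            have : 0 ≤ 1 - τ := by linarith
            gcongr
        _ ≤ _ := by gcongr; linarith
    have h3 : γ * h / 4 * ‖q‖ ^ 2 + 4 * h * c ^ 2 / γ * ‖b‖ ^ 2 - 2 * (h * c) * 1 * (‖q‖ * ‖b‖) =
        γ * h / 4 * (‖q‖ - 4 * c / γ * ‖b‖) ^ 2 := by
      field_simp; ring
    have : 0 ≤ γ * h / 4 * (‖q‖ - 4 * c / γ * ‖b‖) ^ 2 := by positivity
    linarith
  -- bounds on the coefficients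
  have k1 : (4 * h * c ^ 2 / γ) * ‖b‖ ^ 2 ≤ h * (m / γ) * (1 + ‖x‖ ^ 2) := by
    calc _ ≤ (4 * h * c ^ 2 / γ) * (2 * C₁ ^ 2 * (1 + ‖x‖ ^ 2)) := by gcongr
      _ = h / γ ^ 3 * (32 * C₁ ^ 2) * (1 + ‖x‖ ^ 2) := by rw [hc]; field_simp; ring
      _ ≤ h / γ ^ 3 * (m * γ ^ 2) * (1 + ‖x‖ ^ 2) := by gcongr ?_ * ?_ * _; exact hp.hγ2
      _ = _ := by field_simp
  have k2 : (h * c) ^ 2 * ‖b‖ ^ 2 ≤ h * (m / γ) * (1 + ‖x‖ ^ 2) := by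
    calc _ ≤ (h * c) ^ 2 * (2 * C₁ ^ 2 * (1 + ‖x‖ ^ 2)) := by gcongr
      _ = h / γ ^ 2 * (8 * h * C₁ ^ 2) * (1 + ‖x‖ ^ 2) := by rw [hc]; field_simp; ring
      _ ≤ h / γ ^ 2 * (m * γ) * (1 + ‖x‖ ^ 2) := by gcongr ?_ * ?_ * _; exact hp.h2
      _ = _ := by field_simp
  have k3 : -(2 * (h * c) * ⟪x, b⟫) ≤ -(2 * (h * c) * (m * ‖x‖ ^ 2 - C₀)) := by
    have := mul_le_mul_of_nonneg_left hdr (by positivity : 0 ≤ 2 * (h * c))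
    linarith
  have k4 : 2 * (h * c) * (m * ‖x‖ ^ 2 - C₀) = 4 * h * (m / γ) * ‖x‖ ^ 2 - 4 * C₀ / γ * h := by
    rw [hc]; field_simp; ring
  have k5 : 3 / 4 * (γ * h) * ‖q‖ ^ 2 ≤ 2 * τ * (1 - τ) * ‖q‖ ^ 2 := by
    rw [show 3 / 4 * (γ * h) = 2 * τ * (3 / 4) by rw [hτ]; ring]
    gcongr; linarith
  have k6 : m / (4 * γ) * h * (‖x‖ ^ 2 + (‖x‖ ^ 2 + 2 * ⟪x, q⟫ + ‖q‖ ^ 2)) ≤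
      2 * h * (m / γ) * ‖x‖ ^ 2 + γ * h / 2 * ‖q‖ ^ 2 := by
    have h1 : 2 * ⟪x, q⟫ ≤ ‖x‖ ^ 2 + ‖q‖ ^ 2 := by
      have := real_inner_le_norm x q
      nlinarith only [this, sq_nonneg (‖x‖ - ‖q‖)]
    have h2 : m / (4 * γ) * h * 2 ≤ γ * h / 2 := by
      have := hp.hm2
      rw [show m / (4 * γ) * h * 2 = h / (2 * γ) * m by field_simp; ring,
        show γ * h / 2 = h / (2 * γ) * γ ^ 2 by field_simp]
      gcongr
    calc _ ≤ m / (4 * γ) * h * (‖x‖ ^ 2 + (‖x‖ ^ 2 + (‖x‖ ^ 2 + ‖q‖ ^ 2) + ‖q‖ ^ 2)) := by gcongr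
      _ = 3 / 4 * (h * (m / γ) * ‖x‖ ^ 2) + m / (4 * γ) * h * 2 * ‖q‖ ^ 2 := by field_simp; ring
      _ ≤ 3 / 4 * (h * (m / γ) * ‖x‖ ^ 2) + γ * h / 2 * ‖q‖ ^ 2 := by gcongr
      _ ≤ _ := by
        have : 0 ≤ h * (m / γ) * ‖x‖ ^ 2 := by positivity
        linarith
  have k7 : (4 * C₀ + 2 * m) / γ * h = 4 * C₀ / γ * h + 2 * (h * (m / γ)) := by ring
  rw [k7]
  linarith

/-- scalar bookkeeping for the fourth moment -/
lemma lyap_scalar {κ K h N A2 A4 D : ℝ} (hκ : 0 < κ) (hK : 0 ≤ K) (hh : 0 < h) (hh1 : h ≤ 1)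
    (hκh : κ * h ≤ 1) (hN : 0 ≤ N) (hA2 : 0 ≤ A2) (hA4 : 0 ≤ A4) (hD0 : 0 ≤ D)
    (hD : D ≤ (1 - κ * h) * N + K * h) :
    D ^ 2 + 10 * D * (h * A2) + 2 * (h ^ 2 * A4) ≤ (1 - κ / 2 * h) * N ^ 2 +
      h * ((2 * K + 10 * A2) ^ 2 / (2 * κ) + K ^ 2 + 10 * A2 * K + 2 * A4) := by
  have h1 : D ^ 2 ≤ ((1 - κ * h) * N + K * h) ^ 2 := by gcongr
  have hκh0 : 0 ≤ κ * h := by positivity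
  have h2 : ((1 - κ * h) * N + K * h) ^ 2 ≤ (1 - κ * h) * N ^ 2 + 2 * K * h * N + K ^ 2 * h := by
    have a1 : (1 - κ * h) ^ 2 * N ^ 2 ≤ (1 - κ * h) * N ^ 2 := by
      gcongr; nlinarith
    have a2 : (1 - κ * h) * (2 * K * h * N) ≤ 1 * (2 * K * h * N) := by gcongr; linarith
    have a3 : K ^ 2 * h * h ≤ K ^ 2 * h * 1 := by gcongr
    nlinarith only [a1, a2, a3]
  have h3 : D ≤ N + K := by
    have a1 : (1 - κ * h) * N ≤ 1 * N := by gcongr; linarith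
    have a2 : K * h ≤ K * 1 := by gcongr
    linarith
  have h4 : 10 * D * (h * A2) ≤ 10 * (N + K) * (h * A2) := by gcongr
  have h5 : h ^ 2 * A4 ≤ h * A4 := by
    have : h ^ 2 ≤ h := by nlinarith
    gcongr
  have h6 : (2 * K + 10 * A2) * N ≤ κ / 2 * N ^ 2 + (2 * K + 10 * A2) ^ 2 / (2 * κ) := by
    have e : κ / 2 * N ^ 2 + (2 * K + 10 * A2) ^ 2 / (2 * κ) - (2 * K + 10 * A2) * N =
      κ / 2 * (N - (2 * K + 10 * A2) / κ) ^ 2 := by field_simp; ring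
    have : 0 ≤ κ / 2 * (N - (2 * K + 10 * A2) / κ) ^ 2 := by positivity
    linarith
  have h7 := mul_le_mul_of_nonneg_left h6 hh.le
  nlinarith only [h1, h2, h4, h5, h7]

variable [FiniteDimensional ℝ E]
  [MeasurableSpace E] [BorelSpace E] {Ω' : Type*} [MeasurableSpace Ω']
variable {γ m C₀ C₁ h : ℝ} {G : E → E}
  {ν : Measure E} {μ : Measure Ω'} {b : E → Ω' → E}

/-- the constant in the Lyapunov inequality -/
noncomputable def lyapK (ν : Measure E) (γ m C₀ : ℝ) : ℝ :=
  (2 * ((4 * C₀ + 2 * m) / γ) + 10 * (8 / γ * ∫ ξ, ‖ξ‖ ^ 2 ∂ν)) ^ 2 / (2 * (m / (4 * γ))) +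
    ((4 * C₀ + 2 * m) / γ) ^ 2 + 10 * (8 / γ * ∫ ξ, ‖ξ‖ ^ 2 ∂ν) * ((4 * C₀ + 2 * m) / γ) +
    2 * ((8 / γ) ^ 2 * ∫ ξ, ‖ξ‖ ^ 4 ∂ν)

lemma lyap_step (hν : NuHyp ν) (hp : Par γ m C₁ h) (hC₀ : 0 < C₀)
    (hb : BHyp m C₀ C₁ μ G b) (z : E × E) :
    ∫⁻ p, ENNReal.ofReal (Nsq (2 / γ) (step γ h b z p) ^ 2) ∂(ν.prod μ) ≤
      ENNReal.ofReal ((1 - m / (4 * γ) / 2 * h) * Nsq (2 / γ) z ^ 2 + h * lyapK ν γ m C₀) := by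
  have := hν.prob
  have := hb.prob
  have hγ := hp.γ0; have hh := hp.h0; have hC := hp.C0; have hm := hp.m0
  set c := 2 / γ with hc
  have hc0 : 0 < c := by positivity
  set s := Real.sqrt (2 * γ * h) with hs
  have hs2 : s ^ 2 = 2 * γ * h := Real.sq_sqrt (by positivity)
  set A2 := 8 / γ * ∫ ξ, ‖ξ‖ ^ 2 ∂ν
  set A4 := (8 / γ) ^ 2 * ∫ ξ, ‖ξ‖ ^ 4 ∂ν
  set x := z.1
  set q := c • z.2 with hq
  have hmeas : Measurable (fun p => ENNReal.ofReal (Nsq c (step γ h b z p) ^ 2)) := by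
    have h1 : Measurable (fun p : E × Ω' => step γ h b z p) :=
      (measurable_step hb).comp measurable_prodMk_left
    have h2 : Continuous (Nsq (E := E) c) := by unfold Nsq; fun_prop
    exact ((h2.measurable.comp h1).pow_const 2).ennreal_ofReal
  rw [lintegral_prod_symm _ hmeas.aemeasurable]
  set R := (1 - m / (4 * γ) / 2 * h) * Nsq c z ^ 2 + h * lyapK ν γ m C₀ with hR
  have inner : ∀ ω, ∫⁻ ξ, ENNReal.ofReal (Nsq c (step γ h b z (ξ, ω)) ^ 2) ∂ν ≤ ENNReal.ofReal R := by
    intro ω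
    set w := x + (1 - γ * h / 2) • q - (h * c) • b x ω with hw
    set D := ‖x + (γ * h / 2) • q‖ ^ 2 + ‖w‖ ^ 2 with hD
    have hDb := lyap_det hp hC₀ x q (b x ω) (hb.growth _ _) (hb.drift _ _)
    have hN : ∀ ξ, Nsq c (step γ h b z (ξ, ω)) = D + 2 * ((c * s) * ⟪w, ξ⟫) + 8 / γ * h * ‖ξ‖ ^ 2 := by
      intro ξ
      have e1 : z.1 + h • z.2 = x + (γ * h / 2) • q := by
        rw [hq, smul_smul, hc]; congr 2; field_simp
      have e2 : z.1 + h • z.2 + c • (z.2 - h • b z.1 ω - (γ * h) • z.2 + s • ξ) =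
          w + (c * s) • ξ := by
        have : h = γ * h / 2 * c := by rw [hc]; field_simp
        have h3 : h • z.2 = (γ * h / 2) • c • z.2 := by rw [smul_smul, ← this]
        rw [h3, hw, hq]
        module
      unfold Nsq step
      simp only
      rw [e2, e1, norm_add_sq_real w, inner_smul_right, norm_smul, mul_pow, Real.norm_eq_abs, sq_abs,
        mul_pow, hs2, hD]
      rw [hc]; field_simp; ring
    have hpt : ∀ ξ, Nsq c (step γ h b z (ξ, ω)) ^ 2 ≤
        (D ^ 2 + 4 * D * (c * s) * ⟪w, ξ⟫) + (10 * D * (8 / γ * h) * ‖ξ‖ ^ 2 +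
          2 * (8 / γ * h) ^ 2 * ‖ξ‖ ^ 4) := by
      intro ξ
      rw [hN]
      have h1 : ((c * s) * ⟪w, ξ⟫) ^ 2 ≤ D * (8 / γ * h * ‖ξ‖ ^ 2) := by
        have h2 : ⟪w, ξ⟫ ^ 2 ≤ (‖w‖ * ‖ξ‖) ^ 2 := sq_le_sq.2
          ((abs_real_inner_le_norm w ξ).trans (le_abs_self _))
        have h3 : ‖w‖ ^ 2 ≤ D := by rw [hD]; linarith [sq_nonneg ‖x + (γ * h / 2) • q‖]
        have h4 : (c * s) ^ 2 = 8 / γ * h := by rw [mul_pow, hs2, hc]; field_simp; ring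
        rw [mul_pow, h4]
        calc _ ≤ 8 / γ * h * (‖w‖ * ‖ξ‖) ^ 2 := by gcongr
          _ = ‖w‖ ^ 2 * (8 / γ * h * ‖ξ‖ ^ 2) := by ring
          _ ≤ _ := by gcongr
      set t := (c * s) * ⟪w, ξ⟫
      set e := 8 / γ * h * ‖ξ‖ ^ 2 with he
      have e4 : 2 * (8 / γ * h) ^ 2 * ‖ξ‖ ^ 4 = 2 * e ^ 2 := by rw [he]; ring
      have e5 : 10 * D * (8 / γ * h) * ‖ξ‖ ^ 2 = 10 * D * e := by rw [he]; ring
      have e6 : 4 * D * (c * s) * ⟪w, ξ⟫ = 4 * D * t := by ring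
      rw [e4, e5, e6]
      nlinarith only [h1, sq_nonneg (2 * t - e)]
    have i1 : Integrable (fun ξ => 4 * D * (c * s) * ⟪w, ξ⟫) ν := by
      have : Integrable (fun ξ => ⟪w, ξ⟫) ν := (innerSL ℝ w).integrable_comp hν.mom1'
      exact this.const_mul _
    have i1' : Integrable (fun ξ => D ^ 2 + 4 * D * (c * s) * ⟪w, ξ⟫) ν := (integrable_const _).add i1
    have i2 : Integrable (fun ξ : E => 10 * D * (8 / γ * h) * ‖ξ‖ ^ 2) ν := hν.mom2.const_mul _
    have i3 : Integrable (fun ξ : E => 2 * (8 / γ * h) ^ 2 * ‖ξ‖ ^ 4) ν := hν.mom4.const_mul _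
    have i23 : Integrable (fun ξ : E => 10 * D * (8 / γ * h) * ‖ξ‖ ^ 2 +
        2 * (8 / γ * h) ^ 2 * ‖ξ‖ ^ 4) ν := i2.add i3
    have hz : ∫ ξ, ⟪w, ξ⟫ ∂ν = 0 := by
      have := (innerSL ℝ w).integral_comp_comm hν.mom1'
      rw [hν.mean] at this
      simpa using this
    calc _ ≤ ∫⁻ ξ, ENNReal.ofReal ((D ^ 2 + 4 * D * (c * s) * ⟪w, ξ⟫) +
          (10 * D * (8 / γ * h) * ‖ξ‖ ^ 2 + 2 * (8 / γ * h) ^ 2 * ‖ξ‖ ^ 4)) ∂ν :=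
          lintegral_mono fun ξ => ENNReal.ofReal_le_ofReal (hpt ξ)
      _ = ENNReal.ofReal (∫ ξ, ((D ^ 2 + 4 * D * (c * s) * ⟪w, ξ⟫) +
          (10 * D * (8 / γ * h) * ‖ξ‖ ^ 2 + 2 * (8 / γ * h) ^ 2 * ‖ξ‖ ^ 4)) ∂ν) := by
          exact (ofReal_integral_eq_lintegral_ofReal (i1'.add i23)
            (Filter.Eventually.of_forall fun ξ => (sq_nonneg _).trans (hpt ξ))).symm
      _ ≤ _ := by
          refine ENNReal.ofReal_le_ofReal ?_
          rw [integral_add i1' i23, integral_add (integrable_const _) i1, integral_add i2 i3,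
            integral_const_mul, integral_const_mul, integral_const_mul, hz]
          have hsc := lyap_scalar (κ := m / (4 * γ)) (K := (4 * C₀ + 2 * m) / γ) (h := h)
            (N := Nsq c z) (A2 := A2) (A4 := A4) (D := D) (by positivity) (by positivity) hh hp.h3
            (by
              have := hp.half_le_rate
              unfold rate at this
              have e : m / (4 * γ) * h = 8 * (m / (32 * γ) * h) := by field_simp; ring
              have h1 := hp.hm2; have h2 := hp.h1
              rw [div_mul_eq_mul_div, div_le_one (by positivity)]
              nlinarith) (Nsq_nonneg _ _)
            (mul_nonneg (by positivity) (integral_nonneg fun _ => by positivity))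
            (mul_nonneg (by positivity) (integral_nonneg fun _ => by positivity))
            (by positivity) hDb
          rw [hR]
          unfold lyapK
          refine le_trans (le_of_eq ?_) hsc
          simp only [integral_const, probReal_univ, one_smul]
          simp only [A2, A4]
          ring
  calc _ ≤ ∫⁻ _, ENNReal.ofReal R ∂μ := lintegral_mono inner
    _ = _ := by simp

end Lyap
end SGEM


open MeasureTheory ProbabilityTheory RealInnerProductSpace
open scoped ENNReal

namespace SGEM

section Gauss
variable (E : Type*) [NormedAddCommGroup E] [InnerProductSpace ℝ E] [FiniteDimensional ℝ E]
  [MeasurableSpace E] [BorelSpace E]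

lemma nuHyp_std : NuHyp (stdGaussian E) where
  prob := inferInstance
  mom4 := by
    have h : MemLp (id : E → E) 4 (stdGaussian E) := IsGaussian.memLp_id _ 4 (by simp)
    have := h.integrable_norm_pow (by norm_num)
    simpa using this
  mean := integral_id_stdGaussian

lemma integrable_rexp_neg {β : ℝ} (hβ : 0 < β) : Integrable (fun v : E => Real.exp (-(β * ‖v‖ ^ 2))) := by
  have h := (GaussianFourier.integrable_cexp_neg_mul_sq_norm_add (V := E) (b := (β : ℂ))
    (by simpa using hβ) 0 0).re
  refine h.congr (Filter.Eventually.of_forall fun v => ?_)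
  have : -(β : ℂ) * (‖v‖ : ℂ) ^ 2 + 0 * ((⟪(0 : E), v⟫ : ℝ) : ℂ) = ((-(β * ‖v‖ ^ 2) : ℝ) : ℂ) := by
    push_cast; ring
  simp only [this, ← Complex.ofReal_exp]
  exact Complex.ofReal_re _

/-- normalisation of the Gaussian density -/
noncomputable def Zc : ℝ := ∫ v : E, Real.exp (-(‖v‖ ^ 2 / 2))

lemma integrable_gauss : Integrable (fun v : E => Real.exp (-(‖v‖ ^ 2 / 2))) := by
  have := integrable_rexp_neg E (β := 1 / 2) (by norm_num)
  refine this.congr (Filter.Eventually.of_forall fun v => ?_)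
  simp only; congr 1; ring

lemma Zc_pos : 0 < Zc E := integral_exp_pos (integrable_gauss E)

lemma std_eq : volume.withDensity (fun v : E => ENNReal.ofReal ((Zc E)⁻¹ * Real.exp (-(‖v‖ ^ 2 / 2)))) =
    stdGaussian E := by
  have hZ := Zc_pos E
  have hi := (integrable_gauss E).const_mul (Zc E)⁻¹
  have : IsFiniteMeasure (volume.withDensity
    (fun v : E => ENNReal.ofReal ((Zc E)⁻¹ * Real.exp (-(‖v‖ ^ 2 / 2))))) :=
    isFiniteMeasure_withDensity_ofReal hi.2
  apply Measure.ext_of_charFun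
  ext t
  rw [charFun_stdGaussian, charFun_apply, integral_withDensity_eq_integral_toReal_smul (by fun_prop)
    (Filter.Eventually.of_forall fun v => ENNReal.ofReal_lt_top)]
  have e : ∀ v : E, (ENNReal.ofReal ((Zc E)⁻¹ * Real.exp (-(‖v‖ ^ 2 / 2)))).toReal •
      Complex.exp ((⟪v, t⟫ : ℝ) * Complex.I) = ((Zc E)⁻¹ : ℂ) *
        Complex.exp (-(1 / 2 : ℂ) * ‖v‖ ^ 2 + Complex.I * (⟪t, v⟫ : ℝ)) := by
    intro v
    rw [ENNReal.toReal_ofReal (by positivity), Complex.real_smul, Complex.exp_add]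
    push_cast
    rw [real_inner_comm]
    rw [show -((‖v‖ : ℂ) ^ 2 / 2) = -(1 / 2 : ℂ) * ‖v‖ ^ 2 by ring, mul_comm Complex.I]
    ring
  simp_rw [e]
  have hb : (0 : ℝ) < (1 / 2 : ℂ).re := by norm_num
  rw [integral_const_mul, GaussianFourier.integral_cexp_neg_mul_sq_norm_add hb]
  have h0 := GaussianFourier.integral_cexp_neg_mul_sq_norm_add (V := E) hb 0 0
  have h1 : ((Zc E : ℝ) : ℂ) = ∫ v : E, Complex.exp (-(1 / 2 : ℂ) * ‖v‖ ^ 2 + 0 * (⟪(0 : E), v⟫ : ℝ)) := by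
    unfold Zc
    rw [← integral_complex_ofReal]
    congr 1
    ext v
    push_cast
    congr 1
    ring
  rw [h0] at h1
  simp only [ne_eq, OfNat.ofNat_ne_zero, not_false_eq_true, zero_pow, zero_mul, zero_div,
    Complex.exp_zero, mul_one] at h1
  rw [← h1, ← mul_assoc, inv_mul_cancel₀ (by exact_mod_cast hZ.ne'), one_mul, Complex.I_sq]
  congr 1
  ring

lemma gauss_int (φ : E → ℝ) : ∫ v : E, φ v * Real.exp (-(‖v‖ ^ 2 / 2)) = Zc E * ∫ v, φ v ∂(stdGaussian E) := by
  have hZ := Zc_pos E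
  rw [← std_eq, integral_withDensity_eq_integral_toReal_smul (by fun_prop)
    (Filter.Eventually.of_forall fun v => ENNReal.ofReal_lt_top), ← integral_const_mul]
  congr 1
  ext v
  rw [ENNReal.toReal_ofReal (by positivity), smul_eq_mul]
  field_simp

lemma std_rot {η σ : ℝ} (h : η ^ 2 + σ ^ 2 = 1) :
    ((stdGaussian E).prod (stdGaussian E)).map (fun p : E × E => η • p.1 + σ • p.2) = stdGaussian E := by
  have : IsFiniteMeasure (((stdGaussian E).prod (stdGaussian E)).map
    (fun p : E × E => η • p.1 + σ • p.2)) := Measure.isFiniteMeasure_map _ _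
  apply Measure.ext_of_charFun
  ext t
  rw [charFun_stdGaussian, charFun_apply, integral_map (by fun_prop) (by fun_prop)]
  have e : ∀ p : E × E, Complex.exp ((⟪η • p.1 + σ • p.2, t⟫ : ℝ) * Complex.I) =
      Complex.exp ((⟪p.1, η • t⟫ : ℝ) * Complex.I) * Complex.exp ((⟪p.2, σ • t⟫ : ℝ) * Complex.I) := by
    intro p
    rw [← Complex.exp_add, inner_add_left, real_inner_smul_left, real_inner_smul_left,
      real_inner_smul_right, real_inner_smul_right]
    push_cast
    ring_nf
  simp_rw [e]
  rw [integral_prod_mul (fun x : E => Complex.exp ((⟪x, η • t⟫ : ℝ) * Complex.I))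
    (fun x : E => Complex.exp ((⟪x, σ • t⟫ : ℝ) * Complex.I)), ← charFun_apply, ← charFun_apply,
    charFun_stdGaussian, charFun_stdGaussian, ← Complex.exp_add, norm_smul, norm_smul]
  congr 1
  have h' : ((|η| : ℝ) : ℂ) ^ 2 + ((|σ| : ℝ) : ℂ) ^ 2 = 1 := by
    exact_mod_cast (by rw [sq_abs, sq_abs]; exact h)
  simp only [Real.norm_eq_abs]
  push_cast
  linear_combination (-(‖t‖ : ℂ) ^ 2 / 2) * h'

end Gauss
end SGEM


open MeasureTheory ProbabilityTheory RealInnerProductSpace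
open scoped ENNReal

namespace SGEM

section Pot
variable {E : Type*} [NormedAddCommGroup E] [InnerProductSpace ℝ E]
variable {m C₁ : ℝ} {G : E → E} {DG : E → E →L[ℝ] E} {U : E → ℝ}

lemma U_lower (hG : GradHyp m C₁ G DG) (hU : ∀ x, HasFDerivAt U (innerSL ℝ (G x)) x) (x : E) :
    U 0 + ⟪G 0, x⟫ + m / 2 * ‖x‖ ^ 2 ≤ U x := by
  set F : ℝ → ℝ := fun t => U (t • x) - t * ⟪G 0, x⟫ - m / 2 * t ^ 2 * ‖x‖ ^ 2 with hF
  have hd : ∀ t : ℝ, HasDerivAt F (⟪G (t • x), x⟫ - ⟪G 0, x⟫ - m * t * ‖x‖ ^ 2) t := by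
    intro t
    have h1 : HasDerivAt (fun t : ℝ => t • x) x t := by
      simpa using (hasDerivAt_id t).smul_const x
    have h2 := (hU (t • x)).comp_hasDerivAt t h1
    have h3 : HasDerivAt (fun t : ℝ => t * ⟪G 0, x⟫) ⟪G 0, x⟫ t := by
      simpa using (hasDerivAt_id t).mul_const ⟪G 0, x⟫
    have h4 : HasDerivAt (fun t : ℝ => m / 2 * t ^ 2 * ‖x‖ ^ 2) (m * t * ‖x‖ ^ 2) t := by
      have := ((hasDerivAt_pow 2 t).const_mul (m / 2)).mul_const (‖x‖ ^ 2)
      exact this.congr_deriv (by push_cast; ring)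
    exact (h2.sub h3).sub h4
  have hmono : MonotoneOn F (Set.Icc 0 1) := by
    refine monotoneOn_of_deriv_nonneg (convex_Icc 0 1)
      (fun t _ => (hd t).continuousAt.continuousWithinAt)
      (fun t _ => (hd t).differentiableAt.differentiableWithinAt) fun t ht => ?_
    rw [interior_Icc] at ht
    rw [(hd t).deriv]
    have h1 := hG.mono (t • x) 0
    rw [sub_zero, norm_smul, Real.norm_of_nonneg ht.1.le, real_inner_smul_left, inner_sub_right,
      real_inner_comm, real_inner_comm (G 0)] at h1
    have h2 : t * (m * t * ‖x‖ ^ 2) ≤ t * (⟪G (t • x), x⟫ - ⟪G 0, x⟫) := by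
      calc _ = m * (t * ‖x‖) ^ 2 := by ring
        _ ≤ _ := h1
    have := le_of_mul_le_mul_left h2 ht.1
    linarith
  have := hmono (by simp : (0:ℝ) ∈ Set.Icc (0:ℝ) 1) (by simp : (1:ℝ) ∈ Set.Icc (0:ℝ) 1) zero_le_one
  simp only [hF] at this
  simp at this
  linarith

lemma U_lower' (hm : 0 < m) (hG : GradHyp m C₁ G DG) (hU : ∀ x, HasFDerivAt U (innerSL ℝ (G x)) x) (x : E) :
    m / 4 * ‖x‖ ^ 2 - (‖G 0‖ ^ 2 / m - U 0) ≤ U x := by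
  have h1 := U_lower hG hU x
  have h2 : -⟪G 0, x⟫ ≤ ‖G 0‖ * ‖x‖ := by
    have := abs_real_inner_le_norm (G 0) x
    linarith [neg_abs_le ⟪G 0, x⟫]
  have h3 : ‖G 0‖ * ‖x‖ ≤ m / 4 * ‖x‖ ^ 2 + ‖G 0‖ ^ 2 / m := by
    have e : m / 4 * ‖x‖ ^ 2 + ‖G 0‖ ^ 2 / m - ‖G 0‖ * ‖x‖ = m / 4 * (‖x‖ - 2 * ‖G 0‖ / m) ^ 2 := by
      field_simp; ring
    have : 0 ≤ m / 4 * (‖x‖ - 2 * ‖G 0‖ / m) ^ 2 := by positivity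
    linarith
  linarith

lemma U_taylor (hC : 0 ≤ C₁) (hG : GradHyp m C₁ G DG) (hU : ∀ x, HasFDerivAt U (innerSL ℝ (G x)) x) (x y : E) :
    |U y - U x - ⟪G x, y - x⟫| ≤ C₁ * ‖y - x‖ ^ 2 := by
  have h := taylor_two (F := E) (ψ := U) (Dψ := fun x => innerSL ℝ (G x)) hC hU (fun v w => by
    rw [← map_sub, innerSL_apply_norm]; exact hG.lipG v w) x x y
  simp only [sub_self, norm_zero, zero_add, innerSL_apply_apply] at h
  refine h.trans (le_of_eq (by ring))

/-- unnormalised Boltzmann density -/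
noncomputable def rho (U : E → ℝ) (z : E × E) : ℝ := Real.exp (-(‖z.2‖ ^ 2 / 2 + U z.1))

lemma rho_pos (z : E × E) : 0 < rho U z := Real.exp_pos _

/-- symplectic Euler map -/
noncomputable def S0 (h : ℝ) (G : E → E) (z : E × E) : E × E :=
  (z.1 + h • z.2, z.2 - h • G (z.1 + h • z.2))

lemma S0_norm {h : ℝ} (hh : 0 < h) (hh1 : h ≤ 1) (hC : 0 < C₁) (hG : GradHyp m C₁ G DG) (z : E × E) :
    1 + ‖S0 h G z‖ ≤ (2 + 2 * C₁) * (1 + ‖z‖) := by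
  have h1 := norm_fst_le z
  have h2 := norm_snd_le z
  have h3 : ‖z.1 + h • z.2‖ ≤ 2 * ‖z‖ := by
    refine (norm_add_le _ _).trans ?_
    rw [norm_smul, Real.norm_of_nonneg hh.le]
    have : h * ‖z.2‖ ≤ 1 * ‖z‖ := by gcongr
    linarith
  have h4 := hG.growth (z.1 + h • z.2)
  have h0 := norm_nonneg z
  have h5 : ‖z.2 - h • G (z.1 + h • z.2)‖ ≤ ‖z‖ + 2 * C₁ * (1 + ‖z‖) := by
    refine (norm_sub_le _ _).trans ?_
    rw [norm_smul, Real.norm_of_nonneg hh.le]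
    have : h * ‖G (z.1 + h • z.2)‖ ≤ 1 * (C₁ * (2 * ‖z‖ + 1)) := by
      gcongr
      exact h4.trans (by gcongr)
    nlinarith
  have h6 : ‖S0 h G z‖ ≤ 2 * ‖z‖ + 2 * C₁ * (1 + ‖z‖) := by
    rw [Prod.norm_def]
    refine max_le ?_ ?_
    · have : 0 ≤ 2 * C₁ * (1 + ‖z‖) := by positivity
      exact h3.trans (by linarith)
    · exact h5.trans (by linarith)
  linarith

lemma S0_norm' {h : ℝ} (hh : 0 < h) (hh1 : h ≤ 1) (hC : 0 < C₁) (hG : GradHyp m C₁ G DG) (z : E × E) :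
    1 + ‖z‖ ≤ (2 + 2 * C₁) * (1 + ‖S0 h G z‖) := by
  set y := S0 h G z with hy
  have h1 : ‖z.1 + h • z.2‖ ≤ ‖y‖ := norm_fst_le y
  have h2 : ‖z.2 - h • G (z.1 + h • z.2)‖ ≤ ‖y‖ := norm_snd_le y
  have h4 := hG.growth (z.1 + h • z.2)
  have h0 := norm_nonneg y
  have h5 : ‖z.2‖ ≤ ‖y‖ + C₁ * (1 + ‖y‖) := by
    have e : z.2 = (z.2 - h • G (z.1 + h • z.2)) + h • G (z.1 + h • z.2) := by abel
    have h6 := norm_add_le (z.2 - h • G (z.1 + h • z.2)) (h • G (z.1 + h • z.2))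
    rw [← e, norm_smul, Real.norm_of_nonneg hh.le] at h6
    have : h * ‖G (z.1 + h • z.2)‖ ≤ 1 * (C₁ * (‖y‖ + 1)) := by
      gcongr
      exact h4.trans (by gcongr)
    linarith
  have h7 : ‖z.1‖ ≤ ‖y‖ + ‖z.2‖ := by
    have e : z.1 = (z.1 + h • z.2) - h • z.2 := by abel
    have h6 := norm_sub_le (z.1 + h • z.2) (h • z.2)
    rw [← e, norm_smul, Real.norm_of_nonneg hh.le] at h6
    have : h * ‖z.2‖ ≤ 1 * ‖z.2‖ := by gcongr
    linarith
  have h8 : ‖z‖ ≤ 2 * ‖y‖ + C₁ * (1 + ‖y‖) := by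
    rw [Prod.norm_def]
    refine max_le (by linarith) (by linarith)
  have : 0 ≤ C₁ * (1 + ‖y‖) := by positivity
  linarith

lemma ham_diff {h : ℝ} (hh : 0 < h) (hh1 : h ≤ 1) (hC : 0 < C₁) (hG : GradHyp m C₁ G DG)
    (hU : ∀ x, HasFDerivAt U (innerSL ℝ (G x)) x) (z : E × E) :
    |(‖(S0 h G z).2‖ ^ 2 / 2 + U (S0 h G z).1) - (‖z.2‖ ^ 2 / 2 + U z.1)| ≤
      (2 * C₁ ^ 2 + C₁) * h ^ 2 * (1 + ‖z‖) ^ 2 := by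
  set x1 := z.1 + h • z.2 with hx1
  have e : S0 h G z = (x1, z.2 - h • G x1) := rfl
  rw [e]
  simp only
  have h1 := U_taylor hC.le hG hU x1 z.1
  have e1 : z.1 - x1 = -(h • z.2) := by rw [hx1]; abel
  rw [e1, norm_neg, norm_smul, Real.norm_of_nonneg hh.le, inner_neg_right, inner_smul_right] at h1
  have h2 := norm_fst_le z
  have h3 := norm_snd_le z
  have h0 := norm_nonneg z
  have h4 : ‖x1‖ ≤ 2 * ‖z‖ := by
    refine (norm_add_le _ _).trans ?_
    rw [norm_smul, Real.norm_of_nonneg hh.le]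
    have : h * ‖z.2‖ ≤ 1 * ‖z‖ := by gcongr
    linarith
  have h5 : ‖G x1‖ ≤ C₁ * (2 * (1 + ‖z‖)) := (hG.growth x1).trans (by gcongr; linarith)
  have h6 : ‖z.2 - h • G x1‖ ^ 2 = ‖z.2‖ ^ 2 - 2 * h * ⟪G x1, z.2⟫ + h ^ 2 * ‖G x1‖ ^ 2 := by
    rw [norm_sub_sq_real, inner_smul_right, norm_smul, Real.norm_of_nonneg hh.le, real_inner_comm]
    ring
  rw [h6]
  have h7 : ‖G x1‖ ^ 2 ≤ (C₁ * (2 * (1 + ‖z‖))) ^ 2 := by gcongr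
  have h8 : C₁ * (h * ‖z.2‖) ^ 2 ≤ C₁ * (h * (1 + ‖z‖)) ^ 2 := by gcongr; linarith
  have h9 : h ^ 2 * ‖G x1‖ ^ 2 ≤ h ^ 2 * (C₁ * (2 * (1 + ‖z‖))) ^ 2 := by gcongr
  have h10 : 0 ≤ h ^ 2 * ‖G x1‖ ^ 2 := by positivity
  rw [abs_le] at h1 ⊢
  constructor <;> nlinarith only [h1.1, h1.2, h8, h9, h10]

lemma exp_diff (a b : ℝ) : |Real.exp (-a) - Real.exp (-b)| ≤ |b - a| * (Real.exp (-a) + Real.exp (-b)) := by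
  have key : ∀ a b : ℝ, a ≤ b → |Real.exp (-a) - Real.exp (-b)| ≤ |b - a| * (Real.exp (-a) + Real.exp (-b)) := by
    intro a b hab
    have h1 : Real.exp (-b) ≤ Real.exp (-a) := Real.exp_le_exp.2 (by linarith)
    rw [abs_of_nonneg (by linarith), abs_of_nonneg (by linarith)]
    have h2 : Real.exp (-b) = Real.exp (-a) * Real.exp (a - b) := by
      rw [← Real.exp_add]; congr 1; ring
    have h3 := Real.add_one_le_exp (a - b)
    have h4 := Real.exp_pos (-a)
    have h5 := Real.exp_pos (-b)
    have h6 : Real.exp (-a) * (a - b + 1) ≤ Real.exp (-b) := by rw [h2]; gcongr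
    nlinarith
  rcases le_total a b with hab | hab
  · exact key a b hab
  · have := key b a hab
    rw [abs_sub_comm, abs_sub_comm b a, add_comm]; exact this

variable [FiniteDimensional ℝ E] [MeasurableSpace E] [BorelSpace E]

lemma integrable_rho3 (hm : 0 < m) (hG : GradHyp m C₁ G DG)
    (hU : ∀ x, HasFDerivAt U (innerSL ℝ (G x)) x) :
    Integrable (fun z : E × E => (1 + ‖z‖) ^ 3 * rho U z) := by
  have hUc : Continuous U := continuous_iff_continuousAt.2 fun x => (hU x).continuousAt
  obtain ⟨β, hβ, hβ1, hβ2⟩ : ∃ β : ℝ, 0 < β ∧ 2 * β ≤ 1 / 2 ∧ 2 * β ≤ m / 4 :=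
    ⟨min (1 / 4) (m / 8), by positivity, by linarith [min_le_left (1 / 4) (m / 8)],
      by linarith [min_le_right (1 / 4) (m / 8)]⟩
  set K := ‖G 0‖ ^ 2 / m - U 0
  have hi := ((integrable_rexp_neg E hβ).mul_prod (integrable_rexp_neg E hβ)).const_mul
    (Real.exp (K + 9 / (4 * β)))
  refine hi.mono' ?_ (Filter.Eventually.of_forall fun z => ?_)
  · refine Continuous.aestronglyMeasurable ?_
    unfold rho; fun_prop
  · have h0 : 0 ≤ (1 + ‖z‖) ^ 3 * rho U z := by have := rho_pos (U := U) z; positivity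
    rw [Real.norm_of_nonneg h0, ← Real.exp_add, ← Real.exp_add]
    have h1 : (1 + ‖z‖) ^ 3 ≤ Real.exp (9 / (4 * β) + β * ‖z‖ ^ 2) := by
      calc (1 + ‖z‖) ^ 3 ≤ Real.exp ‖z‖ ^ 3 := by
            gcongr; linarith [Real.add_one_le_exp ‖z‖]
        _ = Real.exp (3 * ‖z‖) := by rw [← Real.exp_nat_mul]; norm_num
        _ ≤ _ := by
            apply Real.exp_le_exp.2
            have e : 9 / (4 * β) + β * ‖z‖ ^ 2 - 3 * ‖z‖ = β * (‖z‖ - 3 / (2 * β)) ^ 2 := by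
              field_simp; ring
            have : 0 ≤ β * (‖z‖ - 3 / (2 * β)) ^ 2 := by positivity
            linarith
    have h2 : ‖z‖ ^ 2 ≤ ‖z.1‖ ^ 2 + ‖z.2‖ ^ 2 := by
      rw [Prod.norm_def]
      rcases max_cases ‖z.1‖ ‖z.2‖ with h | h <;> rw [h.1] <;>
        nlinarith [sq_nonneg ‖z.1‖, sq_nonneg ‖z.2‖]
    calc _ ≤ Real.exp (9 / (4 * β) + β * ‖z‖ ^ 2) * rho U z := by
          have := rho_pos (U := U) z; gcongr
      _ ≤ _ := by
          unfold rho
          rw [← Real.exp_add]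
          apply Real.exp_le_exp.2
          have h3 := U_lower' hm hG hU z.1
          have h4 := mul_le_mul_of_nonneg_left h2 hβ.le
          have h5 := mul_le_mul_of_nonneg_right hβ1 (sq_nonneg ‖z.2‖)
          have h6 := mul_le_mul_of_nonneg_right hβ2 (sq_nonneg ‖z.1‖)
          simp only [K]
          linarith

/-- third moment of the unnormalised Boltzmann measure -/
noncomputable def I3 (U : E → ℝ) : ℝ := ∫ z : E × E, (1 + ‖z‖) ^ 3 * rho U z

lemma integrable_growth (hm : 0 < m) (hG : GradHyp m C₁ G DG)
    (hU : ∀ x, HasFDerivAt U (innerSL ℝ (G x)) x) {F : E × E → ℝ} (hF : Continuous F) {A : ℝ}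
    (hFA : ∀ z, |F z| ≤ A * (1 + ‖z‖) ^ 3) : Integrable (fun z : E × E => F z * rho U z) := by
  have hUc : Continuous U := continuous_iff_continuousAt.2 fun x => (hU x).continuousAt
  refine ((integrable_rho3 hm hG hU).const_mul A).mono' ?_ (Filter.Eventually.of_forall fun z => ?_)
  · refine Continuous.aestronglyMeasurable ?_
    unfold rho; fun_prop
  · rw [norm_mul, Real.norm_of_nonneg (rho_pos z).le, ← mul_assoc]
    exact mul_le_mul_of_nonneg_right (hFA z) (rho_pos z).le

lemma mp_S0 {h : ℝ} (hGc : Continuous G) : MeasurePreserving (S0 h G) (volume : Measure (E × E)) volume := by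
  have h1 : MeasurePreserving (fun p : E × E => (p.1, p.2 + h • p.1)) (volume : Measure (E × E)) volume := by
    refine MeasurePreserving.skew_product (MeasurePreserving.id _) (g := fun x v => v + h • x) ?_ ?_
    · exact (by fun_prop : Continuous (fun p : E × E => p.2 + h • p.1)).measurable
    · exact Filter.Eventually.of_forall fun x => (measurePreserving_add_right volume (h • x)).map_eq
  have h2 : MeasurePreserving (fun p : E × E => (p.1, p.2 - h • G p.1)) (volume : Measure (E × E)) volume := by
    refine MeasurePreserving.skew_product (MeasurePreserving.id _) (g := fun x v => v - h • G x) ?_ ?_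
    · exact (by fun_prop : Continuous (fun p : E × E => p.2 - h • G p.1)).measurable
    · exact Filter.Eventually.of_forall fun x => (measurePreserving_sub_right volume (h • G x)).map_eq
  have hs : MeasurePreserving (Prod.swap : E × E → E × E) volume volume := Measure.measurePreserving_swap
  exact h2.comp (hs.comp (h1.comp hs))

lemma S0_invariance {h : ℝ} (hh : 0 < h) (hh1 : h ≤ 1) (hm : 0 < m) (hC : 0 < C₁)
    (hG : GradHyp m C₁ G DG) (hU : ∀ x, HasFDerivAt U (innerSL ℝ (G x)) x) {F : E × E → ℝ} {K : ℝ}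
    (hK : 0 ≤ K) (hF : Continuous F) (hL : ∀ z z', |F z - F z'| ≤ K * ‖z - z'‖) :
    |(∫ z, F (S0 h G z) * rho U z) - ∫ z, F z * rho U z| ≤
      K * h ^ 2 * (2 * (2 + 2 * C₁) ^ 4 * (2 * C₁ ^ 2 + C₁)) * I3 U := by
  have hUc : Continuous U := continuous_iff_continuousAt.2 fun x => (hU x).continuousAt
  have hGc : Continuous G := continuous_iff_continuousAt.2 fun x => (hG.der x).continuousAt
  have hSc : Continuous (S0 h G) := by unfold S0; fun_prop
  have hrc : Continuous (rho U) := by unfold rho; fun_prop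
  have hmp := mp_S0 (h := h) hGc
  set T := 2 + 2 * C₁ with hT
  have hT1 : 1 ≤ T := by rw [hT]; linarith
  have hcov : ∀ f : E × E → ℝ, Continuous f → ∫ z, f (S0 h G z) = ∫ z, f z := by
    intro f hf
    have := integral_map hmp.measurable.aemeasurable (f := f) (μ := volume) hf.aestronglyMeasurable
    rw [hmp.map_eq] at this
    exact this.symm
  have hicov : ∀ f : E × E → ℝ, Integrable f → Integrable (fun z => f (S0 h G z)) := by
    intro f hf
    exact hmp.integrable_comp_of_integrable hf
  set F' : E × E → ℝ := fun z => F z - F 0 with hF'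
  have hF'c : Continuous F' := by fun_prop
  have hF'b : ∀ z, |F' z| ≤ K * ‖z‖ := fun z => by have := hL z 0; simpa using this
  have hpow : ∀ z : E × E, ‖z‖ ≤ (1 + ‖z‖) ^ 3 := fun z => by
    have := norm_nonneg z
    nlinarith [pow_nonneg this 2, pow_nonneg this 3]
  have hone : ∀ z : E × E, (1:ℝ) ≤ (1 + ‖z‖) ^ 3 := fun z =>
    one_le_pow₀ (by linarith [norm_nonneg z])
  -- integrability
  have iρ : Integrable (fun z : E × E => rho U z) := by
    have := integrable_growth hm hG hU (F := fun _ => 1) (A := 1) continuous_const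
      (fun z => by simpa using hone z)
    simpa using this
  have iF : Integrable (fun z => F' z * rho U z) := integrable_growth hm hG hU (A := K) hF'c
    (fun z => (hF'b z).trans (by gcongr; exact hpow z))
  have iFS : Integrable (fun z => F' (S0 h G z) * rho U z) := integrable_growth hm hG hU
    (A := K * T) (hF'c.comp hSc) (fun z => by
      refine (hF'b _).trans ?_
      have h1 := S0_norm hh hh1 hC hG z
      have h2 : 1 + ‖z‖ ≤ (1 + ‖z‖) ^ 3 := le_self_pow₀ (by linarith [norm_nonneg z]) (by norm_num)
      calc _ ≤ K * (T * (1 + ‖z‖)) := by gcongr; linarith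
        _ ≤ K * (T * (1 + ‖z‖) ^ 3) := by gcongr
        _ = _ := by ring)
  have iFSS : Integrable (fun z => F' (S0 h G z) * rho U (S0 h G z)) := hicov _ iF
  have i3 := integrable_rho3 hm hG hU
  have i3S : Integrable (fun z => (1 + ‖S0 h G z‖) ^ 3 * rho U (S0 h G z)) := hicov _ i3
  -- reduce to F'
  have e1 : ∫ z, F (S0 h G z) * rho U z = (∫ z, F' (S0 h G z) * rho U z) + F 0 * ∫ z, rho U z := by
    rw [← integral_const_mul, ← integral_add iFS (iρ.const_mul _)]
    congr 1; ext z; simp only [hF']; ring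
  have e2 : ∫ z, F z * rho U z = (∫ z, F' z * rho U z) + F 0 * ∫ z, rho U z := by
    rw [← integral_const_mul, ← integral_add iF (iρ.const_mul _)]
    congr 1; ext z; simp only [hF']; ring
  have e3 : ∫ z, F' z * rho U z = ∫ z, F' (S0 h G z) * rho U (S0 h G z) :=
    (hcov (fun z => F' z * rho U z) (by fun_prop)).symm
  rw [e1, e2, e3, add_sub_add_right_eq_sub, ← integral_sub iFS iFSS]
  set B := (2 * C₁ ^ 2 + C₁) with hB
  have hB0 : 0 < B := by positivity
  have hpt : ∀ z, ‖F' (S0 h G z) * rho U z - F' (S0 h G z) * rho U (S0 h G z)‖ ≤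
      K * h ^ 2 * (T ^ 4 * B) * ((1 + ‖z‖) ^ 3 * rho U z + (1 + ‖S0 h G z‖) ^ 3 * rho U (S0 h G z)) := by
    intro z
    have hw := norm_nonneg z
    have hw' := norm_nonneg (S0 h G z)
    have r1 := rho_pos (U := U) z
    have r2 := rho_pos (U := U) (S0 h G z)
    have h1 := S0_norm hh hh1 hC hG z
    have h2 := S0_norm' hh hh1 hC hG z
    have h3 := ham_diff hh hh1 hC hG hU z
    have h4 : |rho U z - rho U (S0 h G z)| ≤ B * h ^ 2 * (1 + ‖z‖) ^ 2 * (rho U z + rho U (S0 h G z)) := by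
      refine (exp_diff _ _).trans ?_
      exact mul_le_mul_of_nonneg_right h3 (by positivity)
    rw [← mul_sub, norm_mul, Real.norm_eq_abs, Real.norm_eq_abs]
    have h5 : |F' (S0 h G z)| ≤ K * (T * (1 + ‖z‖)) := (hF'b _).trans (by gcongr; linarith)
    have h6 : (1 + ‖z‖) ^ 3 ≤ T ^ 3 * (1 + ‖S0 h G z‖) ^ 3 := by
      rw [← mul_pow]; gcongr
    have hT3 : 1 ≤ T ^ 3 := one_le_pow₀ hT1
    calc _ ≤ (K * (T * (1 + ‖z‖))) * (B * h ^ 2 * (1 + ‖z‖) ^ 2 * (rho U z + rho U (S0 h G z))) := by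
          gcongr
      _ = K * h ^ 2 * (T * B) * (1 * (1 + ‖z‖) ^ 3 * rho U z + (1 + ‖z‖) ^ 3 * rho U (S0 h G z)) := by ring
      _ ≤ K * h ^ 2 * (T * B) * (T ^ 3 * (1 + ‖z‖) ^ 3 * rho U z +
          T ^ 3 * (1 + ‖S0 h G z‖) ^ 3 * rho U (S0 h G z)) := by
          gcongr
      _ = _ := by ring
  rw [← Real.norm_eq_abs]
  refine (norm_integral_le_of_norm_le ((i3.add i3S).const_mul (K * h ^ 2 * (T ^ 4 * B)))
    (Filter.Eventually.of_forall hpt)).trans (le_of_eq ?_)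
  rw [integral_const_mul]
  simp only [Pi.add_apply]
  rw [integral_add i3 i3S, hcov (fun z => (1 + ‖z‖) ^ 3 * rho U z) (by fun_prop)]
  unfold I3
  ring

end Pot
end SGEM


open MeasureTheory ProbabilityTheory RealInnerProductSpace
open scoped ENNReal

namespace SGEM

section Inv
variable {E : Type*} [NormedAddCommGroup E] [InnerProductSpace ℝ E]
variable [FiniteDimensional ℝ E] [MeasurableSpace E] [BorelSpace E]
variable {m C₁ γ h σ : ℝ} {G : E → E} {DG : E → E →L[ℝ] E} {U : E → ℝ} {L M : ℝ}

/-- Ornstein-Uhlenbeck step -/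
noncomputable def Og (η σ : ℝ) (g : E × E → ℝ) (z : E × E) : ℝ :=
  ∫ ξ, g ((z.1, η • z.2) + (0, σ • ξ)) ∂(stdGaussian E)

lemma Qop_eq_Og (g : E × E → ℝ) (z : E × E) :
    Qop (stdGaussian E) γ h σ G g z = Og (1 - γ * h) σ g (S0 h G z) := rfl

lemma Og_lip {η σ K : ℝ} (hη : |η| ≤ 1) (hK : 0 ≤ K) {g : E × E → ℝ} (hgc : Continuous g)
    (hg : ∀ z z', |g z - g z'| ≤ K * ‖z - z'‖) (z z' : E × E) :
    |Og η σ g z - Og η σ g z'| ≤ K * ‖z - z'‖ := by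
  unfold Og
  rw [← integral_sub (integrable_lip (nuHyp_std E) hgc hg _ σ) (integrable_lip (nuHyp_std E) hgc hg _ σ)]
  have hn : ‖((z.1, η • z.2) : E × E) - (z'.1, η • z'.2)‖ ≤ ‖z - z'‖ := by
    rw [Prod.norm_def, Prod.norm_def]
    simp only [Prod.mk_sub_mk, Prod.fst_sub, Prod.snd_sub, ← smul_sub, norm_smul, Real.norm_eq_abs]
    refine max_le_max le_rfl ?_
    have := mul_le_mul_of_nonneg_right hη (norm_nonneg (z.2 - z'.2))
    linarith
  have := norm_integral_le_of_norm_le_const (μ := stdGaussian E) (C := K * ‖z - z'‖)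
    (f := fun ξ => g ((z.1, η • z.2) + (0, σ • ξ)) - g ((z'.1, η • z'.2) + (0, σ • ξ)))
    (Filter.Eventually.of_forall fun ξ => by
      have h1 := hg ((z.1, η • z.2) + (0, σ • ξ)) ((z'.1, η • z'.2) + (0, σ • ξ))
      rw [add_sub_add_right_eq_sub] at h1
      exact h1.trans (mul_le_mul_of_nonneg_left hn hK))
  simpa using this

lemma cont_of_lip {K : ℝ} {F : E × E → ℝ} (hF : ∀ z z', |F z - F z'| ≤ K * ‖z - z'‖) :
    Continuous F := by
  refine continuous_iff_continuousAt.2 fun z => ?_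
  rw [ContinuousAt, tendsto_iff_norm_sub_tendsto_zero]
  have h1 : Filter.Tendsto (fun z' => K * ‖z' - z‖) (nhds z) (nhds 0) := by
    have : Continuous (fun z' => K * ‖z' - z‖) := by fun_prop
    have := this.tendsto z
    simpa using this
  exact squeeze_zero (fun _ => norm_nonneg _) (fun z' => hF z' z) h1

lemma lip_growth {K : ℝ} (hK : 0 ≤ K) {F : E × E → ℝ} (hF : ∀ z z', |F z - F z'| ≤ K * ‖z - z'‖) (z : E × E) :
    |F z| ≤ (|F 0| + K) * (1 + ‖z‖) ^ 3 := by
  have h1 := hF z 0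
  rw [sub_zero] at h1
  have h2 := abs_add_le (F z - F 0) (F 0)
  rw [sub_add_cancel] at h2
  have h0 := norm_nonneg z
  have h3 : 1 + ‖z‖ ≤ (1 + ‖z‖) ^ 3 := le_self_pow₀ (by linarith) (by norm_num)
  have h4 := mul_le_mul_of_nonneg_left h3 (by positivity : 0 ≤ |F 0| + K)
  nlinarith [abs_nonneg (F 0)]

lemma integrable_lip_rho (hm : 0 < m) (hG : GradHyp m C₁ G DG)
    (hU : ∀ x, HasFDerivAt U (innerSL ℝ (G x)) x) {F : E × E → ℝ} {K : ℝ} (hK : 0 ≤ K)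
    (hF : ∀ z z', |F z - F z'| ≤ K * ‖z - z'‖) : Integrable (fun z : E × E => F z * rho U z) :=
  integrable_growth hm hG hU (cont_of_lip hF) (lip_growth hK hF)

lemma std_lip_int {η σ K : ℝ} (hησ : η ^ 2 + σ ^ 2 = 1) {g : E × E → ℝ}
    (hK : 0 ≤ K) (hg : ∀ z z', |g z - g z'| ≤ K * ‖z - z'‖) (x : E) :
    ∫ v, Og η σ g (x, v) ∂(stdGaussian E) = ∫ v, g (x, v) ∂(stdGaussian E) := by
  have hgc := cont_of_lip hg
  have hc1 : Continuous (fun p : E × E => η • p.1 + σ • p.2) := by fun_prop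
  have hc2 : Continuous (fun v : E => g (x, v)) := by fun_prop
  rw [← std_rot E hησ, integral_map hc1.aemeasurable hc2.aestronglyMeasurable, std_rot E hησ]
  have hI : Integrable (fun v : E => g (x, v)) (stdGaussian E) := by
    have := integrable_lip (nuHyp_std E) hgc hg (x, 0) 1
    simpa using this
  rw [integral_prod]
  · unfold Og; simp
  · have h2 : Integrable (fun v : E => g (x, v)) (((stdGaussian E).prod (stdGaussian E)).map
        (fun p => η • p.1 + σ • p.2)) := by rw [std_rot E hησ]; exact hI
    exact h2.comp_aemeasurable hc1.aemeasurable

lemma Og_inv {η σ K : ℝ} (hm : 0 < m) (hG : GradHyp m C₁ G DG)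
    (hU : ∀ x, HasFDerivAt U (innerSL ℝ (G x)) x) (hη : |η| ≤ 1)
    (hησ : η ^ 2 + σ ^ 2 = 1) {g : E × E → ℝ}
    (hK : 0 ≤ K) (hg : ∀ z z', |g z - g z'| ≤ K * ‖z - z'‖) :
    ∫ z, Og η σ g z * rho U z = ∫ z, g z * rho U z := by
  have hgc := cont_of_lip hg
  have key : ∀ F : E × E → ℝ, (∀ z z', |F z - F z'| ≤ K * ‖z - z'‖) →
      ∫ z, F z * rho U z = ∫ x, (Zc E * ∫ v, F (x, v) ∂(stdGaussian E)) * Real.exp (-U x) := by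
    intro F hF
    have hi := integrable_lip_rho hm hG hU hK hF
    rw [Measure.volume_eq_prod] at hi ⊢
    rw [integral_prod _ hi]
    congr 1; ext x
    rw [← gauss_int, ← integral_mul_const]
    congr 1; ext v
    unfold rho
    rw [neg_add, Real.exp_add, mul_assoc]
  rw [key _ hg, key _ (Og_lip hη hK hgc hg)]
  congr 1; ext x
  rw [std_lip_int hησ hK hg]

lemma Qop_inv (hp : Par γ m C₁ h) (hσ : σ ^ 2 = 2 * γ * h - γ ^ 2 * h ^ 2) (hG : GradHyp m C₁ G DG)
    (hU : ∀ x, HasFDerivAt U (innerSL ℝ (G x)) x) {g : E × E → ℝ} {K : ℝ}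
    (hK : 0 ≤ K) (hg : ∀ z z', |g z - g z'| ≤ K * ‖z - z'‖) :
    |(∫ z, Qop (stdGaussian E) γ h σ G g z * rho U z) - ∫ z, g z * rho U z| ≤
      K * h ^ 2 * (2 * (2 + 2 * C₁) ^ 4 * (2 * C₁ ^ 2 + C₁)) * I3 U := by
  have hη : |1 - γ * h| ≤ 1 := by
    have := mul_pos hp.γ0 hp.h0
    have := hp.h1
    rw [abs_le]; constructor <;> linarith
  have h1 := Og_inv (η := 1 - γ * h) (σ := σ) hp.m0 hG hU hη (by rw [hσ]; ring) hK hg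
  rw [← h1]
  have hl := Og_lip (η := 1 - γ * h) (σ := σ) hη hK (cont_of_lip hg) hg
  exact S0_invariance hp.h0 hp.h3 hp.m0 hp.C0 hG hU hK (cont_of_lip hl) hl

/-- numerical constant -/
noncomputable def cInv (C₁ : ℝ) : ℝ := 2 * (2 + 2 * C₁) ^ 4 * (2 * C₁ ^ 2 + C₁)

lemma I3_nonneg : 0 ≤ I3 U := by
  unfold I3
  refine integral_nonneg fun z => ?_
  have := rho_pos (U := U) z
  positivity

variable {f : E × E → ℝ}

lemma gseq_inv (hp : Par γ m C₁ h) (hσ : σ ^ 2 = 2 * γ * h - γ ^ 2 * h ^ 2) (hG : GradHyp m C₁ G DG)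
    (hU : ∀ x, HasFDerivAt U (innerSL ℝ (G x)) x) (hL : 0 ≤ L) (hM : 0 ≤ M) (hf : Reg (2 / γ) L M f)
    (hLM : 2 * (2 / γ * C₁ * L) ≤ m / (32 * γ) * M) (K : ℕ) :
    |(∫ z, gseq (stdGaussian E) γ h σ G f K z * rho U z) - ∫ z, f z * rho U z| ≤
      32 * γ / m * (L * (2 + 2 / γ)) * cInv C₁ * I3 U * h := by
  have hγ := hp.γ0
  have hm := hp.m0
  have hc : 0 < 2 / γ := by positivity
  have hr0 := hp.rate_nonneg
  have hC := hp.C0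
  have hI := I3_nonneg (U := U)
  have hci : 0 ≤ cInv C₁ := by unfold cInv; positivity
  have key : |(∫ z, gseq (stdGaussian E) γ h σ G f K z * rho U z) - ∫ z, f z * rho U z| ≤
      (1 - rate γ m h ^ K) * (32 * γ / m * (L * (2 + 2 / γ)) * cInv C₁ * I3 U * h) := by
    induction K with
    | zero => simp [gseq]
    | succ j ih =>
      have hreg := gseq_reg (σ := σ) (nuHyp_std E) hp hG hL hM hf hLM j
      have hl := hreg.lipschitz hc (by positivity)
      have h1 := Qop_inv hp hσ hG hU (by positivity) hl
      have h2 := abs_sub_le (∫ z, gseq (stdGaussian E) γ h σ G f (j + 1) z * rho U z)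
        (∫ z, gseq (stdGaussian E) γ h σ G f j z * rho U z) (∫ z, f z * rho U z)
      refine h2.trans ((add_le_add h1 ih).trans (le_of_eq ?_))
      rw [pow_succ]
      change rate γ m h ^ j * L * (2 + 2 / γ) * h ^ 2 * cInv C₁ * I3 U + _ = _
      have e : h ^ 2 = (1 - rate γ m h) * (32 * γ / m) * h := by unfold rate; field_simp; ring
      rw [e]; ring
  refine key.trans ?_
  have h0 : 0 ≤ 32 * γ / m * (L * (2 + 2 / γ)) * cInv C₁ * I3 U * h := by have := hp.h0; positivity
  have : 1 - rate γ m h ^ K ≤ 1 := by linarith [pow_nonneg hr0 K]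
  nlinarith

lemma integrable_rho (hm : 0 < m) (hG : GradHyp m C₁ G DG)
    (hU : ∀ x, HasFDerivAt U (innerSL ℝ (G x)) x) : Integrable (rho U) := by
  have := integrable_lip_rho (F := fun _ => (1:ℝ)) (K := 0) hm hG hU le_rfl (by simp)
  simpa using this

lemma Zrho_pos (hm : 0 < m) (hG : GradHyp m C₁ G DG)
    (hU : ∀ x, HasFDerivAt U (innerSL ℝ (G x)) x) : 0 < ∫ z, rho U z := 
  integral_exp_pos (integrable_rho hm hG hU)

lemma lip_avg (hm : 0 < m) (hG : GradHyp m C₁ G DG)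
    (hU : ∀ x, HasFDerivAt U (innerSL ℝ (G x)) x) {g : E × E → ℝ} {K : ℝ}
    (hK : 0 ≤ K) (hg : ∀ z z', |g z - g z'| ≤ K * ‖z - z'‖) (z : E × E) :
    |g z * (∫ z, rho U z) - ∫ z, g z * rho U z| ≤ K * (1 + ‖z‖) * I3 U := by
  have hi := integrable_lip_rho hm hG hU hK hg
  have hr := integrable_rho hm hG hU
  rw [← integral_const_mul, ← integral_sub (hr.const_mul _) hi]
  have h3 := integrable_rho3 hm hG hU
  have := norm_integral_le_of_norm_le (h3.const_mul (K * (1 + ‖z‖)))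
    (f := fun z' => g z * rho U z' - g z' * rho U z') (Filter.Eventually.of_forall fun z' => by
      have h0 := rho_pos (U := U) z'
      rw [← sub_mul, norm_mul, Real.norm_of_nonneg h0.le, ← mul_assoc]
      refine mul_le_mul_of_nonneg_right ?_ h0.le
      have h1 := hg z z'
      have h2 := norm_sub_le z z'
      have hz := norm_nonneg z
      have hz' := norm_nonneg z'
      rw [Real.norm_eq_abs]
      refine h1.trans ?_
      rw [mul_assoc]
      refine mul_le_mul_of_nonneg_left ?_ hK
      have h4 : 1 + ‖z'‖ ≤ (1 + ‖z'‖) ^ 3 := le_self_pow₀ (by linarith) (by norm_num)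
      nlinarith)
  rw [integral_const_mul] at this
  exact this

/-- remainder estimate -/
lemma gseq_remainder (hp : Par γ m C₁ h) (hσ : σ ^ 2 = 2 * γ * h - γ ^ 2 * h ^ 2) (hG : GradHyp m C₁ G DG)
    (hU : ∀ x, HasFDerivAt U (innerSL ℝ (G x)) x) (hL : 0 ≤ L) (hM : 0 ≤ M) (hf : Reg (2 / γ) L M f)
    (hLM : 2 * (2 / γ * C₁ * L) ≤ m / (32 * γ) * M) :
    ∃ K : ℕ, ∀ z, |gseq (stdGaussian E) γ h σ G f K z - (∫ z, f z * rho U z) / ∫ z, rho U z| ≤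
      (L * (2 + 2 / γ) * (1 + 32 * γ / m * cInv C₁) * I3 U / ∫ z, rho U z) * h * (1 + ‖z‖) := by
  obtain ⟨K, hK⟩ := exists_pow_lt_of_lt_one hp.h0 hp.rate_le_one
  refine ⟨K, fun z => ?_⟩
  have hγ := hp.γ0
  have hm := hp.m0
  have hc : 0 < 2 / γ := by positivity
  have hr0 := hp.rate_nonneg
  have hC := hp.C0
  have hI := I3_nonneg (U := U)
  have hci : 0 ≤ cInv C₁ := by unfold cInv; positivity
  have hZ := Zrho_pos hm hG hU
  have h1 := gseq_inv hp hσ hG hU hL hM hf hLM K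
  have hreg := gseq_reg (σ := σ) (nuHyp_std E) hp hG hL hM hf hLM K
  have hl := hreg.lipschitz hc (by positivity)
  have h2 := lip_avg hm hG hU (by positivity) hl z
  set Z := ∫ z, rho U z
  set g := gseq (stdGaussian E) γ h σ G f K
  have e : g z - (∫ z, f z * rho U z) / Z = (g z * Z - ∫ z, f z * rho U z) / Z := by field_simp
  rw [e, abs_div, abs_of_pos hZ]
  have h3 := abs_sub_le (g z * Z) (∫ z, g z * rho U z) (∫ z, f z * rho U z)
  have h4 : rate γ m h ^ K * L * (2 + 2 / γ) * (1 + ‖z‖) * I3 U ≤ h * L * (2 + 2 / γ) * (1 + ‖z‖) * I3 U := by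
    gcongr
  have h5 : 32 * γ / m * (L * (2 + 2 / γ)) * cInv C₁ * I3 U * h * 1 ≤
      32 * γ / m * (L * (2 + 2 / γ)) * cInv C₁ * I3 U * h * (1 + ‖z‖) := by
    have := hp.h0
    gcongr; linarith [norm_nonneg z]
  have h6 : L * (2 + 2 / γ) * (1 + 32 * γ / m * cInv C₁) * I3 U / Z * h * (1 + ‖z‖) =
     (h * L * (2 + 2 / γ) * (1 + ‖z‖) * I3 U + 
      32 * γ / m * (L * (2 + 2 / γ)) * cInv C₁ * I3 U * h * (1 + ‖z‖)) / Z := by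
    ring
  rw [h6]
  gcongr
  linarith

end Inv
end SGEM


open MeasureTheory ProbabilityTheory RealInnerProductSpace
open scoped ENNReal

namespace SGEM

section Chain
variable {E : Type*} [NormedAddCommGroup E] [InnerProductSpace ℝ E]
variable [FiniteDimensional ℝ E] [MeasurableSpace E] [BorelSpace E]
variable {Ω' : Type*} [MeasurableSpace Ω'] {Ω : Type*} {mΩ : MeasurableSpace Ω}
variable {m C₀ C₁ γ h σ : ℝ} {G : E → E} {DG : E → E →L[ℝ] E} {L M : ℝ} {g : E × E → ℝ}
  {ν : Measure E} {μ : Measure Ω'} {b : E → Ω' → E} {P : Measure Ω}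
  {F : ℕ → MeasurableSpace Ω} {Z : ℕ → Ω → E × E} {ζ : ℕ → Ω → E × Ω'}

/-- the Markov chain with its filtration -/
structure ChainHyp (P : Measure Ω) (ν : Measure E) (μ : Measure Ω') (γ h : ℝ) (b : E → Ω' → E)
    (F : ℕ → MeasurableSpace Ω) (Z : ℕ → Ω → E × E) (ζ : ℕ → Ω → E × Ω') : Prop where
  prob : IsProbabilityMeasure P
  le : ∀ n, F n ≤ mΩ
  mono : ∀ n, F n ≤ F (n + 1)
  Z0 : Measurable[F 0] (Z 0)
  noise : ∀ n, Measurable[F (n + 1)] (ζ n)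
  ind : ∀ n, Indep (F n) (MeasurableSpace.comap (ζ n) inferInstance) P
  law : ∀ n, Measure.map (ζ n) P = ν.prod μ
  recur : ∀ n ω, Z (n + 1) ω = step γ h b (Z n ω) (ζ n ω)

lemma ChainHyp.adapted (hc : ChainHyp P ν μ γ h b F Z ζ) (hb : BHyp m C₀ C₁ μ G b) (n : ℕ) :
    Measurable[F n] (Z n) := by
  induction n with
  | zero => exact hc.Z0
  | succ n ih =>
    have e : Z (n + 1) = (fun q : (E × E) × (E × Ω') => step γ h b q.1 q.2) ∘ fun ω => (Z n ω, ζ n ω) :=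
      funext fun ω => hc.recur n ω
    rw [e]
    exact (measurable_step hb).comp ((ih.mono (hc.mono n) le_rfl).prodMk (hc.noise n))

lemma ChainHyp.meas (hc : ChainHyp P ν μ γ h b F Z ζ) (hb : BHyp m C₀ C₁ μ G b) (n : ℕ) :
    Measurable (Z n) := (hc.adapted hb n).mono (hc.le n) le_rfl

lemma ChainHyp.lint {T' : Type*} [MeasurableSpace T'] (hν : NuHyp ν) (hb : BHyp m C₀ C₁ μ G b)
    (hc : ChainHyp P ν μ γ h b F Z ζ) (n : ℕ) {T : Ω → T'} (hT : Measurable[F n] T)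
    {Φ : T' × (E × Ω') → ℝ≥0∞} (hΦ : Measurable Φ) :
    ∫⁻ ω, Φ (T ω, ζ n ω) ∂P = ∫⁻ ω, ∫⁻ p, Φ (T ω, p) ∂(ν.prod μ) ∂P := by
  have := hc.prob
  have := hν.prob
  have := hb.prob
  have hTm : Measurable T := hT.mono (hc.le n) le_rfl
  have hζm : Measurable (ζ n) := (hc.noise n).mono (hc.le (n + 1)) le_rfl
  have hind : IndepFun T (ζ n) P := by
    rw [IndepFun_iff_Indep]
    exact indep_of_indep_of_le_left (hc.ind n) hT.comap_le
  have h1 := hind.map_prod_eq_prod_map_map hTm.aemeasurable hζm.aemeasurable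
  have h2 := lintegral_map (μ := P) hΦ (hTm.prodMk hζm)
  rw [← h2, h1, hc.law n, lintegral_prod _ hΦ.aemeasurable, lintegral_map _ hTm]
  exact hΦ.lintegral_prod_right'

lemma measurable_Nsq (c : ℝ) : Measurable (fun z : E × E => Nsq c z) := by
  unfold Nsq; fun_prop

lemma lyapK_nonneg (hp : Par γ m C₁ h) (hC₀ : 0 < C₀) : 0 ≤ lyapK ν γ m C₀ := by
  have hγ := hp.γ0; have hm := hp.m0
  have h1 : 0 ≤ ∫ ξ, ‖ξ‖ ^ 2 ∂ν := integral_nonneg fun _ => by positivity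
  have h2 : 0 ≤ ∫ ξ, ‖ξ‖ ^ 4 ∂ν := integral_nonneg fun _ => by positivity
  unfold lyapK; positivity

lemma ChainHyp.moment_aux (hν : NuHyp ν) (hp : Par γ m C₁ h) (hC₀ : 0 < C₀) (hb : BHyp m C₀ C₁ μ G b)
    (hc : ChainHyp P ν μ γ h b F Z ζ) (n : ℕ) :
    ∫⁻ ω, ENNReal.ofReal (Nsq (2 / γ) (Z n ω) ^ 2) ∂P ≤
      ∫⁻ ω, ENNReal.ofReal (Nsq (2 / γ) (Z 0 ω) ^ 2) ∂P +
        ENNReal.ofReal (lyapK ν γ m C₀ / (m / (4 * γ) / 2)) := by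
  have := hc.prob
  have hγ := hp.γ0; have hm := hp.m0; have hh := hp.h0
  have hK := lyapK_nonneg (ν := ν) hp hC₀
  have hmN := measurable_Nsq (E := E) (2 / γ)
  set κ := m / (4 * γ) / 2 with hκ
  have hκ0 : 0 < κ := by positivity
  have hκ1 : κ * h ≤ 1 := by
    have h1 : κ ≤ γ / 8 := by
      rw [hκ, div_div, div_le_iff₀ (by positivity)]
      have := hp.hm2
      nlinarith
    have := mul_le_mul_of_nonneg_right h1 hh.le
    have := hp.h1
    linarith
  induction n with
  | zero => exact le_self_add
  | succ n ih =>
    have hZ := hc.adapted hb n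
    have e1 : ∫⁻ ω, ENNReal.ofReal (Nsq (2 / γ) (Z (n + 1) ω) ^ 2) ∂P =
        ∫⁻ ω, ∫⁻ p, ENNReal.ofReal (Nsq (2 / γ) (step γ h b (Z n ω) p) ^ 2) ∂(ν.prod μ) ∂P := by
      have := hc.lint hν hb n hZ (Φ := fun q => ENNReal.ofReal (Nsq (2 / γ) (step γ h b q.1 q.2) ^ 2))
        ((hmN.comp (measurable_step hb)).pow_const 2).ennreal_ofReal
      rw [← this]
      congr 1; ext ω; rw [hc.recur]
    rw [e1]
    calc _ ≤ ∫⁻ ω, (ENNReal.ofReal (1 - κ * h) * ENNReal.ofReal (Nsq (2 / γ) (Z n ω) ^ 2) +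
            ENNReal.ofReal (h * lyapK ν γ m C₀)) ∂P := by
          refine lintegral_mono fun ω => (lyap_step hν hp hC₀ hb (Z n ω)).trans (le_of_eq ?_)
          rw [← hκ, ENNReal.ofReal_add, ENNReal.ofReal_mul (by linarith)]
          · exact mul_nonneg (by linarith) (sq_nonneg _)
          · positivity
      _ = ENNReal.ofReal (1 - κ * h) * (∫⁻ ω, ENNReal.ofReal (Nsq (2 / γ) (Z n ω) ^ 2) ∂P) +
            ENNReal.ofReal (h * lyapK ν γ m C₀) := by
          rw [lintegral_add_right _ measurable_const, lintegral_const_mul']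
          · simp
          · exact ENNReal.ofReal_ne_top
      _ ≤ ENNReal.ofReal (1 - κ * h) * (∫⁻ ω, ENNReal.ofReal (Nsq (2 / γ) (Z 0 ω) ^ 2) ∂P +
        ENNReal.ofReal (lyapK ν γ m C₀ / κ)) + ENNReal.ofReal (h * lyapK ν γ m C₀) := by gcongr
      _ = ENNReal.ofReal (1 - κ * h) * (∫⁻ ω, ENNReal.ofReal (Nsq (2 / γ) (Z 0 ω) ^ 2) ∂P) +
          ENNReal.ofReal (lyapK ν γ m C₀ / κ) := by
        rw [mul_add, add_assoc, ← ENNReal.ofReal_mul (by linarith), ← ENNReal.ofReal_add]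
        · congr 2; field_simp; ring
        · exact mul_nonneg (by linarith) (by positivity)
        · positivity
      _ ≤ _ := by
        gcongr
        refine (mul_le_mul_left (ENNReal.ofReal_le_one.2 (by have := mul_pos hκ0 hh; linarith)) _).trans ?_
        rw [one_mul]

/-- moment constant -/
noncomputable def cMom (ν : Measure E) (γ m C₀ : ℝ) : ℝ :=
  8 + 8 * (1 + γ) ^ 4 * ((2 + 2 / γ) ^ 4 + lyapK ν γ m C₀ / (m / (4 * γ) / 2))

lemma ChainHyp.moment (hν : NuHyp ν) (hp : Par γ m C₁ h) (hC₀ : 0 < C₀) (hb : BHyp m C₀ C₁ μ G b)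
    (hc : ChainHyp P ν μ γ h b F Z ζ) (n : ℕ) :
    ∫⁻ ω, ENNReal.ofReal ((1 + ‖Z n ω‖) ^ 4) ∂P ≤
      ENNReal.ofReal (cMom ν γ m C₀) * ∫⁻ ω, ENNReal.ofReal ((‖(Z 0 ω).1‖ + ‖(Z 0 ω).2‖ + 1) ^ 4) ∂P := by
  have := hc.prob
  have hγ := hp.γ0; have hm := hp.m0; have hh := hp.h0
  have hK := lyapK_nonneg (ν := ν) hp hC₀
  have hc0 : 0 < 2 / γ := by positivity
  set M4 := ∫⁻ ω, ENNReal.ofReal ((‖(Z 0 ω).1‖ + ‖(Z 0 ω).2‖ + 1) ^ 4) ∂P with hM4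
  have h1M : 1 ≤ M4 := by
    calc (1 : ℝ≥0∞) = ∫⁻ _, 1 ∂P := by simp
      _ ≤ _ := by
        refine lintegral_mono fun ω => ?_
        rw [← ENNReal.ofReal_one]
        refine ENNReal.ofReal_le_ofReal (one_le_pow₀ ?_)
        have := norm_nonneg (Z 0 ω).1
        have := norm_nonneg (Z 0 ω).2
        linarith
  have hy0 : ∫⁻ ω, ENNReal.ofReal (Nsq (2 / γ) (Z 0 ω) ^ 2) ∂P ≤ ENNReal.ofReal ((2 + 2 / γ) ^ 4) * M4 := by
    rw [hM4, ← lintegral_const_mul' _ _ ENNReal.ofReal_ne_top]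
    refine lintegral_mono fun ω => ?_
    rw [← ENNReal.ofReal_mul (by positivity), ← mul_pow]
    refine ENNReal.ofReal_le_ofReal ?_
    rw [← Nn_sq, ← pow_mul]
    have h1 := Nn_le_norm (2 / γ) hc0 (Z 0 ω)
    have h2 : ‖Z 0 ω‖ ≤ ‖(Z 0 ω).1‖ + ‖(Z 0 ω).2‖ + 1 := by
      rw [Prod.norm_def]
      have := norm_nonneg (Z 0 ω).1
      have := norm_nonneg (Z 0 ω).2
      refine max_le ?_ ?_ <;> linarith
    have h3 := Nn_nonneg (2 / γ) (Z 0 ω)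
    refine pow_le_pow_left₀ h3 (h1.trans ?_) 4
    gcongr
  set B := lyapK ν γ m C₀ / (m / (4 * γ) / 2) with hB
  have hB0 : 0 ≤ B := by positivity
  calc _ ≤ ∫⁻ ω, (ENNReal.ofReal 8 + ENNReal.ofReal (8 * (1 + γ) ^ 4) *
          ENNReal.ofReal (Nsq (2 / γ) (Z n ω) ^ 2)) ∂P := by
        refine lintegral_mono fun ω => ?_
        rw [← ENNReal.ofReal_mul (by positivity), ← ENNReal.ofReal_add (by norm_num) (by positivity)]
        refine ENNReal.ofReal_le_ofReal ?_
        rw [← Nn_sq, ← pow_mul]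
        have h1 := norm_le_Nn (2 / γ) hc0 (Z n ω)
        have e : 1 + 2 / (2 / γ) = 1 + γ := by field_simp
        rw [e] at h1
        have h2 := pow_le_pow_left₀ (norm_nonneg _) h1 4
        rw [mul_pow] at h2
        have h3 : (1 + ‖Z n ω‖) ^ 4 ≤ 8 * (1 + ‖Z n ω‖ ^ 4) := by
          have := add_pow_le (zero_le_one' ℝ) (norm_nonneg (Z n ω)) 4
          norm_num at this
          linarith
        linarith
    _ = ENNReal.ofReal 8 + ENNReal.ofReal (8 * (1 + γ) ^ 4) *
          ∫⁻ ω, ENNReal.ofReal (Nsq (2 / γ) (Z n ω) ^ 2) ∂P := by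
        rw [lintegral_add_left measurable_const, lintegral_const_mul' _ _ ENNReal.ofReal_ne_top]
        simp
    _ ≤ ENNReal.ofReal 8 * M4 + ENNReal.ofReal (8 * (1 + γ) ^ 4) *
          (ENNReal.ofReal ((2 + 2 / γ) ^ 4) * M4 + ENNReal.ofReal B * M4) := by
        gcongr
        · exact le_mul_of_one_le_right' h1M
        · refine (hc.moment_aux hν hp hC₀ hb n).trans ?_
          gcongr
          exact le_mul_of_one_le_right' h1M
    _ = _ := by
        unfold cMom
        rw [← hB, ENNReal.ofReal_add (by norm_num) (by positivity),
          ENNReal.ofReal_mul (q := (2 + 2 / γ) ^ 4 + B) (by positivity),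
          ENNReal.ofReal_add (by positivity) hB0]
        ring

/-- martingale part -/
noncomputable def Mart (ν : Measure E) (μ : Measure Ω') (γ h : ℝ) (b : E → Ω' → E) (g : E × E → ℝ)
    (Z : ℕ → Ω → E × E) (n : ℕ) (ω : Ω) : ℝ :=
  ∑ k ∈ Finset.range n, (g (Z (k + 1) ω) - Pop ν μ γ h b g (Z k ω))

lemma measurable_Pop (hν : NuHyp ν) (hb : BHyp m C₀ C₁ μ G b) (hg : Continuous g) :
    Measurable (Pop ν μ γ h b g) := by
  have := hν.prob
  have := hb.prob
  have h1 : StronglyMeasurable (fun q : (E × E) × (E × Ω') => g (step γ h b q.1 q.2)) :=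
    (hg.measurable.comp (measurable_step hb)).stronglyMeasurable
  exact (h1.integral_prod_right' (ν := ν.prod μ)).measurable

lemma ChainHyp.mart_adapted (hν : NuHyp ν) (hb : BHyp m C₀ C₁ μ G b) (hg : Continuous g)
    (hc : ChainHyp P ν μ γ h b F Z ζ) (n : ℕ) : Measurable[F n] (Mart ν μ γ h b g Z n) := by
  induction n with
  | zero => 
    have : Mart ν μ γ h b g Z 0 = fun _ => 0 := by ext ω; simp [Mart]
    rw [this]; exact measurable_const
  | succ n ih =>
    have : Mart ν μ γ h b g Z (n + 1) = fun ω => Mart ν μ γ h b g Z n ω + 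
        (g (Z (n + 1) ω) - Pop ν μ γ h b g (Z n ω)) := by
      ext ω; simp only [Mart, Finset.sum_range_succ]
    rw [this]
    have h1 := hg.measurable.comp (hc.adapted hb (n + 1))
    have h2 := (measurable_Pop (γ := γ) (h := h) hν hb hg).comp ((hc.adapted hb n).mono (hc.mono n) le_rfl)
    exact (ih.mono (hc.mono n) le_rfl).add (h1.sub h2)

/-- martingale constant -/
noncomputable def cMart (ν : Measure E) (γ C₁ L : ℝ) : ℝ :=
  (L * (2 + 2 / γ)) ^ 2 * (4 * γ * (∫ ξ, ‖ξ‖ ^ 2 ∂ν) + 8 * C₁ ^ 2)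

lemma ChainHyp.mart_bound (hν : NuHyp ν) (hp : Par γ m C₁ h) (hG : GradHyp m C₁ G DG)
    (hb : BHyp m C₀ C₁ μ G b) (hL : 0 ≤ L) (hg : Reg (2 / γ) L M g)
    (hint : ∀ z, Integrable (fun p => g (step γ h b z p)) (ν.prod μ))
    (hc : ChainHyp P ν μ γ h b F Z ζ) {S : ℝ≥0∞}
    (hS : ∀ n, ∫⁻ ω, ENNReal.ofReal ((1 + ‖Z n ω‖) ^ 4) ∂P ≤ S) (n : ℕ) :
    ∫⁻ ω, ENNReal.ofReal (Mart ν μ γ h b g Z n ω ^ 2) ∂P ≤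
      ENNReal.ofReal (n * (cMart ν γ C₁ L * h)) * S := by
  have hγ := hp.γ0; have hm := hp.m0; have hh := hp.h0
  have hgc : Continuous g := hg.diff.continuous
  have h1 : 0 ≤ ∫ ξ, ‖ξ‖ ^ 2 ∂ν := integral_nonneg fun _ => by positivity
  have hcM : 0 ≤ cMart ν γ C₁ L := by unfold cMart; positivity
  induction n with
  | zero => simp [Mart]
  | succ n ih =>
    have hT : Measurable[F n] (fun ω => (Z n ω, Mart ν μ γ h b g Z n ω)) :=
      (hc.adapted hb n).prodMk (hc.mart_adapted hν hb hgc n)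
    have hΦ : Measurable (fun q : ((E × E) × ℝ) × (E × Ω') => ENNReal.ofReal
        ((q.1.2 + (g (step γ h b q.1.1 q.2) - Pop ν μ γ h b g q.1.1)) ^ 2)) := by
      have a1 : Measurable (fun q : ((E × E) × ℝ) × (E × Ω') => g (step γ h b q.1.1 q.2)) :=
        hgc.measurable.comp ((measurable_step hb).comp
          (by fun_prop : Measurable (fun q : ((E × E) × ℝ) × (E × Ω') => (q.1.1, q.2))))
      have a2 : Measurable (fun q : ((E × E) × ℝ) × (E × Ω') => Pop ν μ γ h b g q.1.1) :=
        (measurable_Pop hν hb hgc).comp (by fun_prop)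
      exact (((by fun_prop : Measurable (fun q : ((E × E) × ℝ) × (E × Ω') => q.1.2)).add
        (a1.sub a2)).pow_const 2).ennreal_ofReal
    have e := hc.lint hν hb n hT hΦ
    have e1 : ∫⁻ ω, ENNReal.ofReal (Mart ν μ γ h b g Z (n + 1) ω ^ 2) ∂P =
        ∫⁻ ω, ENNReal.ofReal ((Mart ν μ γ h b g Z n ω +
          (g (step γ h b (Z n ω) (ζ n ω)) - Pop ν μ γ h b g (Z n ω))) ^ 2) ∂P := by
      congr 1; ext ω
      rw [← hc.recur]
      simp only [Mart, Finset.sum_range_succ]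
    rw [e1]
    refine e.le.trans ?_
    calc _ ≤ ∫⁻ ω, (ENNReal.ofReal (Mart ν μ γ h b g Z n ω ^ 2) +
          ENNReal.ofReal (cMart ν γ C₁ L * h) * ENNReal.ofReal ((1 + ‖Z n ω‖) ^ 4)) ∂P := by
          refine lintegral_mono fun ω => (mart_incr hν hp hG hb hL hg hint (Z n ω) _).trans ?_
          rw [← ENNReal.ofReal_mul (by positivity), ← ENNReal.ofReal_add (sq_nonneg _) (by positivity)]
          refine ENNReal.ofReal_le_ofReal ?_
          have : (1 + ‖Z n ω‖) ^ 2 ≤ (1 + ‖Z n ω‖) ^ 4 :=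
            pow_le_pow_right₀ (by linarith [norm_nonneg (Z n ω)]) (by norm_num)
          exact add_le_add le_rfl (mul_le_mul_of_nonneg_left this (mul_nonneg hcM hh.le))
      _ = ∫⁻ ω, ENNReal.ofReal (Mart ν μ γ h b g Z n ω ^ 2) ∂P +
          ENNReal.ofReal (cMart ν γ C₁ L * h) * ∫⁻ ω, ENNReal.ofReal ((1 + ‖Z n ω‖) ^ 4) ∂P := by
          rw [lintegral_add_left, lintegral_const_mul' _ _ ENNReal.ofReal_ne_top]
          exact (((hc.mart_adapted hν hb hgc n).mono (hc.le n) le_rfl).pow_const 2).ennreal_ofReal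
      _ ≤ ENNReal.ofReal (n * (cMart ν γ C₁ L * h)) * S + ENNReal.ofReal (cMart ν γ C₁ L * h) * S := by
          gcongr; exact hS n
      _ = _ := by
          rw [← add_mul, ← ENNReal.ofReal_add (by positivity) (by positivity)]
          congr 2; push_cast; ring

end Chain
end SGEM


open MeasureTheory ProbabilityTheory RealInnerProductSpace
open scoped ENNReal

namespace SGEM

lemma sq_avg_le {N : ℕ} (hN : 1 ≤ N) (r : ℕ → ℝ) :
    ((N : ℝ)⁻¹ * ∑ n ∈ Finset.range N, r n) ^ 2 ≤ (N : ℝ)⁻¹ * ∑ n ∈ Finset.range N, r n ^ 2 := by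
  have h1 := sq_sum_le_card_mul_sum_sq (s := Finset.range N) (f := r)
  rw [Finset.card_range] at h1
  have hN0 : (0 : ℝ) < N := by exact_mod_cast hN
  rw [mul_pow]
  calc _ ≤ ((N : ℝ)⁻¹) ^ 2 * (N * ∑ n ∈ Finset.range N, r n ^ 2) := by gcongr
    _ = _ := by field_simp

lemma three_sq (a b c : ℝ) : (a + b + c) ^ 2 ≤ 3 * (a ^ 2 + b ^ 2 + c ^ 2) := by
  nlinarith [sq_nonneg (a - b), sq_nonneg (a - c), sq_nonneg (b - c)]

section Fin
variable {E : Type*} [NormedAddCommGroup E] [InnerProductSpace ℝ E]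
variable [FiniteDimensional ℝ E] [MeasurableSpace E] [BorelSpace E]
variable {Ω' : Type*} [MeasurableSpace Ω'] {Ω : Type*} {mΩ : MeasurableSpace Ω}
variable {m C₀ C₁ γ h σ : ℝ} {G : E → E} {DG : E → E →L[ℝ] E} {U : E → ℝ} {L M : ℝ} {f : E × E → ℝ}
  {μ : Measure Ω'} {b : E → Ω' → E} {P : Measure Ω}
  {F : ℕ → MeasurableSpace Ω} {Z : ℕ → Ω → E × E} {ζ : ℕ → Ω → E × Ω'}

/-- averages of squares along the chain -/
lemma lint_avg {N : ℕ} (hN : 1 ≤ N) {q : E × E → ℝ} {D : ℝ} (hD : 0 ≤ D)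
    (hZ : ∀ n, Measurable (Z n))
    (hq : ∀ z, q z ^ 2 ≤ D * (1 + ‖z‖) ^ 4) {S : ℝ≥0∞}
    (hS : ∀ n, ∫⁻ ω, ENNReal.ofReal ((1 + ‖Z n ω‖) ^ 4) ∂P ≤ S) :
    ∫⁻ ω, ENNReal.ofReal (((N : ℝ)⁻¹ * ∑ n ∈ Finset.range N, q (Z n ω)) ^ 2) ∂P ≤ ENNReal.ofReal D * S := by
  have hN0 : (0 : ℝ) < N := by exact_mod_cast hN
  calc _ ≤ ∫⁻ ω, ENNReal.ofReal ((N : ℝ)⁻¹ * D) * ∑ n ∈ Finset.range N, ENNReal.ofReal ((1 + ‖Z n ω‖) ^ 4) ∂P := by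
        refine lintegral_mono fun ω => ?_
        rw [← ENNReal.ofReal_sum_of_nonneg (fun n _ => by positivity), ← ENNReal.ofReal_mul (by positivity)]
        refine ENNReal.ofReal_le_ofReal ((sq_avg_le hN _).trans ?_)
        rw [mul_assoc, Finset.mul_sum (a := D)]
        gcongr with n _
        exact hq _
    _ = ENNReal.ofReal ((N : ℝ)⁻¹ * D) * ∑ n ∈ Finset.range N, ∫⁻ ω, ENNReal.ofReal ((1 + ‖Z n ω‖) ^ 4) ∂P := by
        rw [lintegral_const_mul' _ _ ENNReal.ofReal_ne_top, lintegral_finsetSum]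
        intro n _
        exact ((measurable_const.add (hZ n).norm).pow_const 4).ennreal_ofReal
    _ ≤ ENNReal.ofReal ((N : ℝ)⁻¹ * D) * ∑ n ∈ Finset.range N, S := by
        gcongr with n _
        exact hS n
    _ = _ := by
        rw [Finset.sum_const, Finset.card_range, nsmul_eq_mul, ← mul_assoc]
        congr 1
        rw [← ENNReal.ofReal_natCast, ← ENNReal.ofReal_mul (by positivity)]
        congr 1; field_simp

set_option maxHeartbeats 2000000 in
theorem core_bound (hp : Par γ m C₁ h) (hC₀ : 0 < C₀) (hG : GradHyp m C₁ G DG)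
    (hU : ∀ x, HasFDerivAt U (innerSL ℝ (G x)) x)
    (hb : BHyp m C₀ C₁ μ G b) (hL : 0 ≤ L) (hM : 0 ≤ M) (hf : Reg (2 / γ) L M f)
    (hLM : 2 * (2 / γ * C₁ * L) ≤ m / (32 * γ) * M)
    (hc : ChainHyp P (stdGaussian E) μ γ h b F Z ζ) {A D B cM : ℝ}
    (hA : A = 32 * γ / m * L * (2 + 2 / γ))
    (hD : D = (32 * γ / m * L * (2 + 2 / γ) * (C₁ + 2 * γ * C₁) +
        32 * γ / m * M * (2 + 2 / γ) ^ 2 * (γ ^ 2 * (∫ ξ, ‖ξ‖ ^ 2 ∂(stdGaussian E)) + 4 * C₁ ^ 2)) +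
        (L * (2 + 2 / γ) * (1 + 32 * γ / m * cInv C₁) * I3 U / ∫ z, rho U z))
    (hB : B = L * (2 + 2 / γ) * I3 U / ∫ z, rho U z)
    (hcM : cM = cMart (stdGaussian E) γ C₁ (32 * γ / m * L)) (N : ℕ) (hN : 1 ≤ N) :
    ∫⁻ ω, ENNReal.ofReal (((N : ℝ)⁻¹ * ∑ n ∈ Finset.range N, f (Z n ω) - 
      (∫ z, f z * rho U z) / ∫ z, rho U z) ^ 2) ∂P ≤
    ENNReal.ofReal ((12 * A ^ 2 + 3 * cM + 3 * D ^ 2 + B ^ 2 + 1) * cMom (stdGaussian E) γ m C₀ * (h ^ 2 + 1 / (N * h))) *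
      ∫⁻ ω, ENNReal.ofReal ((‖(Z 0 ω).1‖ + ‖(Z 0 ω).2‖ + 1) ^ 4) ∂P := by
  have := hc.prob
  have hγ := hp.γ0; have hm := hp.m0; have hh := hp.h0; have hC := hp.C0
  have hN0 : (0 : ℝ) < N := by exact_mod_cast hN
  have hν := nuHyp_std E
  have hc0 : 0 < 2 / γ := by positivity
  have hS := hc.moment hν hp hC₀ hb
  set M4 := ∫⁻ ω, ENNReal.ofReal ((‖(Z 0 ω).1‖ + ‖(Z 0 ω).2‖ + 1) ^ 4) ∂P with hM4
  set S := ENNReal.ofReal (cMom (stdGaussian E) γ m C₀) * M4 with hSdef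
  have hZm := hc.meas hb
  have hW := Zrho_pos hm hG hU
  have hI3 := I3_nonneg (U := U)
  have hx2 : 0 ≤ ∫ ξ, ‖ξ‖ ^ 2 ∂(stdGaussian E) := integral_nonneg fun _ => by positivity
  have hci : 0 ≤ cInv C₁ := by unfold cInv; positivity
  set πf := (∫ z, f z * rho U z) / ∫ z, rho U z with hπ
  set W := ∫ z, rho U z with hWdef
  have hA0 : 0 ≤ A := by rw [hA]; positivity
  have hD0 : 0 ≤ D := by rw [hD]; positivity
  have hB0 : 0 ≤ B := by rw [hB]; positivity
  have hcM0 : 0 ≤ cM := by rw [hcM]; unfold cMart; positivity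
  have hcm0 : 0 ≤ cMom (stdGaussian E) γ m C₀ := by
    have := lyapK_nonneg (ν := stdGaussian E) hp hC₀
    unfold cMom; positivity
  -- it suffices to bound by a multiple of `S`
  suffices hs : ∃ R : ℝ, R ≤ (12 * A ^ 2 + 3 * cM + 3 * D ^ 2 + B ^ 2 + 1) * (h ^ 2 + 1 / (N * h)) ∧
      ∫⁻ ω, ENNReal.ofReal (((N : ℝ)⁻¹ * ∑ n ∈ Finset.range N, f (Z n ω) - πf) ^ 2) ∂P ≤
        ENNReal.ofReal R * S by
    obtain ⟨R, hR, hs⟩ := hs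
    refine hs.trans ?_
    calc _ ≤ ENNReal.ofReal ((12 * A ^ 2 + 3 * cM + 3 * D ^ 2 + B ^ 2 + 1) * (h ^ 2 + 1 / (N * h))) * S := by
          gcongr
      _ = _ := by
          rw [hSdef, ← mul_assoc, ← ENNReal.ofReal_mul (by positivity)]
          congr 2; ring
  have hsum : ∀ ω, (N : ℝ)⁻¹ * ∑ n ∈ Finset.range N, f (Z n ω) - πf =
      (N : ℝ)⁻¹ * ∑ n ∈ Finset.range N, (f (Z n ω) - πf) := by
    intro ω
    rw [Finset.sum_sub_distrib, Finset.sum_const, Finset.card_range, nsmul_eq_mul, mul_sub]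
    field_simp
  simp only [hsum]
  rcases lt_or_ge (N * h) 1 with hNh | hNh
  · -- trivial bound
    refine ⟨B ^ 2, ?_, ?_⟩
    · have h1 : 1 ≤ 1 / (N * h) := by rw [le_div_iff₀ (by positivity)]; linarith
      have h2 : (1 : ℝ) ≤ h ^ 2 + 1 / (N * h) := by linarith only [sq_nonneg h, h1]
      have h3 : B ^ 2 ≤ 12 * A ^ 2 + 3 * cM + 3 * D ^ 2 + B ^ 2 + 1 := by
        linarith only [sq_nonneg A, sq_nonneg D, hcM0]
      have h4 : 0 ≤ 12 * A ^ 2 + 3 * cM + 3 * D ^ 2 + B ^ 2 + 1 := by positivity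
      exact h3.trans (le_mul_of_one_le_right h4 h2)
    · refine lint_avg (q := fun z => f z - πf) hN (sq_nonneg B) hZm (fun z => ?_) hS
      have hl := hf.lipschitz hc0 hL
      have h1 := lip_avg hm hG hU (by positivity) hl z
      have h2 : |f z - πf| ≤ B * (1 + ‖z‖) := by
        have e : f z - πf = (f z * W - ∫ z, f z * rho U z) / W := by
          rw [hπ]; field_simp
        rw [e, abs_div, abs_of_pos hW, div_le_iff₀ hW]
        refine h1.trans (le_of_eq ?_)
        rw [hB]; field_simp
      have hz := norm_nonneg z
      calc (f z - πf) ^ 2 = |f z - πf| ^ 2 := (sq_abs _).symm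
        _ ≤ (B * (1 + ‖z‖)) ^ 2 := by gcongr
        _ = B ^ 2 * (1 + ‖z‖) ^ 2 := by ring
        _ ≤ _ := by
          gcongr ?_ * ?_
          exact pow_le_pow_right₀ (by linarith) (by norm_num)
  -- main case
  set σ := Real.sqrt (2 * γ * h - γ ^ 2 * h ^ 2) with hσ
  have hσ0 : 0 ≤ σ := Real.sqrt_nonneg _
  have hσ2 : σ ^ 2 = 2 * γ * h - γ ^ 2 * h ^ 2 := by
    rw [hσ, Real.sq_sqrt]
    have h1 := hp.h1
    have e : 2 * γ * h - γ ^ 2 * h ^ 2 = (γ * h) * (2 - γ * h) := by ring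
    rw [e]
    exact mul_nonneg (mul_pos hγ hh).le (by linarith only [h1])
  obtain ⟨K, hK⟩ := gseq_remainder hp hσ2 hG hU hL hM hf hLM
  have hreg := phi_reg (σ := σ) hν hp hG hL hM hf hLM K
  have hpo := phi_poisson (σ := σ) hν hp hG hL hM hf hLM K
  set φ := phi (stdGaussian E) γ h σ G f K with hφ
  have hcmp := compare_PQ hν hp hG hb (by positivity) (by positivity) hreg hσ0 hσ2
  have hlip := hreg.lipschitz hc0 (by positivity)
  have hmart := hc.mart_bound hν hp hG hb (by positivity) hreg (fun z => (hcmp z).1) hS N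
  set r : E × E → ℝ := fun z => (Pop (stdGaussian E) μ γ h b φ z - Qop (stdGaussian E) γ h σ G φ z) / h +
    (gseq (stdGaussian E) γ h σ G f K z - πf) with hr
  have hrb : ∀ z, r z ^ 2 ≤ D ^ 2 * h ^ 2 * (1 + ‖z‖) ^ 4 := by
    intro z
    have hz := norm_nonneg z
    have h1 := (hcmp z).2
    have h2 := hK z
    have h3 : (1 + ‖z‖) ≤ (1 + ‖z‖) ^ 2 := le_self_pow₀ (by linarith) (by norm_num)
    set D2 := L * (2 + 2 / γ) * (1 + 32 * γ / m * cInv C₁) * I3 U / W with hD2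
    have hD20 : 0 ≤ D2 := by positivity
    have h4 : |r z| ≤ D * h * (1 + ‖z‖) ^ 2 := by
      refine (abs_add_le _ _).trans ?_
      rw [abs_div, abs_of_pos hh]
      have h5 := div_le_div_of_nonneg_right h1 hh.le
      have h6 : D2 * h * (1 + ‖z‖) ≤ D2 * h * (1 + ‖z‖) ^ 2 := by gcongr
      refine (add_le_add h5 (h2.trans h6)).trans (le_of_eq ?_)
      rw [hD]; field_simp
    calc r z ^ 2 = |r z| ^ 2 := (sq_abs _).symm
      _ ≤ (D * h * (1 + ‖z‖) ^ 2) ^ 2 := by gcongr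
      _ = _ := by ring
  have hdec : ∀ ω, (N : ℝ)⁻¹ * ∑ n ∈ Finset.range N, (f (Z n ω) - πf) =
      (φ (Z 0 ω) - φ (Z N ω)) / (N * h) + Mart (stdGaussian E) μ γ h b φ Z N ω / (N * h) +
        (N : ℝ)⁻¹ * ∑ n ∈ Finset.range N, r (Z n ω) := by
    intro ω
    have e1 : ∀ n, f (Z n ω) - πf = (φ (Z n ω) - φ (Z (n + 1) ω)) / h +
        (φ (Z (n + 1) ω) - Pop (stdGaussian E) μ γ h b φ (Z n ω)) / h + r (Z n ω) := by
      intro n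
      have := hpo (Z n ω)
      have e : f (Z n ω) = (φ (Z n ω) - Qop (stdGaussian E) γ h σ G φ (Z n ω)) / h +
        gseq (stdGaussian E) γ h σ G f K (Z n ω) := by rw [this]; field_simp; ring
      rw [e, hr]; ring
    simp only [e1]
    rw [Finset.sum_add_distrib, Finset.sum_add_distrib, ← Finset.sum_div, ← Finset.sum_div,
      Finset.sum_range_sub', Mart]
    field_simp
  have hint1 : ∫⁻ ω, ENNReal.ofReal (((φ (Z 0 ω) - φ (Z N ω)) / (N * h)) ^ 2) ∂P ≤
      ENNReal.ofReal (4 * A ^ 2 / (N * h) ^ 2) * S := by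
    calc _ ≤ ∫⁻ ω, ENNReal.ofReal (2 * A ^ 2 / (N * h) ^ 2) *
          (ENNReal.ofReal ((1 + ‖Z 0 ω‖) ^ 4) + ENNReal.ofReal ((1 + ‖Z N ω‖) ^ 4)) ∂P := by
          refine lintegral_mono fun ω => ?_
          rw [← ENNReal.ofReal_add (by positivity) (by positivity), ← ENNReal.ofReal_mul (by positivity)]
          refine ENNReal.ofReal_le_ofReal ?_
          have h1 := hlip (Z 0 ω) (Z N ω)
          rw [← hA] at h1
          have h2 := norm_sub_le (Z 0 ω) (Z N ω)
          set a := ‖Z 0 ω‖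
          set c := ‖Z N ω‖
          have ha : 0 ≤ a := norm_nonneg _
          have hc : 0 ≤ c := norm_nonneg _
          have h3 : (φ (Z 0 ω) - φ (Z N ω)) ^ 2 ≤ (A * (a + c)) ^ 2 := by
            rw [← sq_abs]
            gcongr
            exact h1.trans (by gcongr)
          have h4 : (a + c) ^ 2 ≤ 2 * ((1 + a) ^ 4 + (1 + c) ^ 4) := by
            have e1 : (1 + a) ^ 2 ≤ (1 + a) ^ 4 := pow_le_pow_right₀ (by linarith) (by norm_num)
            have e2 : (1 + c) ^ 2 ≤ (1 + c) ^ 4 := pow_le_pow_right₀ (by linarith) (by norm_num)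
            nlinarith [sq_nonneg (a - c)]
          rw [div_pow, div_mul_eq_mul_div]
          gcongr
          rw [mul_pow] at h3
          have := mul_le_mul_of_nonneg_left h4 (sq_nonneg A)
          linarith
      _ = ENNReal.ofReal (2 * A ^ 2 / (N * h) ^ 2) *
          (∫⁻ ω, ENNReal.ofReal ((1 + ‖Z 0 ω‖) ^ 4) ∂P + ∫⁻ ω, ENNReal.ofReal ((1 + ‖Z N ω‖) ^ 4) ∂P) := by
          rw [lintegral_const_mul' _ _ ENNReal.ofReal_ne_top, lintegral_add_left]
          exact ((measurable_const.add (hZm 0).norm).pow_const 4).ennreal_ofReal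
      _ ≤ ENNReal.ofReal (2 * A ^ 2 / (N * h) ^ 2) * (S + S) := by
          gcongr <;> exact hS _
      _ = _ := by
          rw [mul_add, ← add_mul, ← ENNReal.ofReal_add (by positivity) (by positivity)]
          congr 2; ring
  have hint2 : ∫⁻ ω, ENNReal.ofReal ((Mart (stdGaussian E) μ γ h b φ Z N ω / (N * h)) ^ 2) ∂P ≤
      ENNReal.ofReal (cM / (N * h)) * S := by
    calc _ = ∫⁻ ω, ENNReal.ofReal (1 / (N * h) ^ 2) *
          ENNReal.ofReal (Mart (stdGaussian E) μ γ h b φ Z N ω ^ 2) ∂P := by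
          congr 1; ext ω
          rw [← ENNReal.ofReal_mul (by positivity)]
          congr 1; ring
      _ = ENNReal.ofReal (1 / (N * h) ^ 2) *
          ∫⁻ ω, ENNReal.ofReal (Mart (stdGaussian E) μ γ h b φ Z N ω ^ 2) ∂P :=
          lintegral_const_mul' _ _ ENNReal.ofReal_ne_top
      _ ≤ ENNReal.ofReal (1 / (N * h) ^ 2) * (ENNReal.ofReal (N * (cM * h)) * S) := by
          rw [hcM]; gcongr
      _ = _ := by
          rw [← mul_assoc, ← ENNReal.ofReal_mul (by positivity)]
          congr 2; field_simp
  have hint3 := lint_avg (P := P) hN (by positivity) hZm hrb hS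
  refine ⟨3 * (4 * A ^ 2 / (N * h) ^ 2) + 3 * (cM / (N * h)) + 3 * (D ^ 2 * h ^ 2), ?_, ?_⟩
  · have h1 : 1 / (N * h : ℝ) ^ 2 ≤ 1 / (N * h) := by
      apply one_div_le_one_div_of_le (by positivity)
      nlinarith
    have h2 : 0 ≤ 1 / (N * h) := by positivity
    have e : 3 * (4 * A ^ 2 / (N * h) ^ 2) + 3 * (cM / (N * h)) + 3 * (D ^ 2 * h ^ 2) =
      12 * A ^ 2 * (1 / (N * h) ^ 2) + 3 * cM * (1 / (N * h)) + 3 * D ^ 2 * h ^ 2 := by ring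
    rw [e]
    set t := 1 / (N * h)
    have h3 : 12 * A ^ 2 * (1 / (N * h) ^ 2) ≤ 12 * A ^ 2 * t := by gcongr
    have e2 : (12 * A ^ 2 + 3 * cM + 3 * D ^ 2 + B ^ 2 + 1) * (h ^ 2 + t) =
      12 * A ^ 2 * t + 3 * cM * t + 3 * D ^ 2 * h ^ 2 + (12 * A ^ 2 * h ^ 2 + 3 * cM * h ^ 2 + 3 * D ^ 2 * t +
        (B ^ 2 + 1) * (h ^ 2 + t)) := by ring
    rw [e2]
    have : 0 ≤ (12 * A ^ 2 * h ^ 2 + 3 * cM * h ^ 2 + 3 * D ^ 2 * t + (B ^ 2 + 1) * (h ^ 2 + t)) := by positivity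
    linarith
  · have hφm : Measurable φ := hreg.diff.continuous.measurable
    have hMm : Measurable (Mart (stdGaussian E) μ γ h b φ Z N) :=
      (hc.mart_adapted hν hb hreg.diff.continuous N).mono (hc.le N) le_rfl
    have hm1 : Measurable (fun ω => ENNReal.ofReal (((φ (Z 0 ω) - φ (Z N ω)) / (N * h)) ^ 2)) :=
      ((((hφm.comp (hZm 0)).sub (hφm.comp (hZm N))).div_const _).pow_const 2).ennreal_ofReal
    have hm2 : Measurable (fun ω => ENNReal.ofReal ((Mart (stdGaussian E) μ γ h b φ Z N ω / (N * h)) ^ 2)) :=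
      ((hMm.div_const _).pow_const 2).ennreal_ofReal
    have hm12 : Measurable (fun ω => ENNReal.ofReal (((φ (Z 0 ω) - φ (Z N ω)) / (N * h)) ^ 2) +
        ENNReal.ofReal ((Mart (stdGaussian E) μ γ h b φ Z N ω / (N * h)) ^ 2)) := hm1.add hm2
    calc _ ≤ ∫⁻ ω, ENNReal.ofReal 3 * (ENNReal.ofReal (((φ (Z 0 ω) - φ (Z N ω)) / (N * h)) ^ 2) +
          ENNReal.ofReal ((Mart (stdGaussian E) μ γ h b φ Z N ω / (N * h)) ^ 2) +
          ENNReal.ofReal (((N : ℝ)⁻¹ * ∑ n ∈ Finset.range N, r (Z n ω)) ^ 2)) ∂P := by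
          refine lintegral_mono fun ω => ?_
          rw [← ENNReal.ofReal_add (sq_nonneg _) (sq_nonneg _),
            ← ENNReal.ofReal_add (add_nonneg (sq_nonneg _) (sq_nonneg _)) (sq_nonneg _),
            ← ENNReal.ofReal_mul (by norm_num), hdec]
          exact ENNReal.ofReal_le_ofReal (three_sq _ _ _)
      _ = ENNReal.ofReal 3 * (∫⁻ ω, ENNReal.ofReal (((φ (Z 0 ω) - φ (Z N ω)) / (N * h)) ^ 2) ∂P +
          ∫⁻ ω, ENNReal.ofReal ((Mart (stdGaussian E) μ γ h b φ Z N ω / (N * h)) ^ 2) ∂P +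
          ∫⁻ ω, ENNReal.ofReal (((N : ℝ)⁻¹ * ∑ n ∈ Finset.range N, r (Z n ω)) ^ 2) ∂P) := by
          rw [lintegral_const_mul' _ _ ENNReal.ofReal_ne_top, lintegral_add_left hm12,
            lintegral_add_left hm1]
      _ ≤ ENNReal.ofReal 3 * (ENNReal.ofReal (4 * A ^ 2 / (N * h) ^ 2) * S + ENNReal.ofReal (cM / (N * h)) * S +
          ENNReal.ofReal (D ^ 2 * h ^ 2) * S) := by gcongr
      _ = _ := by
          rw [← add_mul, ← add_mul, ← ENNReal.ofReal_add (by positivity) (by positivity),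
            ← ENNReal.ofReal_add (by positivity) (by positivity), ← mul_assoc,
            ← ENNReal.ofReal_mul (by norm_num)]
          congr 2; ring

end Fin
end SGEM


open MeasureTheory ProbabilityTheory RealInnerProductSpace
open scoped ENNReal

namespace SGEM

section Tr
variable {E : Type*} [NormedAddCommGroup E] [InnerProductSpace ℝ E] [FiniteDimensional ℝ E]

/-- Riesz isometry, as a linear isometry over the reals -/
noncomputable def riesz (E : Type*) [NormedAddCommGroup E] [InnerProductSpace ℝ E]
    [FiniteDimensional ℝ E] : (E →L[ℝ] ℝ) →ₗᵢ[ℝ] E where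
  toFun l := (InnerProductSpace.toDual ℝ E).symm l
  map_add' a b := map_add _ a b
  map_smul' c a := by
    rw [map_smulₛₗ]; simp
  norm_map' l := by
    exact (InnerProductSpace.toDual ℝ E).symm.norm_map l

lemma riesz_inner (l : E →L[ℝ] ℝ) (y : E) : ⟪riesz E l, y⟫ = l y :=
  InnerProductSpace.toDual_symm_apply

lemma gradient_eq_riesz (U : E → ℝ) (x : E) : gradient U x = riesz E (fderiv ℝ U x) := rfl

lemma norm_fderiv2 {V : Type*} [NormedAddCommGroup V] [NormedSpace ℝ V] (U : V → ℝ) (x : V) :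
    ‖fderiv ℝ (fderiv ℝ U) x‖ = ‖iteratedFDeriv ℝ 2 U x‖ := by
  rw [← norm_iteratedFDeriv_one, norm_iteratedFDeriv_fderiv]

lemma lip_of_iterated {V W : Type*} [NormedAddCommGroup V] [NormedSpace ℝ V] [NormedAddCommGroup W]
    [NormedSpace ℝ W] {g : V → W} (hg : Differentiable ℝ g) {C : ℝ}
    (hC : ∀ x, ‖iteratedFDeriv ℝ 1 g x‖ ≤ C) (x y : V) : ‖g x - g y‖ ≤ C * ‖x - y‖ :=
  Convex.norm_image_sub_le_of_norm_fderiv_le (s := Set.univ)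
    (fun z _ => hg z) (fun z _ => by rw [← norm_iteratedFDeriv_one]; exact hC z) convex_univ
    (Set.mem_univ y) (Set.mem_univ x)

lemma diff2 {V : Type*} [NormedAddCommGroup V] [NormedSpace ℝ V] {U : V → ℝ} (hU : ContDiff ℝ 3 U) :
    Differentiable ℝ (fderiv ℝ U) := by
  have h1 : ContDiff ℝ 2 (fderiv ℝ U) := hU.fderiv_right (by norm_num)
  exact h1.differentiable (by norm_num)

lemma diff3 {V : Type*} [NormedAddCommGroup V] [NormedSpace ℝ V] {U : V → ℝ} (hU : ContDiff ℝ 3 U) :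
    Differentiable ℝ (fderiv ℝ (fderiv ℝ U)) := by
  have h1 : ContDiff ℝ 2 (fderiv ℝ U) := hU.fderiv_right (by norm_num)
  have h2 : ContDiff ℝ 1 (fderiv ℝ (fderiv ℝ U)) := h1.fderiv_right (by norm_num)
  exact h2.differentiable (by norm_num)

lemma gradHyp_of {U : E → ℝ} {m C₁ : ℝ} (hU : ContDiff ℝ 3 U)
    (hU1 : ∀ x, ‖gradient U x‖ ≤ C₁ * (‖x‖ + 1))
    (hU2 : ∀ x, ‖iteratedFDeriv ℝ 2 U x‖ ≤ C₁)
    (hU3 : ∀ x, ‖iteratedFDeriv ℝ 3 U x‖ ≤ C₁)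
    (hconv : ∀ x y, m * ‖y‖ ^ 2 ≤ iteratedFDeriv ℝ 2 U x ![y, y]) :
    GradHyp m C₁ (gradient U)
      (fun x => (riesz E).toContinuousLinearMap.comp (fderiv ℝ (fderiv ℝ U) x)) where
  der x := by
    have h1 := (diff2 hU x).hasFDerivAt
    exact ((riesz E).toContinuousLinearMap.hasFDerivAt (x := fderiv ℝ U x)).comp x h1
  bd x := by
    refine ContinuousLinearMap.opNorm_le_bound _ ((norm_nonneg _).trans (hU2 x)) fun k => ?_
    rw [ContinuousLinearMap.comp_apply, LinearIsometry.coe_toContinuousLinearMap, LinearIsometry.norm_map]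
    refine ((fderiv ℝ (fderiv ℝ U) x).le_opNorm k).trans ?_
    rw [norm_fderiv2]
    exact mul_le_mul_of_nonneg_right (hU2 x) (norm_nonneg k)
  coer x k := by
    refine (hconv x k).trans (le_of_eq ?_)
    rw [ContinuousLinearMap.comp_apply, LinearIsometry.coe_toContinuousLinearMap, real_inner_comm,
      riesz_inner, iteratedFDeriv_two_apply]
    rfl
  lip x y := by
    have h3 : ∀ z, ‖iteratedFDeriv ℝ 1 (fderiv ℝ (fderiv ℝ U)) z‖ ≤ C₁ := fun z => by
      rw [norm_iteratedFDeriv_fderiv (f := fderiv ℝ U), norm_iteratedFDeriv_fderiv (f := U)]; exact hU3 z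
    have h1 := lip_of_iterated (W := E →L[ℝ] E →L[ℝ] ℝ) (diff3 hU) h3 x y
    have hC : 0 ≤ C₁ := (norm_nonneg _).trans (hU2 x)
    refine ContinuousLinearMap.opNorm_le_bound _ (by positivity) fun k => ?_
    rw [ContinuousLinearMap.sub_apply, ContinuousLinearMap.comp_apply, ContinuousLinearMap.comp_apply,
      ← map_sub, LinearIsometry.coe_toContinuousLinearMap, LinearIsometry.norm_map]
    have h4 := (fderiv ℝ (fderiv ℝ U) x - fderiv ℝ (fderiv ℝ U) y).le_opNorm k
    exact h4.trans (mul_le_mul_of_nonneg_right h1 (norm_nonneg k))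
  growth := hU1

lemma hasFDerivAt_inner_gradient {U : E → ℝ} (hU : ContDiff ℝ 3 U) (x : E) :
    HasFDerivAt U (innerSL ℝ (gradient U x)) x := by
  have h1 := (hU.differentiable (by norm_num) x).hasFDerivAt
  have e : innerSL ℝ (gradient U x) = fderiv ℝ U x := by
    ext y
    rw [innerSL_apply_apply, gradient_eq_riesz, riesz_inner]
  rw [e]; exact h1

lemma reg_of {f : E × E → ℝ} {C₂ γ : ℝ} (hγ : 0 < γ) (hC₂ : 0 < C₂) (hf : ContDiff ℝ 3 f)
    (hf1 : ∀ z, ‖iteratedFDeriv ℝ 1 f z‖ ≤ C₂)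
    (hf2 : ∀ z, ‖iteratedFDeriv ℝ 2 f z‖ ≤ C₂) :
    Reg (2 / γ) (C₂ * (1 + γ)) (C₂ * (1 + γ) ^ 2) f := by
  have hn : ∀ k : E × E, ‖k‖ ≤ (1 + γ) * Nn (2 / γ) k := by
    intro k
    have h1 := norm_le_Nn (2 / γ) (by positivity) k
    have e : 1 + 2 / (2 / γ) = 1 + γ := by field_simp
    rwa [e] at h1
  refine ⟨hf.differentiable (by norm_num), fun z k => ?_, fun z z' k => ?_⟩
  · have h1 := (fderiv ℝ f z).le_opNorm k
    have h2 := hf1 z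
    rw [norm_iteratedFDeriv_one] at h2
    calc _ ≤ C₂ * ((1 + γ) * Nn (2 / γ) k) :=
          h1.trans (mul_le_mul h2 (hn k) (norm_nonneg _) hC₂.le)
      _ = _ := by ring
  · have h1 : ‖fderiv ℝ f z - fderiv ℝ f z'‖ ≤ C₂ * ‖z - z'‖ :=
      Convex.norm_image_sub_le_of_norm_fderiv_le (s := Set.univ)
        (fun z _ => diff2 hf z) (fun z _ => by rw [norm_fderiv2]; exact hf2 z) convex_univ
        (Set.mem_univ z') (Set.mem_univ z)
    have h2 := (fderiv ℝ f z - fderiv ℝ f z').le_opNorm k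
    have h3 : C₂ * ‖z - z'‖ ≤ C₂ * ((1 + γ) * Nn (2 / γ) (z - z')) :=
      mul_le_mul_of_nonneg_left (hn _) hC₂.le
    calc _ ≤ C₂ * ((1 + γ) * Nn (2 / γ) (z - z')) * ((1 + γ) * Nn (2 / γ) k) :=
          h2.trans (mul_le_mul (h1.trans h3) (hn k) (norm_nonneg _) (by
            have := Nn_nonneg (2 / γ) (z - z'); positivity))
      _ = _ := by ring

variable [MeasurableSpace E] [BorelSpace E]
variable {Ω' : Type*} [MeasurableSpace Ω'] {Ω : Type*} {mΩ : MeasurableSpace Ω}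

/-- the family of independent sigma-algebras -/
@[reducible] def sig (X V ξ : ℕ → Ω → E) (w : ℕ → Ω → Ω') (i : Option (ℕ ⊕ ℕ)) : MeasurableSpace Ω :=
  Option.elim i (MeasurableSpace.comap (fun ω => (X 0 ω, V 0 ω)) inferInstance)
            (Sum.elim (fun n => MeasurableSpace.comap (ξ n) inferInstance)
              fun n => MeasurableSpace.comap (w n) inferInstance)

/-- index set of the past -/
def pastSet (n : ℕ) : Set (Option (ℕ ⊕ ℕ)) :=
  {i | i = none ∨ ∃ k < n, i = some (Sum.inl k) ∨ i = some (Sum.inr k)}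

/-- index set of the present noise -/
def nowSet (n : ℕ) : Set (Option (ℕ ⊕ ℕ)) := {i | i = some (Sum.inl n) ∨ i = some (Sum.inr n)}

lemma chain_of {P : Measure Ω} (hP : IsProbabilityMeasure P) {ν : Measure E} {μ : Measure Ω'}
    {γ h : ℝ} {b : E → Ω' → E} {X V ξ : ℕ → Ω → E} {w : ℕ → Ω → Ω'}
    (hX : Measurable (X 0)) (hV : Measurable (V 0)) (hξ : ∀ n, Measurable (ξ n))
    (hw : ∀ n, Measurable (w n)) (hξl : ∀ n, Measure.map (ξ n) P = ν) (hwl : ∀ n, Measure.map (w n) P = μ)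
    (hind : iIndep (sig X V ξ w) P)
    (hXr : ∀ n ω, X (n + 1) ω = X n ω + h • V n ω)
    (hVr : ∀ n ω, V (n + 1) ω = V n ω - h • b (X n ω) (w n ω) - (γ * h) • V n ω
            + Real.sqrt (2 * γ * h) • ξ n ω) :
    ChainHyp P ν μ γ h b (fun n => ⨆ i ∈ pastSet n, sig X V ξ w i) (fun n ω => (X n ω, V n ω))
      (fun n ω => (ξ n ω, w n ω)) := by
  have hle : ∀ i, sig X V ξ w i ≤ mΩ := by
    rintro (_ | (n | n))
    · exact (hX.prodMk hV).comap_le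
    · exact (hξ n).comap_le
    · exact (hw n).comap_le
  have hξS : ∀ n (S : Set (Option (ℕ ⊕ ℕ))), some (Sum.inl n) ∈ S →
      Measurable[⨆ i ∈ S, sig X V ξ w i] (ξ n) := fun n S hS =>
    measurable_iff_comap_le.2 (le_biSup (sig X V ξ w) hS)
  have hwS : ∀ n (S : Set (Option (ℕ ⊕ ℕ))), some (Sum.inr n) ∈ S →
      Measurable[⨆ i ∈ S, sig X V ξ w i] (w n) := fun n S hS =>
    measurable_iff_comap_le.2 (le_biSup (sig X V ξ w) hS)
  refine ⟨hP, fun n => iSup₂_le fun i _ => hle i, fun n => biSup_mono ?_, ?_, fun n => ?_, fun n => ?_,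
    fun n => ?_, fun n ω => ?_⟩
  · rintro i (hi | ⟨k, hk, hi⟩)
    · exact Or.inl hi
    · exact Or.inr ⟨k, hk.trans (Nat.lt_succ_self n), hi⟩
  · exact measurable_iff_comap_le.2 (le_biSup (sig X V ξ w) (i := none) (s := pastSet 0) (Or.inl rfl))
  · exact (hξS n _ (Or.inr ⟨n, Nat.lt_succ_self n, Or.inl rfl⟩)).prodMk
      (hwS n _ (Or.inr ⟨n, Nat.lt_succ_self n, Or.inr rfl⟩))
  · have hdis : Disjoint (pastSet n) (nowSet n) := by
      rw [Set.disjoint_left]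
      rintro i (hi | ⟨k, hk, hi | hi⟩) (hi' | hi') <;> subst hi <;> simp at hi' <;> omega
    refine indep_of_indep_of_le_right (indep_iSup_of_disjoint hle hind hdis) ?_
    exact ((hξS n (nowSet n) (Or.inl rfl)).prodMk (hwS n (nowSet n) (Or.inr rfl))).comap_le
  · have h1 : IndepFun (ξ n) (w n) P := by
      rw [IndepFun_iff_Indep]
      exact hind.indep (i := some (Sum.inl n)) (j := some (Sum.inr n)) (by simp)
    have := h1.map_prod_eq_prod_map_map (hξ n).aemeasurable (hw n).aemeasurable
    rw [this, hξl, hwl]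
  · simp only [step]
    rw [hXr, hVr]

end Tr
end SGEM

theorem statement16 (d : ℕ) (hd : 1 ≤ d) (U : EuclideanSpace ℝ (Fin d) → ℝ)
    (f : EuclideanSpace ℝ (Fin d) × EuclideanSpace ℝ (Fin d) → ℝ)
    (C₀ C₁ m C₂ : ℝ) (hC₀ : 0 < C₀) (hC₁ : 0 < C₁) (hm : 0 < m) (hC₂ : 0 < C₂)
    -- A1
    (hU : ContDiff ℝ 3 U)
    (hU0 : ∀ x, |U x| ≤ C₁ * (‖x‖ + 1) ^ 2)
    (hU1 : ∀ x, ‖gradient U x‖ ≤ C₁ * (‖x‖ + 1))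
    (hU2 : ∀ x, ‖iteratedFDeriv ℝ 2 U x‖ ≤ C₁)
    (hU3 : ∀ x, ‖iteratedFDeriv ℝ 3 U x‖ ≤ C₁)
    -- A2'
    (hconv : ∀ x y, m * ‖y‖ ^ 2 ≤ iteratedFDeriv ℝ 2 U x ![y, y])
    -- A3
    (hf : ContDiff ℝ 3 f)
    (hf1 : ∀ z, ‖iteratedFDeriv ℝ 1 f z‖ ≤ C₂)
    (hf2 : ∀ z, ‖iteratedFDeriv ℝ 2 f z‖ ≤ C₂)
    (hf3 : ∀ z, ‖iteratedFDeriv ℝ 3 f z‖ ≤ C₂)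
    -- A4: the stochastic gradient b on a probability space (Ω', 𝒢, μ)
    (Ω' : Type) (𝒢 : MeasurableSpace Ω') (μ : Measure Ω') (hμ : IsProbabilityMeasure μ)
    (b : EuclideanSpace ℝ (Fin d) → Ω' → EuclideanSpace ℝ (Fin d))
    (hbmeas : Measurable (Function.uncurry b))
    (hbgrowth : ∀ x ω', ‖b x ω'‖ ≤ C₁ * (1 + ‖x‖))
    (hbdiff : ∀ ω', Differentiable ℝ (fun y => b y ω'))
    (hbderiv : ∀ x ω', ‖fderiv ℝ (fun y => b y ω') x‖ ≤ C₁)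
    (hbdrift : ∀ x ω', m * ‖x‖ ^ 2 - C₀ ≤ ⟪x, b x ω'⟫)
    (hbunbiased : ∀ x, (∫ ω', b x ω' ∂μ) = gradient U x)
    -- the ensemble average π(f) of f under the Boltzmann distribution
    (πf : ℝ)
    (hπf : πf = (∫ z : EuclideanSpace ℝ (Fin d) × EuclideanSpace ℝ (Fin d),
          f z * Real.exp (-(‖z.2‖ ^ 2 / 2 + U z.1))) /
        (∫ z : EuclideanSpace ℝ (Fin d) × EuclideanSpace ℝ (Fin d),
          Real.exp (-(‖z.2‖ ^ 2 / 2 + U z.1)))) :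
    ∃ γ₀ > (0 : ℝ), ∀ γ ≥ γ₀, ∃ C > (0 : ℝ), ∃ h₀ > (0 : ℝ), ∀ h : ℝ, 0 < h → h ≤ h₀ →
      ∀ (Ω : Type) (_ : MeasurableSpace Ω) (P : Measure Ω), IsProbabilityMeasure P →
      ∀ (X V ξ : ℕ → Ω → EuclideanSpace ℝ (Fin d)) (w : ℕ → Ω → Ω'),
        Measurable (X 0) → Measurable (V 0) →
        (∀ n, Measurable (ξ n)) → (∀ n, Measurable (w n)) →
        -- each ξ_n is a standard Gaussian random vector in ℝ^d
        (∀ n, Measure.map (fun ω i => ξ n ω i) P =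
          Measure.pi fun _ : Fin d => gaussianReal 0 1) →
        -- each ω_n has law μ
        (∀ n, Measure.map (w n) P = μ) →
        -- (X₀,V₀), ξ₀, ξ₁, …, ω₀, ω₁, … are mutually independent
        iIndep (fun i : Option (ℕ ⊕ ℕ) =>
          Option.elim i (MeasurableSpace.comap (fun ω => (X 0 ω, V 0 ω)) inferInstance)
            (Sum.elim (fun n => MeasurableSpace.comap (ξ n) inferInstance)
              fun n => MeasurableSpace.comap (w n) inferInstance)) P →
        -- stochastic gradient Euler–Maruyama recursion
        (∀ n ω, X (n + 1) ω = X n ω + h • V n ω) →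
        (∀ n ω, V (n + 1) ω = V n ω - h • b (X n ω) (w n ω) - (γ * h) • V n ω
            + Real.sqrt (2 * γ * h) • ξ n ω) →
        -- finite initial fourth moment
        (∫⁻ ω, ENNReal.ofReal ((‖X 0 ω‖ + ‖V 0 ω‖ + 1) ^ 4) ∂P) < ∞ →
        ∀ N : ℕ, 1 ≤ N →
          (∫⁻ ω, ENNReal.ofReal
              ((((N : ℝ))⁻¹ * (∑ n ∈ Finset.range N, f (X n ω, V n ω)) - πf) ^ 2) ∂P) ≤
            ENNReal.ofReal (C * (h ^ 2 + 1 / (N * h))) *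
              ∫⁻ ω, ENNReal.ofReal ((‖X 0 ω‖ + ‖V 0 ω‖ + 1) ^ 4) ∂P := by
  have hG := SGEM.gradHyp_of hU hU1 hU2 hU3 hconv
  have hU' := SGEM.hasFDerivAt_inner_gradient hU
  have hb : SGEM.BHyp m C₀ C₁ μ (gradient U) b := ⟨hμ, hbmeas, hbgrowth, hbdrift, hbunbiased⟩
  -- choice of the damping threshold
  refine ⟨1 + m + 32 * C₁ ^ 2 / m, by positivity, fun γ hγ => ?_⟩
  have hγ1 : 1 ≤ γ := by
    have : 0 ≤ m + 32 * C₁ ^ 2 / m := by positivity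
    linarith
  have hγ0 : 0 < γ := by linarith
  have hγγ : γ ≤ γ ^ 2 := le_self_pow₀ hγ1 (by norm_num)
  have hγm : m ≤ γ ^ 2 := by
    have : 0 ≤ 32 * C₁ ^ 2 / m := by positivity
    linarith
  have hγ2 : 32 * C₁ ^ 2 ≤ m * γ ^ 2 := by
    have h1 : 32 * C₁ ^ 2 / m ≤ γ ^ 2 := by linarith
    rw [div_le_iff₀ hm] at h1
    linarith
  set L := C₂ * (1 + γ) with hLdef
  have hL : 0 ≤ L := by positivity
  set M := C₂ * (1 + γ) ^ 2 + 2 * (2 / γ * C₁ * L) / (m / (32 * γ)) with hMdef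
  have hM : 0 ≤ M := by positivity
  have hLM : 2 * (2 / γ * C₁ * L) ≤ m / (32 * γ) * M := by
    rw [hMdef, mul_add, mul_div_cancel₀ _ (by positivity : m / (32 * γ) ≠ 0)]
    have : 0 ≤ m / (32 * γ) * (C₂ * (1 + γ) ^ 2) := by positivity
    linarith
  have hreg : SGEM.Reg (2 / γ) L M f :=
    (SGEM.reg_of hγ0 hC₂ hf hf1 hf2).weaken le_rfl (by
      rw [hMdef]
      have : 0 ≤ 2 * (2 / γ * C₁ * L) / (m / (32 * γ)) := by positivity
      linarith)
  -- choice of the step size threshold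
  set h₀ := min (1 / (2 * γ)) (min (m * γ / (8 * C₁ ^ 2)) 1) with hh₀
  have hpar : ∀ h, 0 < h → h ≤ h₀ → SGEM.Par γ m C₁ h := by
    intro h h0 h1
    have a1 : h ≤ 1 / (2 * γ) := h1.trans (min_le_left _ _)
    have a2 : h ≤ m * γ / (8 * C₁ ^ 2) := h1.trans ((min_le_right _ _).trans (min_le_left _ _))
    have a3 : h ≤ 1 := h1.trans ((min_le_right _ _).trans (min_le_right _ _))
    rw [le_div_iff₀ (by positivity)] at a1 a2
    exact ⟨hγ0, hm, hC₁, h0, hγ2, by linarith, by linarith, hγm, a3⟩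
  have hh₀pos : 0 < h₀ := by positivity
  have hp₀ := hpar h₀ hh₀pos le_rfl
  have hν2 : 0 ≤ ∫ ξ, ‖ξ‖ ^ 2 ∂(stdGaussian (EuclideanSpace ℝ (Fin d))) :=
    integral_nonneg fun _ => by positivity
  obtain ⟨A, hA⟩ : ∃ A, A = 32 * γ / m * L * (2 + 2 / γ) := ⟨_, rfl⟩
  obtain ⟨D, hD⟩ : ∃ D, D = (32 * γ / m * L * (2 + 2 / γ) * (C₁ + 2 * γ * C₁) +
        32 * γ / m * M * (2 + 2 / γ) ^ 2 *
          (γ ^ 2 * (∫ ξ, ‖ξ‖ ^ 2 ∂(stdGaussian (EuclideanSpace ℝ (Fin d)))) + 4 * C₁ ^ 2)) +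
        (L * (2 + 2 / γ) * (1 + 32 * γ / m * SGEM.cInv C₁) * SGEM.I3 U / ∫ z, SGEM.rho U z) := ⟨_, rfl⟩
  obtain ⟨B, hB⟩ : ∃ B, B = L * (2 + 2 / γ) * SGEM.I3 U / ∫ z, SGEM.rho U z := ⟨_, rfl⟩
  obtain ⟨cM, hcM⟩ : ∃ cM, cM = SGEM.cMart (stdGaussian (EuclideanSpace ℝ (Fin d))) γ C₁ (32 * γ / m * L) :=
    ⟨_, rfl⟩
  have hcM0 : 0 ≤ cM := by rw [hcM]; unfold SGEM.cMart; positivity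
  have hcm0 : 0 < SGEM.cMom (stdGaussian (EuclideanSpace ℝ (Fin d))) γ m C₀ := by
    have := SGEM.lyapK_nonneg (ν := stdGaussian (EuclideanSpace ℝ (Fin d))) hp₀ hC₀
    unfold SGEM.cMom; positivity
  refine ⟨(12 * A ^ 2 + 3 * cM + 3 * D ^ 2 + B ^ 2 + 1) *
    SGEM.cMom (stdGaussian (EuclideanSpace ℝ (Fin d))) γ m C₀, by positivity, h₀, hh₀pos, ?_⟩
  intro h h0 hh Ω mΩ P hP X V ξ w hX hV hξ hw hξl hwl hind hXr hVr _ N hN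
  have hξl' : ∀ n, Measure.map (ξ n) P = stdGaussian (EuclideanSpace ℝ (Fin d)) := by
    intro n
    rw [← map_pi_eq_stdGaussian, ← hξl n, Measure.map_map]
    · rfl
    · fun_prop
    · fun_prop
  have hc := SGEM.chain_of hP hX hV hξ hw hξl' hwl hind hXr hVr
  have hfin := SGEM.core_bound (hpar h h0 hh) hC₀ hG hU' hb hL hM hreg hLM hc hA hD hB hcM N hN
  rw [hπf]
  exact hfin
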